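/- If A is a connected skew shape with N boxes that is not an equitable ribbon, then there exists an equitable ribbon R with N boxes such that s_R − s_A is Schur-positive and supp(A) is strictly contained in supp(R). Consequently, every connected skew shape that is maximal among connected skew shapes of size N in the Schur-positivity order, or in the support-containment order, is an equitable ribbon. -/

import Mathlib

/-- A skew shape `outer / inner`: the boxes of the Young diagram of `outer`
that are not boxes of the Young diagram of `inner`. -/
structure SkewShape where
  outer : YoungDiagram
  inner : YoungDiagram
  inner_le : inner ≤ outer

namespace SkewShape

/-- The set of boxes of a skew shape. -/
def cells (A : SkewShape) : Finset (ℕ × ℕ) := A.outer.cells \ A.inner.cells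

/-- The size of a skew shape is its number of boxes. -/
def size (A : SkewShape) : ℕ := A.cells.card

/-- The length of row `i` of a skew shape. -/
def rowLen (A : SkewShape) (i : ℕ) : ℕ := (A.cells.filter fun c => c.1 = i).card

/-- The length of column `j` of a skew shape. -/
def colLen (A : SkewShape) (j : ℕ) : ℕ := (A.cells.filter fun c => c.2 = j).card

/-- The set of indices of nonempty rows. -/
def rowSet (A : SkewShape) : Finset ℕ := A.cells.image Prod.fst

/-- The set of indices of nonempty columns. -/
def colSet (A : SkewShape) : Finset ℕ := A.cells.image Prod.snd

/-- The number of nonempty rows. -/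
def numRows (A : SkewShape) : ℕ := A.rowSet.card

/-- The number of nonempty columns. -/
def numCols (A : SkewShape) : ℕ := A.colSet.card

/-- `rows A`: the multiset of lengths of the nonempty rows of `A`
(equivalently, that sequence sorted into weakly decreasing order). -/
def rows (A : SkewShape) : Multiset ℕ := A.rowSet.val.map A.rowLen

/-- `cols A`: the multiset of lengths of the nonempty columns of `A`. -/
def cols (A : SkewShape) : Multiset ℕ := A.colSet.val.map A.colLen

/-- A skew shape is disconnected if its boxes can be split into two nonempty
parts such that no box of one part shares a row or a column with a box of the
other part. -/
def Disconnected (A : SkewShape) : Prop :=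
  ∃ B C : Finset (ℕ × ℕ), B.Nonempty ∧ C.Nonempty ∧ B ∪ C = A.cells ∧ B ∩ C = ∅ ∧
    ∀ b ∈ B, ∀ c ∈ C, b.1 ≠ c.1 ∧ b.2 ≠ c.2

/-- A skew shape is connected if it is nonempty and not disconnected. -/
def Connected (A : SkewShape) : Prop := A.cells.Nonempty ∧ ¬ A.Disconnected

/-- A ribbon is a connected skew shape containing no 2×2 block of boxes. -/
def Ribbon (A : SkewShape) : Prop :=
  A.Connected ∧ ∀ i j : ℕ, ¬ ((i, j) ∈ A.cells ∧ (i, j + 1) ∈ A.cells ∧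
    (i + 1, j) ∈ A.cells ∧ (i + 1, j + 1) ∈ A.cells)

/-- The lengths of any two nonempty rows differ by at most one. -/
def RowEquitable (A : SkewShape) : Prop :=
  ∀ i ∈ A.rowSet, ∀ i' ∈ A.rowSet, A.rowLen i ≤ A.rowLen i' + 1

/-- The lengths of any two nonempty columns differ by at most one. -/
def ColEquitable (A : SkewShape) : Prop :=
  ∀ j ∈ A.colSet, ∀ j' ∈ A.colSet, A.colLen j ≤ A.colLen j' + 1

/-- Equitable: both row equitable and column equitable. -/
def Equitable (A : SkewShape) : Prop := A.RowEquitable ∧ A.ColEquitable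

/-- A filling of a skew shape is semistandard if its entries are positive
integers, weakly increasing along rows and strictly increasing down columns. -/
def IsSsyt (A : SkewShape) (T : ℕ × ℕ → ℕ) : Prop :=
  (∀ c ∈ A.cells, 1 ≤ T c) ∧
  (∀ i j j', (i, j) ∈ A.cells → (i, j') ∈ A.cells → j ≤ j' → T (i, j) ≤ T (i, j')) ∧
  (∀ i i' j, (i, j) ∈ A.cells → (i', j) ∈ A.cells → i < i' → T (i, j) < T (i', j))

end SkewShape

/-- `c` comes weakly before `d` in the reverse reading order (right to left
along rows, rows top to bottom). -/
def ReadsBefore (c d : ℕ × ℕ) : Prop := c.1 < d.1 ∨ (c.1 = d.1 ∧ d.2 ≤ c.2)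

instance : DecidableRel ReadsBefore := fun c d => by unfold ReadsBefore; infer_instance

namespace SkewShape

/-- The number of boxes of `A` filled with the entry `k` by the filling `T`. -/
def content (A : SkewShape) (T : ℕ × ℕ → ℕ) (k : ℕ) : ℕ :=
  (A.cells.filter fun c => T c = k).card

/-- A Littlewood--Richardson filling: a semistandard filling such that every
prefix of the reverse reading word contains at least as many `k`'s as
`(k+1)`'s, for every positive `k`. -/
def IsLR (A : SkewShape) (T : ℕ × ℕ → ℕ) : Prop :=
  A.IsSsyt T ∧ ∀ d ∈ A.cells, ∀ k : ℕ,
    (A.cells.filter fun c => T c = k + 2 ∧ ReadsBefore c d).card ≤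
    (A.cells.filter fun c => T c = k + 1 ∧ ReadsBefore c d).card

end SkewShape

/-- The `i`-th largest part (0-indexed) of a multiset of natural numbers,
i.e. the `i`-th entry of the multiset sorted into weakly decreasing order. -/
def part (lam : Multiset ℕ) (i : ℕ) : ℕ := (lam.sort (· ≥ ·)).getD i 0

namespace SkewShape

/-- The support of a skew shape `A`: the set of partitions `lam` (multisets of
positive integers) for which there exists an LR filling of `A` of content `lam`. -/
def supp (A : SkewShape) : Set (Multiset ℕ) :=
  {lam | 0 ∉ lam ∧ ∃ T : ℕ × ℕ → ℕ, A.IsLR T ∧ ∀ i : ℕ, A.content T (i + 1) = part lam i}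

/-- The set of LR fillings of `A` of content `lam` (normalized to vanish
outside the boxes of `A`). -/
def LRset (A : SkewShape) (lam : Multiset ℕ) : Set ((ℕ × ℕ) → ℕ) :=
  {T | A.IsLR T ∧ (∀ c, c ∉ A.cells → T c = 0) ∧ ∀ i : ℕ, A.content T (i + 1) = part lam i}

/-- `s_A − s_B` is Schur-positive: for every partition, the number of LR
fillings of `B` of that content is at most the number for `A`. -/
def SchurPosDiff (A B : SkewShape) : Prop :=
  ∀ lam : Multiset ℕ, (B.LRset lam).ncard ≤ (A.LRset lam).ncard

end SkewShape

/-- The sum of the `k` largest parts of a multiset of natural numbers. -/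
def psum (lam : Multiset ℕ) (k : ℕ) : ℕ := ((lam.sort (· ≥ ·)).take k).sum

/-- Dominance order: `DomLe lam mu` means `lam ⊴ mu`, i.e. for every `k` the
sum of the `k` largest parts of `lam` is at most that of `mu`. -/
def DomLe (lam mu : Multiset ℕ) : Prop := ∀ k : ℕ, psum lam k ≤ psum mu k

/-- The conjugate (transpose) of a partition given as a multiset: its parts
are the numbers `#{x ∈ lam | x ≥ j}` for `j = 1, 2, …`. -/
def conj (lam : Multiset ℕ) : Multiset ℕ :=
  ((Finset.range lam.sum).val.map fun j => Multiset.card (lam.filter fun x => j + 1 ≤ x)).filter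
    fun y => y ≠ 0

namespace RB

/-- increment a function at a point -/
def inc (u : ℕ → ℕ) (t : ℕ) : ℕ → ℕ := fun s => u s + if s = t then 1 else 0

def S (B : ℕ) (u : ℕ → ℕ) : ℕ := ∑ s ∈ Finset.range (B+1), u s

def C (B : ℕ) (u v : ℕ → ℕ) (t : ℕ) : ℕ :=
  ∑ s ∈ Finset.range (B+1), ((if s < t then v s else 0) + (if t < s then u s else 0))

def mm (B : ℕ) (u v : ℕ → ℕ) : ℕ :=
  (Finset.range (B+1)).inf' ⟨0, by simp⟩ (C B u v)

lemma mm_le {B u v t} (h : t ≤ B) : mm B u v ≤ C B u v t :=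
  Finset.inf'_le _ (by simp; omega)

lemma mm_ex (B u v) : ∃ t, t ≤ B ∧ C B u v t = mm B u v := by
  obtain ⟨t, ht, h⟩ := Finset.exists_mem_eq_inf' (s := Finset.range (B+1)) ⟨0, by simp⟩ (C B u v)
  exact ⟨t, by simp at ht; omega, h.symm⟩

lemma le_mm {B u v k} (h : ∀ t, t ≤ B → k ≤ C B u v t) : k ≤ mm B u v := by
  obtain ⟨t, ht, h'⟩ := mm_ex B u v
  rw [← h']; exact h t ht

/-- first argmin -/
def pp (B : ℕ) (u v : ℕ → ℕ) : ℕ := Nat.find (mm_ex B u v)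

/-- last argmin -/
def ll (B : ℕ) (u v : ℕ → ℕ) : ℕ := Nat.findGreatest (fun t => C B u v t = mm B u v) B

lemma pp_le {B u v} : pp B u v ≤ B := (Nat.find_spec (mm_ex B u v)).1
lemma C_pp {B u v} : C B u v (pp B u v) = mm B u v := (Nat.find_spec (mm_ex B u v)).2
lemma lt_of_lt_pp {B u v t} (h : t < pp B u v) : mm B u v < C B u v t := by
  have := Nat.find_min (mm_ex B u v) h
  have hp := @pp_le B u v
  have h2 : t ≤ B := by omega
  have h3 := @mm_le B u v t h2
  rcases Nat.lt_or_ge (mm B u v) (C B u v t) with h | h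
  · exact h
  · exact absurd ⟨h2, le_antisymm h h3⟩ this
lemma pp_le_of {B u v t} (h : t ≤ B) (h' : C B u v t ≤ mm B u v) : pp B u v ≤ t := by
  by_contra hh
  have := @lt_of_lt_pp B u v t (by omega)
  omega
lemma ll_le {B u v} : ll B u v ≤ B := Nat.findGreatest_le _
lemma C_ll {B u v} : C B u v (ll B u v) = mm B u v := by
  obtain ⟨t, ht, h⟩ := mm_ex B u v
  exact Nat.findGreatest_spec (P := fun t => C B u v t = mm B u v) ht h
lemma le_ll_of {B u v t} (h : t ≤ B) (h' : C B u v t ≤ mm B u v) : t ≤ ll B u v :=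
  Nat.le_findGreatest h (le_antisymm h' (mm_le h))
lemma lt_of_ll_lt {B u v t} (h : ll B u v < t) (h2 : t ≤ B) : mm B u v < C B u v t := by
  by_contra hh
  have := @le_ll_of B u v t h2 (by omega)
  omega
lemma pp_le_ll {B u v} : pp B u v ≤ ll B u v := pp_le_of ll_le C_ll.le

lemma S_inc {B u t} (h : t ≤ B) : S B (inc u t) = S B u + 1 := by
  unfold S inc
  rw [Finset.sum_add_distrib]
  congr 1
  rw [Finset.sum_ite_eq']
  simp; omega

lemma C_inc_left {B u v t s} (h : t ≤ B) :
    C B (inc u t) v s = C B u v s + if s < t then 1 else 0 := by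
  unfold C inc
  have : ∀ x, ((if x < s then v x else 0) + (if s < x then u x + (if x = t then 1 else 0) else 0))
     = ((if x < s then v x else 0) + (if s < x then u x else 0))
        + (if x = t then (if s < t then 1 else 0) else 0) := by
    intro x; split_ifs <;> omega
  rw [Finset.sum_congr rfl (fun x _ => this x), Finset.sum_add_distrib, Finset.sum_ite_eq']
  simp; omega

lemma C_inc_right {B u v t s} (h : t ≤ B) :
    C B u (inc v t) s = C B u v s + if t < s then 1 else 0 := by
  unfold C inc
  have : ∀ x, ((if x < s then v x + (if x = t then 1 else 0) else 0) + (if s < x then u x else 0))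
     = ((if x < s then v x else 0) + (if s < x then u x else 0))
        + (if x = t then (if t < s then 1 else 0) else 0) := by
    intro x; split_ifs <;> omega
  rw [Finset.sum_congr rfl (fun x _ => this x), Finset.sum_add_distrib, Finset.sum_ite_eq']
  simp; omega

lemma mm_le_left {B u v} : mm B u v ≤ S B u := by
  have := @mm_le B u v 0 (by omega)
  refine this.trans ?_
  unfold C S
  apply Finset.sum_le_sum; intro s _; split_ifs <;> omega

lemma mm_le_right {B u v} : mm B u v ≤ S B v := by
  have := @mm_le B u v B le_rfl
  refine this.trans ?_
  unfold C S
  apply Finset.sum_le_sum; intro s hs; simp at hs; split_ifs <;> omega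

/-- raising the top row -/
lemma mm_inc_left {B u v t} (h : t ≤ B) :
    mm B (inc u t) v = mm B u v + if ll B u v < t then 1 else 0 := by
  split_ifs with h1
  · apply le_antisymm
    · have := @mm_le B (inc u t) v _ (@ll_le B u v)
      rw [C_inc_left h, C_ll, if_pos h1] at this; exact this
    · apply le_mm; intro s hs
      rw [C_inc_left h]
      split_ifs with h2
      · have := @mm_le B u v s hs; omega
      · have := @lt_of_ll_lt B u v s (by omega) hs; omega
  · apply le_antisymm
    · have := @mm_le B (inc u t) v _ (@ll_le B u v)
      rw [C_inc_left h, C_ll, if_neg h1] at this; exact this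
    · apply le_mm; intro s hs
      rw [C_inc_left h]; have := @mm_le B u v s hs; omega

lemma mm_inc_right {B u v t} (h : t ≤ B) :
    mm B u (inc v t) = mm B u v + if t < pp B u v then 1 else 0 := by
  split_ifs with h1
  · apply le_antisymm
    · have := @mm_le B u (inc v t) _ (@pp_le B u v)
      rw [C_inc_right h, C_pp, if_pos h1] at this; exact this
    · apply le_mm; intro s hs
      rw [C_inc_right h]
      split_ifs with h2
      · have := @mm_le B u v s hs; omega
      · have := @lt_of_lt_pp B u v s (by omega); omega
  · apply le_antisymm
    · have := @mm_le B u (inc v t) _ (@pp_le B u v)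
      rw [C_inc_right h, C_pp, if_neg h1] at this; exact this
    · apply le_mm; intro s hs
      rw [C_inc_right h]; have := @mm_le B u v s hs; omega

/-- lowering the bottom row: `w = inc w' t`. -/
lemma mm_inc_right' {B u v t} (h : t ≤ B) :
    mm B u (inc v t) = mm B u v + if t < ll B u (inc v t) then 1 else 0 := by
  rw [mm_inc_right h]
  congr 1
  have e : ∀ s, C B u (inc v t) s = C B u v s + if t < s then 1 else 0 := fun s => C_inc_right h
  have hm := @mm_inc_right B u v t h
  by_cases h1 : t < pp B u v
  · rw [if_pos h1] at hm
    rw [if_pos h1, if_pos]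
    have : pp B u v ≤ ll B u (inc v t) := by
      apply le_ll_of pp_le; rw [e, C_pp, if_pos h1, hm]
    omega
  · rw [if_neg h1] at hm
    rw [if_neg h1, if_neg]
    intro h2
    have h3 := @C_ll B u (inc v t)
    rw [e, if_pos h2, hm] at h3
    have := @mm_le B u v _ (@ll_le B u (inc v t))
    omega

/-- The two-row lowering operator. -/
def FR (B : ℕ) (u v u' v' : ℕ → ℕ) : Prop :=
  ∃ t, t ≤ B ∧ t = pp B u v ∧ u = inc u' t ∧ v' = inc v t

lemma inc_inj {u v : ℕ → ℕ} {t} (h : inc u t = inc v t) : u = v := by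
  funext s; have := congrFun h s; unfold inc at this; omega

lemma FR_spec {B u v u' v'} (h : FR B u v u' v') :
    mm B u' v' = mm B u v ∧ ll B u' v' = pp B u v := by
  obtain ⟨t, ht, htp, rfl, rfl⟩ := h
  have e1 : ∀ s, C B (inc u' t) v s = C B u' v s + if s < t then 1 else 0 := fun s => C_inc_left ht
  have e2 : ∀ s, C B u' (inc v t) s = C B u' v s + if t < s then 1 else 0 := fun s => C_inc_right ht
  have h0 : C B u' v t = mm B (inc u' t) v := by
    have := @C_pp B (inc u' t) v
    rw [← htp, e1] at this; simpa using this
  have hm : mm B u' (inc v t) = mm B (inc u' t) v := by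
    apply le_antisymm
    · have := @mm_le B u' (inc v t) t ht
      rw [e2] at this; simp at this; omega
    · apply le_mm; intro s hs
      rw [e2]
      rcases lt_trichotomy s t with h | h | h
      · have := @lt_of_lt_pp B (inc u' t) v s (by omega)
        rw [e1, if_pos h] at this; omega
      · subst h; omega
      · have := @mm_le B (inc u' t) v s hs
        rw [e1] at this; split_ifs at * <;> omega
  refine ⟨hm, ?_⟩
  rw [← htp]
  apply le_antisymm
  · by_contra hh
    push Not at hh
    have h3 := @C_ll B u' (inc v t)
    rw [e2, if_pos hh, hm] at h3
    have := @mm_le B (inc u' t) v _ (@ll_le B u' (inc v t))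
    rw [e1] at this; split_ifs at * <;> omega
  · apply le_ll_of ht
    rw [e2, hm]; simp; omega

lemma FR_inj {B u v u' v' u2 v2} (h : FR B u v u' v') (h2 : FR B u2 v2 u' v') : u = u2 ∧ v = v2 := by
  have a := FR_spec h
  have b := FR_spec h2
  obtain ⟨t, ht, htp, hu, hv⟩ := h
  obtain ⟨t2, ht2, htp2, hu2, hv2⟩ := h2
  have : t = t2 := by rw [htp, htp2, ← a.2, ← b.2]
  subst this
  exact ⟨hu.trans hu2.symm, inc_inj (hv.symm.trans hv2)⟩

lemma C_succ {B u v t} (h : t + 1 ≤ B) : C B u v (t+1) + u (t+1) = C B u v t + v t := by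
  unfold C
  have e1 : u (t+1) = ∑ s ∈ Finset.range (B+1), if s = t+1 then u (t+1) else 0 := by
    rw [Finset.sum_ite_eq']; simp; omega
  have e2 : v t = ∑ s ∈ Finset.range (B+1), if s = t then v t else 0 := by
    rw [Finset.sum_ite_eq']; simp; omega
  rw [e1, e2, ← Finset.sum_add_distrib, ← Finset.sum_add_distrib]
  apply Finset.sum_congr rfl
  intro s _
  rcases lt_trichotomy s t with h | h | h
  · simp [h, show s < t+1 by omega, show ¬ t < s by omega, show ¬ t+1 < s by omega, show s ≠ t+1 by omega, h.ne]
  · subst h; simp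
  · by_cases h2 : s = t+1
    · subst h2; simp
    · simp [show ¬ s < t by omega, show ¬ s < t+1 by omega, show t < s by omega, show t+1 < s by omega, h2, show s ≠ t by omega]

lemma C_zero {B u v} : C B u v 0 + u 0 = S B u := by
  unfold C S
  have e1 : u 0 = ∑ s ∈ Finset.range (B+1), if s = 0 then u 0 else 0 := by
    rw [Finset.sum_ite_eq']; simp
  conv_lhs => rw [e1]
  rw [← Finset.sum_add_distrib]
  apply Finset.sum_congr rfl
  intro s _
  rcases Nat.eq_zero_or_pos s with h | h
  · subst h; simp
  · simp [h, h.ne']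

/-- At the first argmin the top row is larger than the preceding bottom entry. -/
lemma pp_gt {B u v t} (h : pp B u v = t + 1) : v t < u (t+1) := by
  have h1 := @C_pp B u v
  have h2 := @lt_of_lt_pp B u v t (by omega)
  have h3 := @pp_le B u v
  have := @C_succ B u v t (by omega)
  rw [h] at h1; omega

lemma FR_ex {B u v} (h : mm B u v < S B u) : ∃ u' v', FR B u v u' v' := by
  have hpos : 0 < u (pp B u v) := by
    rcases hp : pp B u v with _ | t
    · have h1 := @C_pp B u v
      have := @C_zero B u v
      rw [hp] at h1; omega
    · have := pp_gt hp; omega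
  refine ⟨fun s => u s - if s = pp B u v then 1 else 0, inc v (pp B u v), _, pp_le, rfl, ?_, rfl⟩
  funext s
  show u s = (u s - if s = pp B u v then 1 else 0) + if s = pp B u v then 1 else 0
  by_cases h : s = pp B u v
  · rw [if_pos h, h]; omega
  · rw [if_neg h]; omega

lemma ll_gt {B u v t} (h : ll B u v = t) (hB : t + 1 ≤ B) : u (t+1) < v t := by
  have h1 := @C_ll B u v
  have h2 := @lt_of_ll_lt B u v (t+1) (by omega) hB
  have := @C_succ B u v t (by omega)
  rw [h] at h1; omega

lemma EQ1 {B u v w} (h : ll B v w < pp B u v) : S B v ≤ mm B u v + mm B v w := by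
  rw [← C_pp, ← C_ll]
  unfold C S
  rw [← Finset.sum_add_distrib]
  apply Finset.sum_le_sum; intro s _; split_ifs <;> omega

lemma EQ2 {B u v w} (h : ll B v w < pp B u v) (he : mm B u v + mm B v w ≤ S B v) :
    (∀ s ≤ B, pp B u v < s → u s = 0) ∧ (∀ s ≤ B, s < ll B v w → w s = 0) ∧
    (∀ s ≤ B, ll B v w < s → s < pp B u v → v s = 0) := by
  have key : ∀ s ∈ Finset.range (B+1), v s =
     (((if s < pp B u v then v s else 0) + (if pp B u v < s then u s else 0)) +
     ((if s < ll B v w then w s else 0) + (if ll B v w < s then v s else 0))) := by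
    rw [← Finset.sum_eq_sum_iff_of_le]
    · have := EQ1 h
      have h2 := le_antisymm he this
      rw [← @C_pp B u v, ← @C_ll B v w] at h2
      unfold C S at h2
      rw [← Finset.sum_add_distrib] at h2
      exact h2.symm
    · intro s _; split_ifs <;> omega
  refine ⟨?_, ?_, ?_⟩
  · intro s hs h1
    have := key s (by simp; omega)
    rw [if_neg (by omega), if_pos h1, if_neg (by omega), if_pos (by omega)] at this; omega
  · intro s hs h1
    have := key s (by simp; omega)
    rw [if_pos (by omega), if_neg (by omega), if_pos h1, if_neg (by omega)] at this; omega
  · intro s hs h1 h2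
    have := key s (by simp; omega)
    rw [if_pos (by omega), if_neg (by omega), if_neg (by omega), if_pos (by omega)] at this; omega

end RB

namespace RB

lemma C_mono {B : ℕ} {u u' v v' : ℕ → ℕ} {t} (h : ∀ s, u s ≤ u' s) (h' : ∀ s, v s ≤ v' s) :
    C B u v t ≤ C B u' v' t := by
  unfold C
  apply Finset.sum_le_sum; intro s _
  have := h s; have := h' s
  split_ifs <;> omega

lemma mm_mono {B : ℕ} {u u' v v' : ℕ → ℕ} (h : ∀ s, u s ≤ u' s) (h' : ∀ s, v s ≤ v' s) :
    mm B u v ≤ mm B u' v' :=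
  le_mm fun _ ht => (mm_le ht).trans (C_mono h h')

lemma le_inc {u : ℕ → ℕ} {t} (s) : u s ≤ inc u t s := by unfold inc; omega

lemma one_le_mm_iff {B : ℕ} {u v : ℕ → ℕ} :
    1 ≤ mm B u v ↔ ∃ s t, s < t ∧ t ≤ B ∧ 0 < v s ∧ 0 < u t := by
  constructor
  · intro h
    by_contra hh
    push Not at hh
    -- first s with v s > 0
    by_cases hv : ∃ s, s ≤ B ∧ 0 < v s
    · have hs := Nat.find_spec hv
      have hmin := fun m => @Nat.find_min _ _ hv m
      set s0 := Nat.find hv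
      have : C B u v s0 = 0 := by
        unfold C
        apply Finset.sum_eq_zero
        intro x hx
        simp at hx
        have h1 : (if x < s0 then v x else 0) = 0 := by
          split_ifs with h1
          · have := hmin x h1; by_contra h2; exact this ⟨by omega, by omega⟩
          · rfl
        have h2 : (if s0 < x then u x else 0) = 0 := by
          split_ifs with h1
          · have := hh s0 x h1 (by omega) hs.2; omega
          · rfl
        omega
      have h3 := @mm_le B u v s0 hs.1
      omega
    · push Not at hv
      have : mm B u v ≤ S B v := mm_le_right
      have h2 : S B v = 0 := by
        unfold S; apply Finset.sum_eq_zero; intro x hx; simp at hx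
        have := hv x (by omega); omega
      omega
  · rintro ⟨s, t, hst, htB, hv, hu⟩
    apply le_mm
    intro x hx
    unfold C
    by_cases hxs : s < x
    · have := Finset.single_le_sum (f := fun s => (if s < x then v s else 0) + (if x < s then u s else 0))
        (fun _ _ => Nat.zero_le _) (show s ∈ Finset.range (B+1) by simp; omega)
      simp only [if_pos hxs] at this
      omega
    · have := Finset.single_le_sum (f := fun s => (if s < x then v s else 0) + (if x < s then u s else 0))
        (fun _ _ => Nat.zero_le _) (show t ∈ Finset.range (B+1) by simp; omega)
      simp only [if_pos (show x < t by omega)] at this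
      omega

/-- The removal of a letter does not destroy the ascent above. -/
lemma safe {B : ℕ} {w u v u' v' : ℕ → ℕ} (h : FR B u v u' v') (h2 : mm B u v + 2 ≤ S B u)
    (h3 : 1 ≤ mm B w u) : 1 ≤ mm B w u' := by
  rw [one_le_mm_iff] at h3 ⊢
  obtain ⟨s, t, hst, ht, hs, hw⟩ := h3
  obtain ⟨p, hp, hpp, hu, hv⟩ := h
  by_cases h4 : 0 < u' s
  · exact ⟨s, t, hst, ht, h4, hw⟩
  have e : u s = u' s + if s = p then 1 else 0 := by rw [hu]; rfl
  have hsp : s = p := by by_contra hh; rw [if_neg hh] at e; omega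
  have us1 : u p = 1 := by rw [← hsp]; rw [if_pos hsp] at e; omega
  by_contra hh
  push Not at hh
  have hz : ∀ x, x < p → u x = 0 := by
    intro x hx
    by_contra h5
    have e2 : u x = u' x + if x = p then 1 else 0 := by rw [hu]; rfl
    rw [if_neg (by omega)] at e2
    have := hh x t (by omega) ht (by omega)
    omega
  have h6 : S B u ≤ C B u v p + 1 := by
    have e1 : (1:ℕ) = ∑ s ∈ Finset.range (B+1), if s = p then 1 else 0 := by
      rw [Finset.sum_ite_eq']; simp; omega
    refine le_of_le_of_eq ?_ (congrArg (fun z => C B u v p + z) e1.symm)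
    unfold S C
    rw [← Finset.sum_add_distrib]
    apply Finset.sum_le_sum
    intro x _
    rcases lt_trichotomy x p with h | h | h
    · rw [hz x h]; omega
    · subst h; simp; omega
    · rw [if_pos h]; omega
  rw [hpp, C_pp] at h6
  omega

abbrev Mx := ℕ → ℕ → ℕ

def m (B : ℕ) (a : Mx) (i : ℕ) : ℕ := mm B (a i) (a (i+1))
def J (B : ℕ) (a : Mx) (i : ℕ) : ℕ := m B a i + m B a (i+1)

def Fstep (B i : ℕ) (a a' : Mx) : Prop :=
  FR B (a i) (a (i+1)) (a' i) (a' (i+1)) ∧ ∀ k, k ≠ i → k ≠ i+1 → a' k = a k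

lemma m_congr {B : ℕ} {a b : Mx} {i} (h : a i = b i) (h' : a (i+1) = b (i+1)) : m B a i = m B b i := by
  unfold m; rw [h, h']

lemma F_m_same {B i : ℕ} {a a' : Mx} (h : Fstep B i a a') : m B a' i = m B a i := (FR_spec h.1).1

lemma F_m_far {B i k : ℕ} {a a' : Mx} (h : Fstep B i a a') (h1 : k ≠ i) (h2 : k ≠ i+1) (h3 : k+1 ≠ i) :
    m B a' k = m B a k := m_congr (h.2 _ h1 h2) (h.2 _ h3 (by omega))

/-- effect on the pair below -/
lemma F_m_up {B i : ℕ} {a a' : Mx} (h : Fstep B i a a') :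
    m B a' (i+1) = m B a (i+1) + if ll B (a (i+1)) (a (i+2)) < pp B (a i) (a (i+1)) then 1 else 0 := by
  obtain ⟨⟨t, ht, htp, h1, h2⟩, h3⟩ := h
  unfold m
  rw [h2, h3 (i+1+1) (by omega) (by omega), mm_inc_left ht, htp]

/-- effect on the pair above -/
lemma F_m_down {B i : ℕ} {a a' : Mx} (h : Fstep B (i+1) a a') :
    m B a i = m B a' i + if pp B (a (i+1)) (a (i+2)) < ll B (a i) (a (i+1)) then 1 else 0 := by
  obtain ⟨⟨t, ht, htp, h1, h2⟩, h3⟩ := h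
  unfold m
  rw [h3 i (by omega) (by omega), h1, mm_inc_right' ht, ← h1, ← htp]

lemma F_m_down' {B i : ℕ} {a a' : Mx} (h : Fstep B (i+1) a a') :
    m B a i = m B a' i + if pp B (a (i+1)) (a (i+2)) < pp B (a' i) (a' (i+1)) then 1 else 0 := by
  obtain ⟨⟨t, ht, htp, h1, h2⟩, h3⟩ := h
  unfold m
  rw [h3 i (by omega) (by omega), h1, mm_inc_right ht, ← h1, ← htp]

def Hle (B c : ℕ) (a : Mx) (i : ℕ) : Prop :=
  J B a i ≤ c + if pp B (a (i+1)) (a (i+2)) < ll B (a i) (a (i+1)) then 1 else 0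
def Hge (B c : ℕ) (a : Mx) (i : ℕ) : Prop :=
  c + 1 ≤ J B a i + if ll B (a (i+1)) (a (i+2)) < pp B (a i) (a (i+1)) then 1 else 0

lemma HA {B c i : ℕ} {a a' : Mx} (h : Fstep B i a a') (hJ : J B a i ≤ c) : Hle B c a' i := by
  have h1 := F_m_same h
  have h2 := F_m_up h
  unfold Hle J at *
  by_cases hc : ll B (a (i+1)) (a (i+2)) < pp B (a i) (a (i+1))
  · rw [if_pos hc] at h2
    rw [if_pos]; · omega
    rw [(FR_spec h.1).2]
    refine lt_of_le_of_lt ?_ hc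
    obtain ⟨⟨t, ht, htp, e1, e2⟩, h3⟩ := h
    apply pp_le_of ll_le
    unfold m at h2
    rw [show i + 1 + 1 = i + 2 by rfl] at h2
    rw [h2, e2, C_inc_left ht, h3 (i+2) (by omega) (by omega), C_ll, ]
    split_ifs <;> omega
  · rw [if_neg hc] at h2; omega

lemma HA' {B c i : ℕ} {a a' : Mx} (h : Fstep B (i+1) a a') (hJ : c + 1 ≤ J B a i) : Hge B c a' i := by
  have h1 := F_m_same h
  have h2 := F_m_down' h
  have h3 := (FR_spec h.1).2
  rw [show i + 1 + 1 = i + 2 by rfl] at h3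
  unfold Hge J at *
  rw [h3]
  omega

lemma HB {B c i : ℕ} {a a' : Mx} (h : Fstep B (i+2) a a') (hJ : Hle B c a i) : Hle B c a' i := by
  have h1 : m B a' i = m B a i := F_m_far h (by omega) (by omega) (by omega)
  have h2 := F_m_down h
  have e0 := h.2 i (by omega) (by omega)
  have e1 := h.2 (i+1) (by omega) (by omega)
  unfold Hle J at *
  by_cases hc : m B a (i+1) = m B a' (i+1)
  · have : pp B (a' (i+1)) (a' (i+2)) ≤ pp B (a (i+1)) (a (i+2)) := by
      apply pp_le_of pp_le
      unfold m at hc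
      rw [show i + 1 + 1 = i + 2 by rfl] at hc
      rw [← hc, e1, ← C_pp]
      apply C_mono (fun _ => le_rfl)
      obtain ⟨⟨t, ht, htp, e1, e2⟩, h3⟩ := h
      rw [e1]; exact le_inc
    rw [e0]
    rw [e1] at this ⊢
    split_ifs at * <;> omega
  · split_ifs at * <;> omega

lemma HB' {B c i : ℕ} {a a' : Mx} (h : Fstep B i a a') (hJ : Hge B c a (i+1)) : Hge B c a' (i+1) := by
  have h1 : m B a' (i+2) = m B a (i+2) := F_m_far h (by omega) (by omega) (by omega)
  have h2 := F_m_up h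
  have e0 := h.2 (i+2) (by omega) (by omega)
  have e1 := h.2 (i+3) (by omega) (by omega)
  unfold Hge J at *
  simp only [show i + 1 + 1 = i + 2 from rfl, show i + 1 + 2 = i + 3 from rfl] at *
  by_cases hc : m B a' (i+1) = m B a (i+1)
  · have : pp B (a (i+1)) (a (i+2)) ≤ pp B (a' (i+1)) (a' (i+2)) := by
      apply pp_le_of pp_le
      unfold m at hc
      simp only [show i + 1 + 1 = i + 2 from rfl] at hc
      rw [← hc, ← C_pp, e0]
      apply C_mono _ (fun _ => le_rfl)
      obtain ⟨⟨t, ht, htp, e1, e2⟩, h3⟩ := h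
      rw [e2]; exact le_inc
    rw [e1]
    rw [e0] at this ⊢
    split_ifs at * <;> omega
  · split_ifs at * <;> omega

lemma HD {B c i : ℕ} {a a' : Mx} (h : Fstep B (i+1) a a') (hJ : Hle B c a i) : J B a' i ≤ c := by
  have h1 := F_m_same h
  have h2 := F_m_down h
  unfold Hle J at *
  omega

lemma HD' {B c i : ℕ} {a a' : Mx} (h : Fstep B i a a') (hJ : Hge B c a i) : c + 1 ≤ J B a' i := by
  have h1 := F_m_same h
  have h2 := F_m_up h
  unfold Hge J at *
  omega

lemma F_m_down_le {B i : ℕ} {a a' : Mx} (h : Fstep B (i+1) a a') : m B a' i ≤ m B a i := by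
  have := F_m_down h; omega
lemma F_m_down_le' {B i : ℕ} {a a' : Mx} (h : Fstep B (i+1) a a') : m B a i ≤ m B a' i + 1 := by
  have := F_m_down h; split_ifs at * <;> omega
lemma F_m_up_le {B i : ℕ} {a a' : Mx} (h : Fstep B i a a') : m B a (i+1) ≤ m B a' (i+1) := by
  have := F_m_up h; omega

def RStep (B c : ℕ) (P Q : Mx × Finset ℕ) : Prop :=
  ∃ j ∈ P.2, Q.2 = P.2.erase j ∧ Fstep B j Q.1 P.1 ∧
    (∀ j', j' + 1 = j → j' ∈ P.2 → J B P.1 j' ≤ c) ∧ (j + 1 ∈ P.2 → c < J B P.1 j)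

lemma Fstep_inj {B i : ℕ} {a b a' : Mx} (h : Fstep B i a a') (h2 : Fstep B i b a') : a = b := by
  have := FR_inj h.1 h2.1
  funext k
  by_cases h1 : k = i
  · subst h1; exact this.1
  · by_cases h3 : k = i+1
    · subst h3; exact this.2
    · rw [← h.2 k h1 h3, h2.2 k h1 h3]

lemma diamond_aux {B c : ℕ} {a' a b : Mx} {D : Finset ℕ} {j k : ℕ} (hj : j ∈ D) (hk : k ∈ D)
    (hjk : j + 1 < k)
    (hja : Fstep B j a a') (hkb : Fstep B k b a')
    (hj1 : ∀ j', j' + 1 = j → j' ∈ D → J B a' j' ≤ c) (hj2 : j + 1 ∈ D → c < J B a' j)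
    (hk1 : ∀ j', j' + 1 = k → j' ∈ D → J B a' j' ≤ c) (hk2 : k + 1 ∈ D → c < J B a' k) :
    ∃ e, RStep B c (a, D.erase j) (e, (D.erase j).erase k) ∧
      RStep B c (b, D.erase k) (e, (D.erase j).erase k) := by
  refine ⟨fun x => if x = k ∨ x = k+1 then b x else a x, ?_, ?_⟩
  · refine ⟨k, by simp [hk]; omega, rfl, ⟨?_, ?_⟩, ?_, ?_⟩
    · simp only [true_or, or_true, if_true]
      rw [← hja.2 k (by omega) (by omega), ← hja.2 (k+1) (by omega) (by omega)]
      exact hkb.1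
    · intro x h1 h2; simp [h1, h2]
    · intro j' h1 h2
      have := hk1 j' h1 (by simp at h2; exact h2.2)
      refine le_trans ?_ this
      unfold J
      have e1 : m B a' (j'+1) = m B a (j'+1) := F_m_far hja (by omega) (by omega) (by omega)
      by_cases h4 : j' = j + 1
      · subst h4; have := F_m_up_le hja; simp only at *; omega
      · have e2 : m B a' j' = m B a j' := F_m_far hja (by omega) (by omega) (by omega)
        simp only at *; omega
    · intro h
      have := hk2 (by simp at h; exact h.2)
      unfold J at *
      have e1 : m B a' (k+1) = m B a (k+1) := F_m_far hja (by omega) (by omega) (by omega)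
      have e2 : m B a' k = m B a k := F_m_far hja (by omega) (by omega) (by omega)
      simp only at *; omega
  · refine ⟨j, by simp [hj]; omega, by simp [Finset.erase_right_comm], ⟨?_, ?_⟩, ?_, ?_⟩
    · simp only [show ¬ (j = k ∨ j = k+1) by omega, show ¬ (j+1 = k ∨ j+1 = k+1) by omega, if_false]
      rw [← hkb.2 j (by omega) (by omega), ← hkb.2 (j+1) (by omega) (by omega)]
      exact hja.1
    · intro x h1 h2
      by_cases hx : x = k ∨ x = k+1
      · simp [hx]
      · simp only [hx, if_false]
        push Not at hx
        rw [← hkb.2 x hx.1 hx.2, ← hja.2 x h1 h2]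
    · intro j' h1 h2
      have := hj1 j' h1 (by simp at h2; exact h2.2)
      unfold J at *
      have e1 : m B a' (j'+1) = m B b (j'+1) := F_m_far hkb (by omega) (by omega) (by omega)
      have e2 : m B a' j' = m B b j' := F_m_far hkb (by omega) (by omega) (by omega)
      simp only at *; omega
    · intro h
      have := hj2 (by simp at h; exact h.2)
      refine lt_of_lt_of_le this ?_
      unfold J
      have e1 : m B a' j = m B b j := F_m_far hkb (by omega) (by omega) (by omega)
      by_cases h4 : k = j + 1 + 1
      · subst h4; have := F_m_down_le hkb; simp only at *; omega
      · have e2 : m B a' (j+1) = m B b (j+1) := F_m_far hkb (by omega) (by omega) (by omega)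
        simp only at *; omega

lemma diamond {B c : ℕ} (P Q R : Mx × Finset ℕ) (h1 : RStep B c P Q) (h2 : RStep B c P R) :
    ∃ E, Relation.ReflGen (RStep B c) Q E ∧ Relation.ReflTransGen (RStep B c) R E := by
  obtain ⟨a', D⟩ := P
  obtain ⟨a, D1⟩ := Q
  obtain ⟨b, D2⟩ := R
  obtain ⟨j, hj, hD1, hja, hj1, hj2⟩ := h1
  obtain ⟨k, hk, hD2, hkb, hk1, hk2⟩ := h2
  simp only at *
  subst hD1 hD2
  by_cases hjk : j = k
  · subst hjk
    rw [Fstep_inj hja hkb]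
    exact ⟨_, .refl, .refl⟩
  have n1 : j + 1 ≠ k := by
    intro h; subst h
    have := hk1 j rfl hj; have := hj2 hk; omega
  have n2 : k + 1 ≠ j := by
    intro h; subst h
    have := hj1 k rfl hk; have := hk2 hj; omega
  rcases Nat.lt_or_ge j k with h | h
  · obtain ⟨e, h3, h4⟩ := diamond_aux hj hk (by omega) hja hkb hj1 hj2 hk1 hk2
    exact ⟨_, .single h3, .single h4⟩
  · obtain ⟨e, h3, h4⟩ := diamond_aux hk hj (by omega) hkb hja hk1 hk2 hj1 hj2
    exact ⟨_, .single h4, .single h3⟩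

lemma R_unique {B c : ℕ} {d b b' : Mx} {D : Finset ℕ}
    (h : Relation.ReflTransGen (RStep B c) (d, D) (b, ∅))
    (h' : Relation.ReflTransGen (RStep B c) (d, D) (b', ∅)) : b = b' := by
  obtain ⟨E, h1, h2⟩ := Relation.church_rosser diamond h h'
  have key : ∀ {x : Mx} {E}, Relation.ReflTransGen (RStep B c) (x, (∅ : Finset ℕ)) E → E = (x, ∅) := by
    intro x E h
    rcases h.cases_head with h | ⟨y, ⟨j, hj, _⟩, _⟩
    · exact h.symm
    · simp at hj
  have := (key h1).symm.trans (key h2)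
  exact (Prod.mk.inj this).1

end RB

namespace RB

abbrev Rt (B c : ℕ) := Relation.ReflTransGen (RStep B c)

lemma Rt_ind {B c : ℕ} {P : Mx → Prop} {d b : Mx} {D E : Finset ℕ} (h : Rt B c (d, D) (b, E)) (hb : P b)
    (hs : ∀ j ∈ D, ∀ a a', P a → Fstep B j a a' → P a') : P d := by
  suffices ∀ X : Mx × Finset ℕ, Rt B c X (b, E) →
      (∀ j ∈ X.2, ∀ a a', P a → Fstep B j a a' → P a') → P X.1 from this (d, D) h hs
  intro X hX
  induction hX using Relation.ReflTransGen.head_induction_on with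
  | refl => intro _; exact hb
  | head h1 h2 ih =>
    intro hs
    obtain ⟨j, hj, e, hF, _⟩ := h1
    refine hs j hj _ _ (ih ?_) hF
    intro j' hj'
    rw [e] at hj'
    exact hs j' (Finset.mem_of_mem_erase hj')

def comb (i : ℕ) (x y : Mx) : Mx := fun k => if k ≤ i then x k else y k

lemma comb_le {i k : ℕ} {x y : Mx} (h : k ≤ i) : comb i x y k = x k := if_pos h
lemma comb_gt {i k : ℕ} {x y : Mx} (h : i < k) : comb i x y k = y k := if_neg (by omega)

lemma m_comb_lt {B i k : ℕ} {x y : Mx} (h : k < i) : m B (comb i x y) k = m B x k :=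
  m_congr (comb_le (by omega)) (comb_le (by omega))
lemma m_comb_gt {B i k : ℕ} {x y : Mx} (h : i < k) : m B (comb i x y) k = m B y k :=
  m_congr (comb_gt (by omega)) (comb_gt (by omega))

lemma X_lemma {B c i : ℕ} {b u x0 x y0 y : Mx} (hb : Fstep B (i+1) b u) (hx : Fstep B i x0 x)
    (hy : Fstep B (i+2) y0 y)
    (hx0 : ∀ k, i+1 ≤ k → x0 k = u k) (hy0 : ∀ k, k ≤ i+2 → y0 k = u k)
    (h1 : J B b (i+1) ≤ c) (S1 : S B (b (i+2)) = c) (S0 : S B (b (i+1)) = c)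
    (hym : m B y0 (i+2) ≤ m B u (i+2))
    (hJy : J B y (i+1) ≤ c) (hJx : c+1 ≤ J B x i) (hpos : 1 ≤ m B y (i+1)) :
    J B (comb (i+1) x y) (i+1) ≤ c ∨ c < J B (comb (i+1) x y) i := by
  by_contra hcon
  push Not at hcon
  obtain ⟨hc1, hc2⟩ := hcon
  unfold J at *
  rw [m_comb_lt (by omega)] at hc2
  rw [m_comb_gt (k := i+1+1) (by omega)] at hc1
  have hm11 : m B (comb (i+1) x y) (i+1) = mm B (x (i+1)) (y (i+2)) := by
    unfold m; rw [comb_le (by omega), comb_gt (by omega)]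
  rw [hm11] at hc1 hc2
  have x2 : x (i+2) = u (i+2) := by rw [hx.2 _ (by omega) (by omega), hx0 _ (by omega)]
  have y1 : y (i+1) = u (i+1) := by rw [hy.2 _ (by omega) (by omega), hy0 _ (by omega)]
  have m10 : m B x (i+1) = mm B (x (i+1)) (u (i+2)) := by unfold m; rw [x2]
  have m01 : m B y (i+1) = mm B (u (i+1)) (y (i+2)) := by unfold m; rw [y1]
  have m00 : m B u (i+1) = mm B (u (i+1)) (u (i+2)) := rfl
  -- x row
  have hxs := F_m_same hx
  have hys := F_m_same hy
  have hbs := F_m_same hb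
  have hbu := F_m_up hb
  obtain ⟨⟨t, ht, htp, hx1, hx2⟩, -⟩ := hx
  rw [hx0 (i+1) le_rfl] at hx2 htp
  have r1 := @mm_inc_left B (u (i+1)) (y (i+2)) t ht
  rw [← hx2, ← m01] at r1
  have r2 := @mm_inc_left B (u (i+1)) (u (i+2)) t ht
  rw [← hx2, ← m10, ← m00] at r2
  -- y row
  obtain ⟨⟨t', ht', htp', hy1, hy2⟩, -⟩ := hy
  rw [hy0 (i+2) le_rfl] at hy1 htp'
  have r3 := @mm_inc_right B (u (i+1)) (y (i+2)) t' ht'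
  rw [← hy1, ← m01, ← m00] at r3
  have r4 := @mm_inc_right B (x (i+1)) (y (i+2)) t' ht'
  rw [← hy1, ← m10] at r4
  have q1 : ll B (u (i+1)) (y (i+2)) < t := by
    by_contra hh; rw [if_neg hh] at r1; split_ifs at * <;> omega
  have q2 : ll B (u (i+1)) (u (i+2)) < t := by
    by_contra hh; rw [if_neg hh] at r2; split_ifs at * <;> omega
  rw [if_pos q1] at r1
  rw [if_pos q2] at r2
  have f1 : m B u (i+1) = m B y (i+1) + 1 := by split_ifs at * <;> omega
  have f2 : m B y (i+2) = c - m B y (i+1) := by simp only [show i+1+1 = i+2 from rfl] at *; omega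
  have q3 : ll B (b (i+1+1)) (b (i+1+2)) < pp B (b (i+1)) (b (i+1+1)) := by
    by_contra hh; rw [if_neg hh] at hbu; simp only [show i+1+1 = i+2 from rfl] at *; omega
  have E := (EQ2 q3 (by
    have : mm B (b (i+1)) (b (i+1+1)) + mm B (b (i+1+1)) (b (i+1+2)) ≤ c := h1
    rw [S1]; exact this)).1
  have hl : ll B (u (i+1)) (u (i+2)) = pp B (b (i+1)) (b (i+2)) := (FR_spec hb.1).2
  have SU : S B (u (i+1)) + 1 = c := by
    obtain ⟨⟨p, hp, -, hb1, -⟩, -⟩ := hb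
    rw [← S0, hb1, S_inc hp]
  have uz : ∀ s ≤ B, t ≤ s → u (i+1) s = 0 := by
    intro s hs hts
    have := E s hs (by
      have : pp B (b (i+1)) (b (i+1+1)) = pp B (b (i+1)) (b (i+2)) := rfl
      omega)
    obtain ⟨⟨p, hp, -, hb1, -⟩, -⟩ := hb
    have h2 := @le_inc (u (i+1)) p s
    rw [← hb1] at h2; omega
  have hX : m B x i = mm B (x0 i) (u (i+1)) := by
    rw [hxs]; unfold m; rw [hx0 (i+1) le_rfl]
  rw [htp] at q1
  have E2 := EQ2 q1 (by rw [← m01, ← hX]; omega)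
  rw [← htp] at E2
  have : mm B (u (i+1)) (y (i+2)) = 0 := by
    rw [← C_ll]
    unfold C
    apply Finset.sum_eq_zero
    intro s hs
    simp at hs
    have a1 : (if s < ll B (u (i+1)) (y (i+2)) then y (i+2) s else 0) = 0 := by
      split_ifs with h
      · exact E2.2.1 s (by omega) h
      · rfl
    have a2 : (if ll B (u (i+1)) (y (i+2)) < s then u (i+1) s else 0) = 0 := by
      split_ifs with h
      · by_cases h4 : s < t
        · exact E2.2.2 s (by omega) h h4
        · exact uz s (by omega) (by omega)
      · rfl
    omega
  omega

/-- Shift an allowed step of the left chain into the combination. -/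
lemma left_step {B c i j : ℕ} {x x0 y : Mx} {Dx Dy : Finset ℕ} (hj : j ∈ Dx) (hF : Fstep B j x0 x)
    (hDx : ∀ j ∈ Dx, j < i) (hDy : ∀ j ∈ Dy, i < j)
    (h1 : ∀ j', j' + 1 = j → j' ∈ Dx → J B x j' ≤ c) (h2 : j + 1 ∈ Dx → c < J B x j)
    (h3 : j + 1 = i → c < J B (comb i x y) j) :
    RStep B c (comb i x y, insert i (Dx ∪ Dy)) (comb i x0 y, insert i (Dx.erase j ∪ Dy)) := by
  have hji := hDx j hj
  refine ⟨j, by simp [hj], ?_, ⟨?_, ?_⟩, ?_, ?_⟩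
  · ext k
    simp only [Finset.mem_insert, Finset.mem_union, Finset.mem_erase]
    by_cases hk : k = j
    · subst hk
      have : k ∉ Dy := fun h => by have := hDy k h; omega
      simp [this]; omega
    · simp [hk]
  · simp only
    rw [comb_le (by omega), comb_le (by omega), comb_le (by omega), comb_le (by omega)]; exact hF.1
  · intro k hk1 hk2
    simp only
    by_cases h : k ≤ i
    · rw [comb_le h, comb_le h, hF.2 k hk1 hk2]
    · rw [comb_gt (by omega), comb_gt (by omega)]
  · intro j' e hj'
    simp only [Finset.mem_insert, Finset.mem_union] at hj'
    have : j' ∈ Dx := by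
      rcases hj' with h | h | h
      · omega
      · exact h
      · have := hDy _ h; omega
    have := h1 j' e this
    unfold J at *
    simp only
    rw [m_comb_lt (by omega), m_comb_lt (by omega)]; exact this
  · intro hj'
    simp only [Finset.mem_insert, Finset.mem_union] at hj'
    by_cases h : j + 1 = i
    · exact h3 h
    · have : j + 1 ∈ Dx := by
        rcases hj' with h | h | h
        · omega
        · exact h
        · have := hDy _ h; omega
      have := h2 this
      have := hDx _ ‹j + 1 ∈ Dx›
      unfold J at *
      simp only
      rw [m_comb_lt (by omega), m_comb_lt (by omega)]; omega

lemma right_step {B c i j : ℕ} {x y0 y : Mx} {Dx Dy : Finset ℕ} (hj : j ∈ Dy) (hF : Fstep B j y0 y)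
    (hDx : ∀ j ∈ Dx, j < i) (hDy : ∀ j ∈ Dy, i < j)
    (h1 : ∀ j', j' + 1 = j → j' ∈ Dy → J B y j' ≤ c) (h2 : j + 1 ∈ Dy → c < J B y j)
    (h3 : j = i + 1 → J B (comb i x y) i ≤ c) :
    RStep B c (comb i x y, insert i (Dx ∪ Dy)) (comb i x y0, insert i (Dx ∪ Dy.erase j)) := by
  have hji := hDy j hj
  refine ⟨j, by simp [hj], ?_, ⟨?_, ?_⟩, ?_, ?_⟩
  · ext k
    simp only [Finset.mem_insert, Finset.mem_union, Finset.mem_erase]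
    by_cases hk : k = j
    · subst hk
      have : k ∉ Dx := fun h => by have := hDx k h; omega
      simp [this]; omega
    · simp [hk]
  · simp only
    rw [comb_gt (by omega), comb_gt (by omega), comb_gt (by omega), comb_gt (by omega)]; exact hF.1
  · intro k hk1 hk2
    simp only
    by_cases h : k ≤ i
    · rw [comb_le h, comb_le h]
    · rw [comb_gt (by omega), comb_gt (by omega), hF.2 k hk1 hk2]
  · intro j' e hj'
    simp only [Finset.mem_insert, Finset.mem_union] at hj'
    by_cases h : j' = i
    · subst h; exact h3 e.symm
    have : j' ∈ Dy := by
      rcases hj' with h | h | h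
      · omega
      · have := hDx _ h; omega
      · exact h
    have := h1 j' e this
    unfold J at *
    simp only
    rw [m_comb_gt (by omega), m_comb_gt (by omega)]; exact this
  · intro hj'
    simp only [Finset.mem_insert, Finset.mem_union] at hj'
    have : j + 1 ∈ Dy := by
        rcases hj' with h | h | h
        · omega
        · have := hDx _ h; omega
        · exact h
    have := h2 this
    unfold J at *
    simp only
    rw [m_comb_gt (by omega), m_comb_gt (by omega)]; omega

lemma left_rows {B c i : ℕ} {x u : Mx} {D E : Finset ℕ} (h : Rt B c (x, D) (u, E)) (hD : ∀ j ∈ D, j < i) :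
    (∀ k, i < k → x k = u k) ∧ ∀ s, u i s ≤ x i s := by
  refine Rt_ind (P := fun x => (∀ k, i < k → x k = u k) ∧ ∀ s, u i s ≤ x i s) h ⟨fun _ _ => rfl, fun _ => le_rfl⟩ ?_
  rintro j hj a a' ⟨h1, h2⟩ hF
  have := hD j hj
  refine ⟨fun k hk => by rw [hF.2 k (by omega) (by omega), h1 k hk], fun s => (h2 s).trans ?_⟩
  by_cases hji : j + 1 = i
  · subst hji
    obtain ⟨⟨t, _, _, _, e⟩, _⟩ := hF
    rw [e]; exact le_inc s
  · rw [hF.2 i (by omega) (by omega)]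

lemma left_rows' {B c i : ℕ} {x u : Mx} {D E : Finset ℕ} (h : Rt B c (x, D) (u, E)) (hD : ∀ j ∈ D, j + 1 < i) :
    (∀ k, i ≤ k → x k = u k) := by
  refine Rt_ind (P := fun x => (∀ k, i ≤ k → x k = u k)) h (fun _ _ => rfl) ?_
  rintro j hj a a' h1 hF k hk
  have := hD j hj
  rw [hF.2 k (by omega) (by omega), h1 k hk]

lemma right_rows {B c i : ℕ} {x u : Mx} {D E : Finset ℕ} (h : Rt B c (x, D) (u, E)) (hD : ∀ j ∈ D, i < j) :
    (∀ k, k ≤ i → x k = u k) := by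
  refine Rt_ind (P := fun x => (∀ k, k ≤ i → x k = u k)) h (fun _ _ => rfl) ?_
  rintro j hj a a' h1 hF k hk
  have := hD j hj
  rw [hF.2 k (by omega) (by omega), h1 k hk]

lemma interleave {B c i : ℕ} {b u : Mx} (hb : Fstep B i b u) : ∀ n, ∀ x Dx y Dy,
    Dx.card + Dy.card = n → Rt B c (x, Dx) (u, ∅) → Rt B c (y, Dy) (u, ∅) →
    (∀ j ∈ Dx, j < i) → (∀ j ∈ Dy, i < j) →
    (i + 1 ∈ Dy → 1 ≤ m B y i ∧ J B b i ≤ c ∧ S B (b (i+1)) = c) →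
    (∀ i', i' + 1 = i → i' ∈ Dx → c < J B b i' ∧ S B (b i) = c) →
    Rt B c (comb i x y, insert i (Dx ∪ Dy)) (u, {i}) := by
  intro n
  induction n with
  | zero =>
    intro x Dx y Dy hn hx hy _ _ _ _
    have e1 : Dx = ∅ := by rw [← Finset.card_eq_zero]; omega
    have e2 : Dy = ∅ := by rw [← Finset.card_eq_zero]; omega
    subst e1 e2
    have e3 : x = u := R_unique (Relation.ReflTransGen.refl) hx
    have e4 : y = u := R_unique (Relation.ReflTransGen.refl) hy
    rw [e3, e4]
    have : comb i u u = u := by funext k; unfold comb; simp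
    rw [this]; simp; exact Relation.ReflTransGen.refl
  | succ n ih =>
    intro x Dx y Dy hn hx hy hDx hDy hR hL
    -- continuation after a right step
    have contR : ∀ j y0, j ∈ Dy → Fstep B j y0 y → Rt B c (y0, Dy.erase j) (u, ∅) →
        Rt B c (comb i x y0, insert i (Dx ∪ Dy.erase j)) (u, {i}) := by
      intro j y0 hj hF hc
      apply ih _ _ _ _ _ hx hc hDx
      · intro j' hj'; exact hDy j' (Finset.mem_of_mem_erase hj')
      · intro h
        have h1 := hR (Finset.mem_of_mem_erase h)
        have h2 := hDy j hj
        have h3 := Finset.ne_of_mem_erase h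
        rw [← F_m_far (k := i) hF (by omega) (by omega) (by omega)]
        exact h1
      · exact hL
      · rw [Finset.card_erase_of_mem hj]
        have := Finset.card_pos.2 ⟨j, hj⟩; omega
    have contL : ∀ j x0, j ∈ Dx → Fstep B j x0 x → Rt B c (x0, Dx.erase j) (u, ∅) →
        Rt B c (comb i x0 y, insert i (Dx.erase j ∪ Dy)) (u, {i}) := by
      intro j y0 hj hF hc
      apply ih _ _ _ _ _ hc hy _ hDy hR
      · intro i' h1 h2
        exact hL i' h1 (Finset.mem_of_mem_erase h2)
      · rw [Finset.card_erase_of_mem hj]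
        have := Finset.card_pos.2 ⟨j, hj⟩; omega
      · intro j' hj'; exact hDx j' (Finset.mem_of_mem_erase hj')
    have hyr := right_rows hy hDy
    have hxr := left_rows hx hDx
    -- facts about right step i+1
    have factR : ∀ y0, Fstep B (i+1) y0 y → i+1 ∈ Dy → Rt B c (y0, Dy.erase (i+1)) (u, ∅) →
        J B y i ≤ c ∧ (∀ k, k ≤ i+1 → y0 k = u k) ∧ m B y0 (i+1) ≤ m B u (i+1) := by
      intro y0 hF hm hc
      have hD : ∀ j ∈ Dy.erase (i+1), i + 1 < j := by
        intro j hj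
        have := hDy j (Finset.mem_of_mem_erase hj)
        have := Finset.ne_of_mem_erase hj
        omega
      refine ⟨HD hF ?_, right_rows hc hD, ?_⟩
      · refine Rt_ind (P := fun a => Hle B c a i) hc (HA hb (hR hm).2.1) ?_
        intro j hj a a' h1 h2
        have := hD j hj
        by_cases hj2 : j = i + 2
        · subst hj2; exact HB h2 h1
        · unfold Hle J m at *
          rw [h2.2 i (by omega) (by omega), h2.2 (i+1) (by omega) (by omega), h2.2 (i+2) (by omega) (by omega)]
          exact h1
      · refine Rt_ind (P := fun a => m B a (i+1) ≤ m B u (i+1)) hc le_rfl ?_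
        intro j hj a a' h1 h2
        have := hD j hj
        by_cases hj2 : j = i + 2
        · subst hj2; exact (F_m_down_le h2).trans h1
        · rw [F_m_far h2 (by omega) (by omega) (by omega)]; exact h1
    have factL : ∀ i' x0, i' + 1 = i → Fstep B i' x0 x → i' ∈ Dx → Rt B c (x0, Dx.erase i') (u, ∅) →
        c + 1 ≤ J B x i' ∧ (∀ k, i ≤ k → x0 k = u k) := by
      intro i' x0 hi' hF hm hc
      have hD : ∀ j ∈ Dx.erase i', j + 1 < i := by
        intro j hj
        have := hDx j (Finset.mem_of_mem_erase hj)
        have := Finset.ne_of_mem_erase hj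
        omega
      refine ⟨HD' hF ?_, left_rows' hc hD⟩
      subst hi'
      refine Rt_ind (P := fun a => Hge B c a i') hc (HA' hb (hL i' rfl hm).1) ?_
      intro j hj a a' h1 h2
      have := hD j hj
      by_cases hj2 : j + 1 = i'
      · subst hj2; exact HB' h2 h1
      · unfold Hge J m at *
        rw [h2.2 i' (by omega) (by omega), h2.2 (i'+1) (by omega) (by omega), h2.2 (i'+2) (by omega) (by omega)]
        exact h1
    have rowL : ∀ i', i' + 1 = i → y = u → J B (comb i x y) i' = J B x i' := by
      intro i' e ey
      subst e ey
      unfold J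
      rw [m_comb_lt (by omega)]
      congr 1
      apply m_congr (comb_le le_rfl)
      rw [comb_gt (by omega), hxr.1 _ (by omega)]
    have rowR : x = u → J B (comb i x y) i = J B y i := by
      intro ex
      subst ex
      unfold J
      rw [m_comb_gt (k := i+1) (by omega)]
      congr 1
      apply m_congr _ (comb_gt (by omega))
      rw [comb_le (by omega), hyr _ (by omega)]
    rcases hx.cases_head with ex | ⟨⟨x0, Dx0⟩, ⟨jx, hjx, eDx, hFx, hx1, hx2⟩, hxc⟩
    · obtain ⟨ex, eD⟩ := Prod.mk.inj ex
      rcases hy.cases_head with ey | ⟨⟨y0, Dy0⟩, ⟨jy, hjy, eDy, hFy, hy1, hy2⟩, hyc⟩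
      · obtain ⟨ey, eD2⟩ := Prod.mk.inj ey
        subst eD eD2; simp at hn
      · simp only at *
        subst eDy
        refine Relation.ReflTransGen.head (right_step hjy hFy hDx hDy hy1 hy2 ?_) (contR _ _ hjy hFy hyc)
        intro e; subst e
        rw [rowR ex]
        exact (factR y0 hFy hjy hyc).1
    · simp only at *
      subst eDx
      by_cases hji : jx + 1 = i
      · rcases hy.cases_head with ey | ⟨⟨y0, Dy0⟩, ⟨jy, hjy, eDy, hFy, hy1, hy2⟩, hyc⟩
        · obtain ⟨ey, eD2⟩ := Prod.mk.inj ey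
          refine Relation.ReflTransGen.head (left_step hjx hFx hDx hDy hx1 hx2 ?_) (contL _ _ hjx hFx hxc)
          intro e
          rw [rowL jx e ey]
          exact (factL jx x0 e hFx hjx hxc).1
        · simp only at *
          subst eDy
          by_cases hjy2 : jy = i + 1
          · subst hjy2
            have f1 := factR y0 hFy hjy hyc
            have f2 := factL jx x0 hji hFx hjx hxc
            have f3 := hR hjy
            have f4 := hL jx hji hjx
            subst hji
            rcases X_lemma hb hFx hFy f2.2 f1.2.1 f3.2.1 f3.2.2 f4.2 f1.2.2 f1.1 f2.1 f3.1 with h | h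
            · exact Relation.ReflTransGen.head (right_step hjy hFy hDx hDy hy1 hy2 (fun _ => h)) (contR _ _ hjy hFy hyc)
            · exact Relation.ReflTransGen.head (left_step hjx hFx hDx hDy hx1 hx2 (fun _ => h)) (contL _ _ hjx hFx hxc)
          · exact Relation.ReflTransGen.head (right_step hjy hFy hDx hDy hy1 hy2 (fun h => absurd h hjy2)) (contR _ _ hjy hFy hyc)
      · exact Relation.ReflTransGen.head (left_step hjx hFx hDx hDy hx1 hx2 (fun h => absurd h hji)) (contL _ _ hjx hFx hxc)

end RB

namespace RB

lemma F_S1 {B i : ℕ} {a a' : Mx} (h : Fstep B i a a') : S B (a i) = S B (a' i) + 1 := by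
  obtain ⟨⟨t, ht, _, h1, _⟩, _⟩ := h
  rw [h1, S_inc ht]
lemma F_S2 {B i : ℕ} {a a' : Mx} (h : Fstep B i a a') : S B (a' (i+1)) = S B (a (i+1)) + 1 := by
  obtain ⟨⟨t, ht, _, _, h2⟩, _⟩ := h
  rw [h2, S_inc ht]

lemma F_ex {B i : ℕ} {a : Mx} (h : m B a i < S B (a i)) : ∃ a', Fstep B i a a' := by
  obtain ⟨u', v', hF⟩ := FR_ex h
  refine ⟨fun k => if k = i then u' else if k = i+1 then v' else a k, ?_, ?_⟩
  · simpa using hF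
  · intro k h1 h2; simp [h1, h2]

lemma main_M {B c : ℕ} : ∀ k l (b : Mx), (k ≠ 0 → S B (b l) = c + 1 ∧ (∀ j, l < j → j < l + k → S B (b j) = c) ∧
      S B (b (l+k)) + 1 = c ∧ ∀ j, l ≤ j → j < l + k → 1 ≤ m B b j) →
    ∃ d, Rt B c (d, Finset.Ico l (l+k)) (b, ∅) ∧ (∀ j, l ≤ j → j < l + k → 1 ≤ m B d j) ∧
      (∀ l', l' + 1 = l → 1 ≤ m B b l' → 1 ≤ m B d l') ∧ (1 ≤ m B b (l+k) → 1 ≤ m B d (l+k)) := by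
  intro k
  induction k using Nat.strong_induction_on with
  | _ k IH =>
  intro l b hyp
  rcases Nat.eq_zero_or_pos k with hk | hk
  · subst hk
    refine ⟨b, ?_, ?_, ?_, ?_⟩
    · simp; exact Relation.ReflTransGen.refl
    · intro j h1 h2; omega
    · intro l' _ h; exact h
    · intro h; exact h
  obtain ⟨hS0, hSm, hS1, hm⟩ := hyp (by omega)
  have hex : ∃ i, l ≤ i ∧ i < l + k ∧ (i + 1 = l + k ∨ J B b i ≤ c) :=
    ⟨l + k - 1, by omega, by omega, by omega⟩
  have hi := Nat.find_spec hex
  have hmin := fun m => @Nat.find_min _ _ hex m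
  set i := Nat.find hex
  obtain ⟨hi1, hi2, hi3⟩ := hi
  have hSi : c ≤ S B (b i) := by
    rcases Nat.eq_or_lt_of_le hi1 with h | h
    · rw [← h]; omega
    · rw [hSm i h hi2]
  have hmi : m B b i + 1 ≤ c := by
    rcases hi3 with h | h
    · have : m B b i ≤ S B (b (i+1)) := mm_le_right
      rw [h] at this; omega
    · by_cases hh : i + 1 = l + k
      · have : m B b i ≤ S B (b (i+1)) := mm_le_right
        rw [hh] at this; omega
      · have := hm (i+1) (by omega) (by omega)
        unfold J at h; omega
  have hleft : ∀ i', i' + 1 = i → l ≤ i' → c < J B b i' := by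
    intro i' h1 h2
    have := hmin i' (by omega)
    by_contra h3
    exact this ⟨h2, by omega, Or.inr (by omega)⟩
  obtain ⟨u, hu⟩ := F_ex (B := B) (i := i) (a := b) (by omega)
  have hSu1 := F_S1 hu
  have hSu2 := F_S2 hu
  have hmu := F_m_same hu
  have hmu2 := F_m_up_le hu
  -- right
  obtain ⟨y, hy1, hy2, hy3, hy4⟩ := IH (l + k - (i+1)) (by omega) (i+1) u (by
    intro hne
    have e : i + 1 + (l + k - (i+1)) = l + k := by omega
    rw [e]
    refine ⟨?_, ?_, ?_, ?_⟩
    · rw [hSu2, hSm (i+1) (by omega) (by omega)]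
    · intro j h1 h2
      rw [hu.2 j (by omega) (by omega)]; exact hSm j (by omega) h2
    · rw [hu.2 _ (by omega) (by omega)]; exact hS1
    · intro j h1 h2
      have := hm j (by omega) h2
      by_cases hj : j = i + 1
      · subst hj; omega
      · rw [F_m_far hu (by omega) (by omega) (by omega)]; exact this)
  have e : i + 1 + (l + k - (i+1)) = l + k := by omega
  rw [e] at hy1 hy2 hy4
  obtain ⟨x, hx1, hx2, hx3, hx4⟩ := IH (i - l) (by omega) l u (by
    intro hne
    have e : l + (i - l) = i := by omega
    rw [e]
    refine ⟨?_, ?_, ?_, ?_⟩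
    · rw [hu.2 _ (by omega) (by omega)]; exact hS0
    · intro j h1 h2
      rw [hu.2 j (by omega) (by omega)]; exact hSm j (by omega) (by omega)
    · rw [← hSu1]; exact hSm i (by omega) (by omega)
    · intro j h1 h2
      have := hm j (by omega) (by omega)
      by_cases hj : j + 1 = i
      · have h3 := hleft j hj h1
        unfold J at h3
        rw [hj] at h3
        have hu' := hu
        rw [← hj] at hu'
        have := F_m_down_le' hu'
        omega
      · rw [F_m_far hu (by omega) (by omega) (by omega)]; exact this)
  have e' : l + (i - l) = i := by omega
  rw [e'] at hx1 hx2 hx4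
  have hmi1 := hm i hi1 hi2
  have hyi : 1 ≤ m B y i := hy3 i rfl (by omega)
  have hxr := left_rows hx1 (i := i) (by intro j hj; simp at hj; omega)
  have hyr := right_rows hy1 (i := i) (by intro j hj; simp at hj; omega)
  refine ⟨comb i x y, ?_, ?_, ?_, ?_⟩
  · have h1 : Rt B c (comb i x y, insert i (Finset.Ico l i ∪ Finset.Ico (i+1) (l+k))) (u, {i}) := by
      refine interleave hu _ x _ y _ rfl hx1 hy1 ?_ ?_ ?_ ?_
      · intro j hj; simp at hj; omega
      · intro j hj; simp at hj; omega
      · intro hj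
        simp at hj
        refine ⟨hyi, ?_, hSm _ (by omega) (by omega)⟩
        rcases hi3 with h | h
        · omega
        · exact h
      · intro i' h1 h2
        simp at h2
        exact ⟨hleft i' h1 (by omega), hSm _ (by omega) (by omega)⟩
    have h2 : insert i (Finset.Ico l i ∪ Finset.Ico (i+1) (l+k)) = Finset.Ico l (l+k) := by
      ext j; simp; omega
    rw [h2] at h1
    refine h1.tail ⟨i, by simp, by simp, hu, ?_, ?_⟩
    · intro j' h3 h4; simp at h4; omega
    · intro h4; simp at h4
  · intro j h1 h2
    rcases lt_trichotomy j i with h | h | h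
    · rw [m_comb_lt h]; exact hx2 j h1 h
    · subst h
      refine hyi.trans ?_
      unfold m
      rw [comb_le le_rfl, comb_gt (by omega), hyr _ le_rfl]
      exact mm_mono hxr.2 (fun _ => le_rfl)
    · rw [m_comb_gt h]; exact hy2 j h h2
  · intro l' h1 h2
    rw [m_comb_lt (by omega)]
    apply hx3 l' h1
    by_cases hil : i = l
    · have : l' + 1 = i := by omega
      unfold m at h2 ⊢
      rw [this] at h2 ⊢
      rw [hu.2 l' (by omega) (by omega)]
      apply safe hu.1 _ h2
      have : S B (b i) = c + 1 := by rw [hil]; exact hS0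
      unfold m at hmi
      omega
    · rw [F_m_far hu (by omega) (by omega) (by omega)]; exact h2
  · intro h
    rw [m_comb_gt (by omega)]
    apply hy4
    by_cases hil : i + 1 = l + k
    · rw [← hil] at h ⊢; omega
    · rw [F_m_far hu (by omega) (by omega) (by omega)]; exact h

end RB

namespace RB

/-- existence of an injection between sets -/
def Inj {X Y : Type} (A : Set X) (A' : Set Y) : Prop := ∃ f : X → Y, Set.MapsTo f A A' ∧ Set.InjOn f A

lemma Inj.refl {X : Type} (A : Set X) : Inj A A := ⟨id, fun _ h => h, fun _ _ _ _ h => h⟩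
lemma Inj.trans {X Y Z : Type} {A : Set X} {A' : Set Y} {A'' : Set Z} (h : Inj A A') (h' : Inj A' A'') : Inj A A'' := by
  obtain ⟨f, h1, h2⟩ := h
  obtain ⟨g, h3, h4⟩ := h'
  exact ⟨g ∘ f, h3.comp h1, h4.comp h2 h1⟩

lemma Inj.of_rel {X Y : Type} [Nonempty Y] {A : Set X} {A' : Set Y} (R : X → Y → Prop)
    (h : ∀ a ∈ A, ∃ d ∈ A', R a d) (h' : ∀ a ∈ A, ∀ a' ∈ A, ∀ d, R a d → R a' d → a = a') : Inj A A' := by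
  classical
  choose! f hf using h
  refine ⟨f, fun a ha => (hf a ha).1, fun a ha a' ha' e => h' a ha a' ha' (f a) (hf a ha).2 ?_⟩
  rw [e]; exact (hf a' ha').2

def Clo (B r : ℕ) (Q : Mx → Prop) : Prop := ∀ i a a', i + 1 < r → Fstep B i a a' → (Q a ↔ Q a')

def W (B r : ℕ) (Q : Mx → Prop) (α : ℕ → ℕ) : Set Mx :=
  {a | Q a ∧ (∀ i < r, S B (a i) = α i) ∧ ∀ i, i + 1 < r → 1 ≤ m B a i}

lemma Rt_S {B c : ℕ} {d b : Mx} {D : Finset ℕ} (h : Rt B c (d, D) (b, ∅)) :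
    ∀ i, S B (d i) + (if i ∈ D then 1 else 0) = S B (b i) + if ∃ j ∈ D, j + 1 = i then 1 else 0 := by
  suffices ∀ X : Mx × Finset ℕ, Rt B c X (b, ∅) →
      ∀ i, S B (X.1 i) + (if i ∈ X.2 then 1 else 0) = S B (b i) + if ∃ j ∈ X.2, j + 1 = i then 1 else 0
      from this (d, D) h
  intro X hX
  induction hX using Relation.ReflTransGen.head_induction_on with
  | refl => intro i; simp
  | head h1 h2 ih =>
    rename_i X Y
    obtain ⟨a', D'⟩ := X
    obtain ⟨a, D⟩ := Y
    obtain ⟨j, hj, e, hF, _⟩ := h1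
    simp only at *
    subst e
    intro i
    have := ih i
    by_cases h1 : i = j
    · subst h1
      have h3 := F_S1 hF
      have h4 : (∃ j ∈ D'.erase i, j + 1 = i) ↔ ∃ j ∈ D', j + 1 = i := by
        constructor
        · rintro ⟨j, h1, h2⟩; exact ⟨j, Finset.mem_of_mem_erase h1, h2⟩
        · rintro ⟨j, h1, h2⟩; exact ⟨j, Finset.mem_erase.2 ⟨by omega, h1⟩, h2⟩
      rw [if_neg (by simp)] at this
      simp only [h4] at this
      rw [if_pos hj]; omega
    · have h5 : i ∈ D'.erase j ↔ i ∈ D' := by simp [h1]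
      simp only [h5] at this
      by_cases h2 : i = j + 1
      · subst h2
        have h3 := F_S2 hF
        rw [if_neg (c := ∃ j_1 ∈ D'.erase j, j_1 + 1 = j + 1) (by simp)] at this
        rw [if_pos (c := ∃ j_1 ∈ D', j_1 + 1 = j + 1) ⟨j, hj, rfl⟩]
        omega
      · have h3 := hF.2 i h1 h2
        have h4 : (∃ k ∈ D'.erase j, k + 1 = i) ↔ ∃ k ∈ D', k + 1 = i := by
          constructor
          · rintro ⟨j, h1, h2⟩; exact ⟨j, Finset.mem_of_mem_erase h1, h2⟩
          · rintro ⟨k, h1, h2⟩; exact ⟨k, Finset.mem_erase.2 ⟨by omega, h1⟩, h2⟩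
        simp only [h4] at this
        rw [h3]; exact this

/-- elementary balancing move on compositions -/
def Mv (r : ℕ) (α α' : ℕ → ℕ) : Prop :=
  ∃ l k, 1 ≤ k ∧ l + k < r ∧ α (l+k) + 2 ≤ α l ∧
    (k = 1 ∨ ∃ c, α l = c + 1 ∧ α (l+k) + 1 = c ∧ ∀ j, l < j → j < l + k → α j = c) ∧
    α' l + 1 = α l ∧ α' (l+k) = α (l+k) + 1 ∧ ∀ i < r, i ≠ l → i ≠ l+k → α' i = α i

lemma Mv_inj {B r : ℕ} {Q : Mx → Prop} (hQ : Clo B r Q) {α α' : ℕ → ℕ} (h : Mv r α α') :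
    Inj (W B r Q α) (W B r Q α') := by
  obtain ⟨l, k, hk, hlk, h2, hor, e1, e2, e3⟩ := h
  rcases hor with h1 | ⟨c, hc1, hc2, hc3⟩
  · subst h1
    refine Inj.of_rel (Fstep B l) ?_ (fun a _ a' _ d h h' => Fstep_inj h h')
    rintro a ⟨ha1, ha2, ha3⟩
    have hm : m B a l ≤ S B (a (l+1)) := mm_le_right
    rw [ha2 _ hlk] at hm
    have hS := ha2 l (by omega)
    obtain ⟨d, hd⟩ := F_ex (B := B) (i := l) (a := a) (by omega)
    refine ⟨d, ⟨(hQ l a d hlk hd).1 ha1, ?_, ?_⟩, hd⟩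
    · intro i hi
      have := ha2 i hi
      by_cases h1 : i = l
      · subst h1; have := F_S1 hd; omega
      · by_cases h3 : i = l + 1
        · subst h3; have := F_S2 hd; omega
        · rw [hd.2 i h1 h3, e3 i hi h1 h3, this]
    · intro i hi
      have := ha3 i hi
      by_cases h1 : i = l
      · subst h1; rw [F_m_same hd]; exact this
      · by_cases h3 : i = l + 1
        · subst h3; exact this.trans (F_m_up_le hd)
        · by_cases h4 : i + 1 = l
          · subst h4
            unfold m at this ⊢
            rw [hd.2 i h1 h3]
            unfold m at hm
            exact safe hd.1 (by omega) this
          · rw [F_m_far hd h1 h3 h4]; exact this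
  · refine Inj.of_rel (fun a d => Rt B c (d, Finset.Ico l (l+k)) (a, ∅)) ?_ (fun a _ a' _ d h h' => R_unique h h')
    rintro a ⟨ha1, ha2, ha3⟩
    obtain ⟨d, hd1, hd2, hd3, hd4⟩ := main_M (B := B) (c := c) k l a (by
      intro _
      refine ⟨by rw [ha2 _ (by omega), hc1], ?_, by rw [ha2 _ (by omega), hc2], ?_⟩
      · intro j h1 h2; rw [ha2 _ (by omega), hc3 j h1 h2]
      · intro j h1 h2; exact ha3 j (by omega))
    refine ⟨d, ⟨?_, ?_, ?_⟩, hd1⟩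
    · refine Rt_ind hd1 ha1 ?_
      intro j hj a a' h1 h2
      simp at hj
      exact (hQ j a a' (by omega) h2).1 h1
    · intro i hi
      have h3 := Rt_S hd1 i
      rw [ha2 i hi] at h3
      have h4 : (∃ j ∈ Finset.Ico l (l+k), j + 1 = i) ↔ l < i ∧ i ≤ l + k := by
        constructor
        · rintro ⟨j, h1, h2⟩; simp at h1; omega
        · rintro ⟨h1, h2⟩; exact ⟨i - 1, by simp; omega, by omega⟩
      rw [if_congr h4 rfl rfl, if_congr Finset.mem_Ico rfl rfl] at h3
      by_cases h1 : i = l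
      · subst h1
        rw [if_pos (by omega), if_neg (by omega)] at h3; omega
      · by_cases h5 : i = l + k
        · subst h5
          rw [if_neg (by omega), if_pos (by omega)] at h3; omega
        · rw [e3 i hi h1 h5]
          split_ifs at h3 <;> omega
    · intro i hi
      have := ha3 i hi
      by_cases h1 : l ≤ i ∧ i < l + k
      · exact hd2 i h1.1 h1.2
      · by_cases h3 : i + 1 = l
        · exact hd3 i h3 this
        · by_cases h4 : i = l + k
          · subst h4; exact hd4 this
          · have : m B d i = m B a i := by
              refine Rt_ind (P := fun x => m B x i = m B a i) hd1 rfl ?_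
              intro j hj x x' h5 h6
              simp at hj
              rw [F_m_far h6 (by omega) (by omega) (by omega), h5]
            omega

/-- reversal -/
def rev (B r : ℕ) (a : Mx) : Mx := fun i t => if i < r ∧ t ≤ B then a (r-1-i) (B-t) else 0

def Spt (B r : ℕ) (a : Mx) : Prop := ∀ i t, r ≤ i ∨ B < t → a i t = 0

lemma rev_spt {B r : ℕ} {a : Mx} : Spt B r (rev B r a) := by
  intro i t h; unfold rev; rw [if_neg (by omega)]

lemma rev_rev {B r : ℕ} {a : Mx} (h : Spt B r a) : rev B r (rev B r a) = a := by
  funext i t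
  unfold rev
  by_cases h1 : i < r ∧ t ≤ B
  · rw [if_pos h1, if_pos (by omega)]; congr 1 <;> omega
  · rw [if_neg h1, h i t (by omega)]

lemma C_rev {B : ℕ} {u v u' v' : ℕ → ℕ} (hu : ∀ t ≤ B, u' t = u (B - t)) (hv : ∀ t ≤ B, v' t = v (B - t)) {t} (ht : t ≤ B) :
    C B v' u' t = C B u v (B - t) := by
  unfold C
  rw [← Finset.sum_range_reflect]
  apply Finset.sum_congr rfl
  intro s hs
  simp at hs
  rw [show B + 1 - 1 - s = B - s by omega, hu _ (by omega), hv _ (by omega), show B - (B - s) = s by omega, add_comm]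
  congr 1
  · by_cases h : s < B - t
    · rw [if_pos h, if_pos (by omega)]
    · rw [if_neg h, if_neg (by omega)]
  · by_cases h : B - t < s
    · rw [if_pos h, if_pos (by omega)]
    · rw [if_neg h, if_neg (by omega)]

lemma mm_rev {B : ℕ} {u v u' v' : ℕ → ℕ} (hu : ∀ t ≤ B, u' t = u (B - t)) (hv : ∀ t ≤ B, v' t = v (B - t)) :
    mm B v' u' = mm B u v := by
  apply le_antisymm
  · apply le_mm
    intro t ht
    have := C_rev hu hv (t := B - t) (by omega)
    rw [show B - (B - t) = t by omega] at this
    rw [← this]; exact mm_le (by omega)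
  · apply le_mm
    intro t ht
    rw [C_rev hu hv ht]; exact mm_le (by omega)

lemma ll_rev {B : ℕ} {u v u' v' : ℕ → ℕ} (hu : ∀ t ≤ B, u' t = u (B - t)) (hv : ∀ t ≤ B, v' t = v (B - t)) :
    ll B v' u' = B - pp B u v := by
  have hp := @pp_le B u v
  have hl := @ll_le B v' u'
  apply le_antisymm
  · have : pp B u v ≤ B - ll B v' u' := by
      apply pp_le_of (by omega)
      rw [← C_rev hu hv hl, C_ll, mm_rev hu hv]
    omega
  · apply le_ll_of (by omega)
    rw [C_rev hu hv (by omega), show B - (B - pp B u v) = pp B u v by omega, C_pp, mm_rev hu hv]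

lemma S_rev {B : ℕ} {u u' : ℕ → ℕ} (hu : ∀ t ≤ B, u' t = u (B - t)) : S B u' = S B u := by
  unfold S
  rw [← Finset.sum_range_reflect]
  apply Finset.sum_congr rfl
  intro s hs
  simp at hs
  rw [hu _ (by omega)]; congr 1; omega

lemma rev_row {B r i : ℕ} {a : Mx} (h : i < r) : ∀ t ≤ B, rev B r a i t = a (r-1-i) (B-t) := by
  intro t ht; unfold rev; rw [if_pos ⟨h, ht⟩]

lemma rev_F {B r i : ℕ} {a a' : Mx} (hi : i + 1 < r) (h : Fstep B i a a') :
    Fstep B (r - 2 - i) (rev B r a') (rev B r a) := by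
  obtain ⟨hF, hrest⟩ := h
  have hs := FR_spec hF
  obtain ⟨t, ht, htp, h1, h2⟩ := hF
  have e1 : r - 1 - (r - 2 - i) = i + 1 := by omega
  have e2 : r - 1 - (r - 2 - i + 1) = i := by omega
  refine ⟨⟨B - t, by omega, ?_, ?_, ?_⟩, ?_⟩
  · have hu := @rev_row B r (r-2-i) a' (by omega)
    have hv := @rev_row B r (r-2-i+1) a' (by omega)
    rw [e1] at hu
    rw [e2] at hv
    have := ll_rev (u := rev B r a' (r-2-i)) (v := rev B r a' (r-2-i+1)) (u' := a' (i+1)) (v' := a' i)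
      (by intro t ht; rw [hu (B - t) (by omega), show B - (B - t) = t by omega])
      (by intro t ht; rw [hv (B - t) (by omega), show B - (B - t) = t by omega])
    rw [hs.2] at this
    have := @pp_le B (rev B r a' (r-2-i)) (rev B r a' (r-2-i+1))
    omega
  · funext s
    show rev B r a' (r-2-i) s = rev B r a (r-2-i) s + if s = B - t then 1 else 0
    unfold rev
    rw [e1]
    by_cases hsB : s ≤ B
    · rw [if_pos (by omega), h2, if_pos (by omega)]
      unfold inc
      congr 1
      by_cases hh : s = B - t
      · rw [if_pos hh, if_pos (by omega)]
      · rw [if_neg hh, if_neg (by omega)]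
    · rw [if_neg (by omega), if_neg (by omega), if_neg (by omega)]
  · funext s
    show rev B r a (r-2-i+1) s = rev B r a' (r-2-i+1) s + if s = B - t then 1 else 0
    unfold rev
    rw [e2]
    by_cases hsB : s ≤ B
    · rw [if_pos (by omega), h1, if_pos (by omega)]
      unfold inc
      congr 1
      by_cases hh : s = B - t
      · rw [if_pos hh, if_pos (by omega)]
      · rw [if_neg hh, if_neg (by omega)]
    · rw [if_neg (by omega), if_neg (by omega), if_neg (by omega)]
  · intro k h1 h2
    funext s
    unfold rev
    by_cases hk : k < r ∧ s ≤ B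
    · rw [if_pos hk, if_pos hk, hrest _ (by omega) (by omega)]
    · rw [if_neg hk, if_neg hk]

lemma F_spt {B r i : ℕ} {a a' : Mx} (hi : i + 1 < r) (h : Fstep B i a a') : Spt B r a ↔ Spt B r a' := by
  obtain ⟨⟨t, ht, htp, h1, h2⟩, hrest⟩ := h
  constructor
  · intro ha k s hks
    have := ha k s hks
    by_cases hk : k = i
    · subst hk; rw [h1] at this; unfold inc at this; omega
    · by_cases hk2 : k = i + 1
      · subst hk2; rw [h2]; unfold inc; rw [this, if_neg (by omega)]
      · rw [hrest k hk hk2, this]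
  · intro ha k s hks
    have := ha k s hks
    by_cases hk : k = i
    · subst hk; rw [h1]; unfold inc; rw [this, if_neg (by omega)]
    · by_cases hk2 : k = i + 1
      · subst hk2; rw [h2] at this; unfold inc at this; omega
      · rw [← hrest k hk hk2, this]

def Qr (B r : ℕ) (Q : Mx → Prop) : Mx → Prop := fun a => Spt B r a ∧ Q (rev B r a)

lemma Clo_rev {B r : ℕ} {Q : Mx → Prop} (hQ : Clo B r Q) : Clo B r (Qr B r Q) := by
  intro i a a' hi h
  unfold Qr
  rw [F_spt hi h, hQ (r-2-i) _ _ (by omega) (rev_F hi h)]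

lemma W_rev {B r : ℕ} {Q : Mx → Prop} (hs : ∀ a, Q a → Spt B r a) {α : ℕ → ℕ} {a : Mx} (h : a ∈ W B r Q α) :
    rev B r a ∈ W B r (Qr B r Q) (fun i => α (r-1-i)) := by
  obtain ⟨h1, h2, h3⟩ := h
  refine ⟨⟨rev_spt, by rw [rev_rev (hs a h1)]; exact h1⟩, ?_, ?_⟩
  · intro i hi
    rw [S_rev (rev_row hi), h2 _ (by omega)]
  · intro i hi
    have := h3 (r - 2 - i) (by omega)
    refine this.trans (le_of_eq ?_)
    unfold m
    have hu := @rev_row B r i a (by omega)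
    have hv := @rev_row B r (i+1) a (by omega)
    rw [mm_rev hv hu]
    congr 2 <;> omega

lemma W_rev' {B r : ℕ} {Q : Mx → Prop} {α : ℕ → ℕ} {a : Mx}
    (h : a ∈ W B r (Qr B r Q) (fun i => α (r-1-i))) : rev B r a ∈ W B r Q α := by
  obtain ⟨⟨h0, h1⟩, h2, h3⟩ := h
  refine ⟨h1, ?_, ?_⟩
  · intro i hi
    rw [S_rev (rev_row hi), h2 _ (by omega)]
    show α (r-1-(r-1-i)) = α i
    congr 1; omega
  · intro i hi
    have := h3 (r - 2 - i) (by omega)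
    refine this.trans (le_of_eq ?_)
    unfold m
    have hu := @rev_row B r i a (by omega)
    have hv := @rev_row B r (i+1) a (by omega)
    rw [mm_rev hv hu]
    congr 2 <;> omega

lemma Mv_inj_rev {B r : ℕ} {Q : Mx → Prop} (hQ : Clo B r Q) (hs : ∀ a, Q a → Spt B r a) {α α' : ℕ → ℕ}
    (h : Mv r (fun i => α (r-1-i)) (fun i => α' (r-1-i))) : Inj (W B r Q α) (W B r Q α') := by
  obtain ⟨f, h1, h2⟩ := Mv_inj (Clo_rev hQ) h
  refine ⟨fun a => rev B r (f (rev B r a)), fun a ha => W_rev' (h1 (W_rev hs ha)), ?_⟩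
  intro a ha a' ha' e
  have h3 := h1 (W_rev hs ha)
  have h4 := h1 (W_rev hs ha')
  have h5 : f (rev B r a) = f (rev B r a') := by
    rw [← rev_rev h3.1.1, ← rev_rev h4.1.1]; exact congrArg _ e
  have h6 := h2 (W_rev hs ha) (W_rev hs ha') h5
  rw [← rev_rev (hs a ha.1), ← rev_rev (hs a' ha'.1), h6]

end RB

namespace RB

lemma Mv_sum {r : ℕ} {α α' : ℕ → ℕ} (h : Mv r α α') :
    ∑ i ∈ Finset.range r, α' i = ∑ i ∈ Finset.range r, α i ∧
    ∑ i ∈ Finset.range r, (α' i)^2 < ∑ i ∈ Finset.range r, (α i)^2 ∧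
    ∀ i < r, (∀ j < r, 1 ≤ α j) → 1 ≤ α' i := by
  obtain ⟨l, k, hk, hlk, h2, hor, e1, e2, e3⟩ := h
  have key : ∀ f : ℕ → ℕ, ∑ i ∈ Finset.range r, f i = f l + (f (l+k) + ∑ i ∈ ((Finset.range r).erase l).erase (l+k), f i) := by
    intro f
    rw [Finset.add_sum_erase _ _ (by simp; omega), Finset.add_sum_erase _ _ (by simp; omega)]
  have rest : ∀ g : ℕ → ℕ, ∑ i ∈ ((Finset.range r).erase l).erase (l+k), g (α' i) = ∑ i ∈ ((Finset.range r).erase l).erase (l+k), g (α i) := by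
    intro g
    apply Finset.sum_congr rfl
    intro i hi
    simp at hi
    rw [e3 i (by omega) (by omega) (by omega)]
  refine ⟨?_, ?_, ?_⟩
  · have := rest id; simp only [id] at this; rw [key α, key α', this]; omega
  · rw [key (fun i => α i ^2), key (fun i => α' i ^2)]
    have := rest (fun x => x^2)
    rw [this, e2]
    have : α l = α' l + 1 := e1.symm
    have h3 : α (l+k) + 1 ≤ α' l := by omega
    rw [this]
    nlinarith
  · intro i hi hp
    have := hp i hi
    have := hp l (by omega)
    by_cases h3 : i = l
    · subst h3; have := hp (i+k) hlk; omega
    · by_cases h4 : i = l + k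
      · subst h4; omega
      · rw [e3 i hi h3 h4]; exact hp i hi

/-- If not equitable, some move is available, in one of the directions. -/
lemma exists_Mv {r : ℕ} {α : ℕ → ℕ} (h : ¬ ∀ i < r, ∀ j < r, α i ≤ α j + 1) :
    ∃ α', Mv r α α' ∨ Mv r (fun i => α (r-1-i)) (fun i => α' (r-1-i)) := by
  classical
  push Not at h
  obtain ⟨i0, hi0, j0, hj0, hij⟩ := h
  have hex : ∃ d, ∃ i j, i < r ∧ j < r ∧ α j + 2 ≤ α i ∧ (i + d = j ∨ j + d = i) := by
    rcases Nat.le_total i0 j0 with h | h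
    · exact ⟨j0 - i0, i0, j0, hi0, hj0, by omega, by omega⟩
    · exact ⟨i0 - j0, i0, j0, hi0, hj0, by omega, by omega⟩
  have hd := Nat.find_spec hex
  have hmin := fun m => @Nat.find_min _ _ hex m
  set d := Nat.find hex
  obtain ⟨i, j, hi, hj, hα, hor⟩ := hd
  have hd0 : d ≠ 0 := by
    intro h; rw [h] at hor
    have : i = j := by omega
    rw [this] at hα; omega
  have hmid : ∀ x, (i < x ∧ x < j) ∨ (j < x ∧ x < i) → α x = α j + 1 ∧ α i = α j + 2 := by
    intro x hx
    have h1 : α x ≤ α j + 1 := by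
      by_contra hh
      rcases hx with hx | hx
      · exact hmin (j - x) (by omega) ⟨x, j, by omega, hj, by omega, by omega⟩
      · exact hmin (x - j) (by omega) ⟨x, j, by omega, hj, by omega, by omega⟩
    have h2 : α i ≤ α x + 1 := by
      by_contra hh
      rcases hx with hx | hx
      · exact hmin (x - i) (by omega) ⟨i, x, by omega, by omega, by omega, by omega⟩
      · exact hmin (i - x) (by omega) ⟨i, x, by omega, by omega, by omega, by omega⟩
    omega
  have hne : i ≠ j := by rintro rfl; omega
  refine ⟨fun x => if x = i then α i - 1 else if x = j then α j + 1 else α x, ?_⟩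
  rcases hor with h | h
  · left
    refine ⟨i, d, by omega, by omega, by rw [h]; exact hα, ?_, by simp; omega, by rw [h]; simp [hne.symm], ?_⟩
    · by_cases hd1 : d = 1
      · left; exact hd1
      · right
        have := hmid (i+1) (by omega)
        refine ⟨α j + 1, by omega, by rw [h], ?_⟩
        intro x h1 h2; exact (hmid x (by omega)).1
    · intro x _ h1 h2; rw [h] at h2; simp [h1, h2]
  · right
    have e1 : r - 1 - (r - 1 - i) = i := by omega
    have e2 : r - 1 - (r - 1 - i + d) = j := by omega
    refine ⟨r - 1 - i, d, by omega, by omega, ?_, ?_, ?_, ?_, ?_⟩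
    · simp only [e1, e2]; exact hα
    · by_cases hd1 : d = 1
      · left; exact hd1
      · right
        have := hmid (j+1) (by omega)
        refine ⟨α j + 1, by simp only [e1]; omega, by simp only [e2], ?_⟩
        intro x h1 h2; exact (hmid _ (by omega)).1
    · simp only [e1, if_true]; omega
    · simp only [e2, if_neg hne.symm, if_true]
    · intro x hx h1 h2
      simp only
      rw [if_neg (by omega), if_neg (by omega)]

/-- reversing sums -/
lemma Mv_sum_rev {r : ℕ} {α α' : ℕ → ℕ} (h : Mv r (fun i => α (r-1-i)) (fun i => α' (r-1-i))) :
    ∑ i ∈ Finset.range r, α' i = ∑ i ∈ Finset.range r, α i ∧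
    ∑ i ∈ Finset.range r, (α' i)^2 < ∑ i ∈ Finset.range r, (α i)^2 ∧
    ∀ i < r, (∀ j < r, 1 ≤ α j) → 1 ≤ α' i := by
  obtain ⟨h1, h2, h3⟩ := Mv_sum h
  rw [Finset.sum_range_reflect α, Finset.sum_range_reflect α'] at h1
  rw [Finset.sum_range_reflect (fun i => α i ^2), Finset.sum_range_reflect (fun i => α' i ^ 2)] at h2
  refine ⟨h1, h2, ?_⟩
  intro i hi hp
  have := h3 (r-1-i) (by omega) (fun j hj => hp _ (by omega))
  simp only [show r - 1 - (r - 1 - i) = i by omega] at this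
  exact this

/-- Relation of injectability for all closed predicates -/
def InjAll (r : ℕ) (α β : ℕ → ℕ) : Prop :=
  ∀ (B : ℕ) (Q : Mx → Prop), Clo B r Q → (∀ a, Q a → Spt B r a) → Inj (W B r Q α) (W B r Q β)

lemma balance (r : ℕ) (α : ℕ → ℕ) (hp : ∀ j < r, 1 ≤ α j) :
    ∃ β : ℕ → ℕ, (∀ i < r, ∀ j < r, β i ≤ β j + 1) ∧ (∀ j < r, 1 ≤ β j) ∧
      ∑ i ∈ Finset.range r, β i = ∑ i ∈ Finset.range r, α i ∧ InjAll r α β := by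
  induction hn : ∑ i ∈ Finset.range r, (α i)^2 using Nat.strong_induction_on generalizing α with
  | _ n ih =>
  by_cases h : ∀ i < r, ∀ j < r, α i ≤ α j + 1
  · exact ⟨α, h, hp, rfl, fun B Q _ _ => Inj.refl _⟩
  · obtain ⟨α', h'⟩ := exists_Mv h
    have hs : (∑ i ∈ Finset.range r, α' i = ∑ i ∈ Finset.range r, α i ∧
      ∑ i ∈ Finset.range r, (α' i)^2 < ∑ i ∈ Finset.range r, (α i)^2 ∧
      ∀ i < r, (∀ j < r, 1 ≤ α j) → 1 ≤ α' i) ∧ InjAll r α α' := by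
      rcases h' with h' | h'
      · exact ⟨Mv_sum h', fun B Q h1 _ => Mv_inj h1 h'⟩
      · exact ⟨Mv_sum_rev h', fun B Q h1 h2 => Mv_inj_rev h1 h2 h'⟩
    obtain ⟨⟨s1, s2, s3⟩, hi⟩ := hs
    obtain ⟨β, hb1, hb2, hb3, hb4⟩ := ih _ (by omega) α' (fun j hj => s3 j hj hp) rfl
    exact ⟨β, hb1, hb2, hb3.trans s1, fun B Q h1 h2 => (hi B Q h1 h2).trans (hb4 B Q h1 h2)⟩

/-- The ballot predicate with column sums -/
def ColS (r : ℕ) (a : Mx) (t : ℕ) : ℕ := ∑ i ∈ Finset.range r, a i t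

def Q0 (B r : ℕ) (lam : ℕ → ℕ) (a : Mx) : Prop :=
  Spt B r a ∧ (∀ t ≤ B, ColS r a t = lam t) ∧ ∀ k t, t + 1 ≤ B → ColS (k+1) a t ≤ ColS k a (t+1)

lemma ColS_F {B i : ℕ} {a a' : Mx} (h : Fstep B i a a') (k t : ℕ) :
    ColS k a t = ColS k a' t + if k = i + 1 ∧ t = pp B (a i) (a (i+1)) then 1 else 0 := by
  obtain ⟨⟨p, hp, hpp, h1, h2⟩, h3⟩ := h
  rw [← hpp]
  have a1 : a i t = a' i t + if t = p then 1 else 0 := by rw [h1]; rfl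
  have a2 : a' (i+1) t = a (i+1) t + if t = p then 1 else 0 := by rw [h2]; rfl
  unfold ColS
  induction k with
  | zero => simp
  | succ k ih =>
    rw [Finset.sum_range_succ, Finset.sum_range_succ, ih]
    by_cases e1 : k = i
    · subst e1
      by_cases ht : t = p
      · simp [ht] at *; omega
      · simp [ht] at *; omega
    · by_cases e2 : k = i + 1
      · subst e2
        by_cases ht : t = p
        · simp [ht] at *; omega
        · simp [ht] at *; omega
      · rw [h3 k e1 e2]; simp [e1, e2]

lemma Clo_Q0 (B r : ℕ) (lam : ℕ → ℕ) : Clo B r (Q0 B r lam) := by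
  intro i a a' hi h
  have hC := ColS_F h
  unfold Q0
  rw [F_spt hi h]
  have e : (∀ t ≤ B, ColS r a t = lam t) ↔ (∀ t ≤ B, ColS r a' t = lam t) := by
    have : ∀ t, ColS r a t = ColS r a' t := by
      intro t; rw [hC, if_neg (by omega)]; omega
    simp only [this]
  rw [e]
  have hsp := (FR_spec h.1).2
  refine and_congr_right fun _ => and_congr_right fun _ => ?_
  constructor
  · intro hb k t ht
    have := hb k t ht
    rw [hC, hC k] at this
    by_cases hk : k = i + 1 ∧ t + 1 = pp B (a i) (a (i+1))
    · obtain ⟨rfl, hk2⟩ := hk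
      have h1 := pp_gt hk2.symm
      have h2 := hb i t ht
      have e1 : ColS (i+1+1) a t = ColS (i+1) a t + a (i+1) t := Finset.sum_range_succ _ _
      have e2 : ColS (i+1) a (t+1) = ColS i a (t+1) + a i (t+1) := Finset.sum_range_succ _ _
      have e3 := hC (i+1+1) t
      have e4 := hC (i+1) (t+1)
      rw [if_neg (by omega)] at e3
      rw [if_pos (by omega)] at e4
      omega
    · rw [if_neg hk] at this; omega
  · intro hb k t ht
    have := hb k t ht
    rw [hC, hC k]
    by_cases hk : k = i ∧ t = pp B (a i) (a (i+1))
    · obtain ⟨rfl, hk2⟩ := hk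
      have h1 := ll_gt (hsp.trans hk2.symm) ht
      have h2 := hb (k+1) t ht
      have e1 : ColS (k+1+1) a' t = ColS (k+1) a' t + a' (k+1) t := Finset.sum_range_succ _ _
      have e2 : ColS (k+1) a' (t+1) = ColS k a' (t+1) + a' k (t+1) := Finset.sum_range_succ _ _
      rw [if_pos (by omega), if_neg (by omega)]
      omega
    · rw [if_neg (by omega)]; omega

end RB

namespace RB

open Nat (count)

lemma cnt_congr {P Q : ℕ → Prop} [DecidablePred P] [DecidablePred Q] {N : ℕ} (h : ∀ k < N, (P k ↔ Q k)) :
    count P N = count Q N := by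
  rw [Nat.count_eq_card_filter_range, Nat.count_eq_card_filter_range]
  congr 1
  apply Finset.filter_congr
  intro k hk; exact h k (by simpa using hk)

lemma cnt_le {P Q : ℕ → Prop} [DecidablePred P] [DecidablePred Q] {N : ℕ} (h : ∀ k < N, P k → Q k) :
    count P N ≤ count Q N := by
  rw [Nat.count_eq_card_filter_range, Nat.count_eq_card_filter_range]
  apply Finset.card_le_card
  intro k hk
  simp at hk ⊢
  exact ⟨hk.1, h k hk.1 hk.2⟩

lemma cnt_or {P Q R : ℕ → Prop} [DecidablePred P] [DecidablePred Q] [DecidablePred R] {N : ℕ}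
    (h : ∀ k < N, (R k ↔ P k ∨ Q k)) (h' : ∀ k < N, ¬ (P k ∧ Q k)) :
    count R N = count P N + count Q N := by
  induction N with
  | zero => simp
  | succ n ih =>
    rw [Nat.count_succ, Nat.count_succ, Nat.count_succ, ih (fun k hk => h k (by omega)) (fun k hk => h' k (by omega))]
    have h1 := h n (by omega)
    have h2 := h' n (by omega)
    by_cases hp : P n <;> by_cases hq : Q n <;> simp [h1, hp, hq] at * <;> omega

lemma cnt_zero {P : ℕ → Prop} [DecidablePred P] {N : ℕ} (h : ∀ k < N, ¬ P k) : count P N = 0 :=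
  Nat.count_iff_forall_not.2 (fun {_} hm hp => h _ hm hp)

lemma cnt_pos {P : ℕ → Prop} [DecidablePred P] {N : ℕ} : 0 < count P N ↔ ∃ k < N, P k := by
  constructor
  · intro h
    by_contra hh
    push Not at hh
    rw [cnt_zero hh] at h; omega
  · rintro ⟨k, hk, hp⟩
    have h1 : count P (k+1) ≤ count P N := Nat.count_monotone P hk
    rw [Nat.count_succ, if_pos hp] at h1; omega

lemma cnt_lt {N n : ℕ} (h : n ≤ N) : count (fun k => k < n) N = n := by
  rw [Nat.count_eq_card_filter_range]
  have : (Finset.range N).filter (fun k => k < n) = Finset.range n := by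
    ext k; simp; omega
  rw [this]; simp

lemma cnt_seg {P : ℕ → Prop} [DecidablePred P] {N : ℕ} (h : ∀ k k', k < k' → k' < N → P k' → P k) :
    ∀ k < N, (P k ↔ k < count P N) := by
  intro k hk
  constructor
  · intro hp
    have h1 : count P (k+1) = k + 1 := by
      apply Nat.count_iff_forall.2
      intro n' hn'
      rcases Nat.lt_or_ge n' k with h2 | h2
      · exact h n' k h2 hk hp
      · have : n' = k := by omega
        rw [this]; exact hp
    have h2 : count P (k+1) ≤ count P N := Nat.count_monotone P hk
    omega
  · intro hlt
    by_contra hp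
    have h1 : count P N = count (fun j => P j ∧ j < k) N := by
      apply cnt_congr
      intro j hj
      constructor
      · intro hpj
        refine ⟨hpj, ?_⟩
        by_contra hjk
        rcases Nat.lt_or_ge k j with h2 | h2
        · exact hp (h k j h2 hj hpj)
        · have : j = k := by omega
          rw [this] at hpj; exact hp hpj
      · exact fun h => h.1
    have h2 : count (fun j => P j ∧ j < k) N ≤ count (fun j => j < k) N := cnt_le (fun j _ h => h.2)
    rw [cnt_lt hk.le] at h2
    omega

/-- row index of position `k` -/
def rho (s : ℕ → Bool) (k : ℕ) : ℕ := count (fun j => s j = true) k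

lemma rho_zero {s : ℕ → Bool} : rho s 0 = 0 := by simp [rho]
lemma rho_succ {s : ℕ → Bool} (k : ℕ) : rho s (k+1) = rho s k + if s k = true then 1 else 0 := Nat.count_succ _ _
lemma rho_mono {s : ℕ → Bool} {k k' : ℕ} (h : k ≤ k') : rho s k ≤ rho s k' := Nat.count_monotone _ h

def rowlen (N : ℕ) (s : ℕ → Bool) (i : ℕ) : ℕ := count (fun k => rho s k = i) N
def start (N : ℕ) (s : ℕ → Bool) (i : ℕ) : ℕ := count (fun k => rho s k < i) N
def nrow (N : ℕ) (s : ℕ → Bool) : ℕ := rho s (N-1) + 1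

lemma start_iff {N : ℕ} {s : ℕ → Bool} {i k : ℕ} (hk : k < N) : rho s k < i ↔ k < start N s i :=
  cnt_seg (P := fun k => rho s k < i) (fun k k' h _ h2 => lt_of_le_of_lt (rho_mono h.le) h2) k hk

lemma start_succ {N : ℕ} {s : ℕ → Bool} {i : ℕ} : start N s (i+1) = start N s i + rowlen N s i := by
  unfold start rowlen
  apply cnt_or <;> intro k _ <;> omega

lemma start_le {N : ℕ} {s : ℕ → Bool} {i : ℕ} : start N s i ≤ N := Nat.count_le _

lemma row_lt {N : ℕ} {s : ℕ → Bool} {k : ℕ} (hk : k < N) : rho s k < nrow N s := by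
  have := @rho_mono s k (N-1) (by omega)
  unfold nrow; omega

/-- boundary between rows `i` and `i+1` -/
lemma boundary {N : ℕ} {s : ℕ → Bool} {i : ℕ} (hi : i + 1 < nrow N s) :
    ∃ k, k + 1 < N ∧ rho s k = i ∧ s k = true ∧ rho s (k+1) = i + 1 := by
  unfold nrow at hi
  have hN : 0 < N := by
    by_contra h
    have : N = 0 := by omega
    subst this
    rw [rho_zero] at hi; omega
  have h1 : start N s (i+1) ≤ N - 1 := by
    by_contra hh
    have := (@start_iff N s (i+1) (N-1) (by omega)).2 (by omega)
    omega
  have h2 : 0 < start N s (i+1) := by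
    have := (@start_iff N s (i+1) 0 hN).1 (by rw [rho_zero]; omega)
    omega
  have h3 := (@start_iff N s (i+1) (start N s (i+1) - 1) (by omega)).2 (by omega)
  have h4 := (not_congr (@start_iff N s (i+1) (start N s (i+1)) (by omega))).2 (by omega)
  have h5 := @rho_succ s (start N s (i+1) - 1)
  rw [show start N s (i+1) - 1 + 1 = start N s (i+1) by omega] at h5
  refine ⟨start N s (i+1) - 1, by omega, ?_, ?_, ?_⟩
  · split_ifs at h5 <;> omega
  · by_contra hh; rw [if_neg hh] at h5; omega
  · rw [show start N s (i+1) - 1 + 1 = start N s (i+1) by omega]; split_ifs at h5 <;> omega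

/-- Ballot words with prescribed ascent pattern and content -/
def Bal (N : ℕ) (s : ℕ → Bool) (cont : ℕ → ℕ) : Set (ℕ → ℕ) :=
  {y | (∀ k, N ≤ k → y k = 0) ∧ (∀ k < N, 1 ≤ y k) ∧
    (∀ n ≤ N, ∀ v, count (fun k => y k = v + 2) n ≤ count (fun k => y k = v + 1) n) ∧
    (∀ v, count (fun k => y k = v + 1) N = cont v) ∧
    ∀ k, k + 1 < N → (y k < y (k+1) ↔ s k = true)}

/-- letters of a ballot word are bounded by the position -/
lemma ballot_bd {N : ℕ} {y : ℕ → ℕ}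
    (hb : ∀ n ≤ N, ∀ v, count (fun k => y k = v + 2) n ≤ count (fun k => y k = v + 1) n) :
    ∀ k < N, y k ≤ k + 1 := by
  intro k
  induction k using Nat.strong_induction_on with
  | _ k ih =>
  intro hk
  by_contra hh
  have h1 := hb (k+1) hk (y k - 2)
  have h2 : 0 < count (fun j => y j = y k - 2 + 2) (k+1) := cnt_pos.2 ⟨k, by omega, by omega⟩
  have h3 : 0 < count (fun j => y j = y k - 2 + 1) (k+1) := by omega
  obtain ⟨j, hj, hj2⟩ := cnt_pos.1 h3
  rcases Nat.lt_or_ge j k with h | h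
  · have := ih j h (by omega); omega
  · have : j = k := by omega
    subst this; omega

def Rel (B N : ℕ) (s : ℕ → Bool) (y : ℕ → ℕ) (a : Mx) : Prop :=
  (∀ i t, B < t → a i t = 0) ∧ ∀ i t, t ≤ B → a i t = count (fun k => rho s k = i ∧ y k = B + 1 - t) N

lemma Rel_ColS {B N : ℕ} {s : ℕ → Bool} {y : ℕ → ℕ} {a : Mx} (h : Rel B N s y a) {t : ℕ} (ht : t ≤ B) (n : ℕ) :
    ColS n a t = count (fun k => rho s k < n ∧ y k = B + 1 - t) N := by
  unfold ColS
  induction n with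
  | zero => simp
  | succ n ih =>
    rw [Finset.sum_range_succ, ih, h.2 n t ht]
    symm
    apply cnt_or <;> intro k _ <;> omega

lemma Rel_cum {B N : ℕ} {s : ℕ → Bool} {y : ℕ → ℕ} {a : Mx} (h : Rel B N s y a) (hy : ∀ k < N, y k ≤ B + 1)
    (i : ℕ) {t : ℕ} (ht : t ≤ B + 1) :
    ∑ x ∈ Finset.range t, a i x = count (fun k => rho s k = i ∧ B + 2 ≤ y k + t) N := by
  induction t with
  | zero => simp; symm; exact cnt_zero (fun k hk h => by have := hy k hk; omega)
  | succ t ih =>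
    rw [Finset.sum_range_succ, ih (by omega), h.2 i t (by omega)]
    symm
    apply cnt_or <;> intro k _ <;> omega

lemma Rel_S {B N : ℕ} {s : ℕ → Bool} {y : ℕ → ℕ} {a : Mx} (h : Rel B N s y a) (hy : ∀ k < N, y k ≤ B + 1)
    (hy1 : ∀ k < N, 1 ≤ y k) (i : ℕ) : S B (a i) = rowlen N s i := by
  unfold S rowlen
  rw [Rel_cum h hy i le_rfl]
  apply cnt_congr
  intro k hk
  have := hy1 k hk
  omega

lemma Bal_desc {N : ℕ} {s : ℕ → Bool} {cont y : ℕ → ℕ} (h : y ∈ Bal N s cont) {k k' : ℕ} (hkk : k ≤ k')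
    (hk : k' < N) (hr : rho s k = rho s k') : y k' ≤ y k := by
  obtain ⟨_, _, _, _, h5⟩ := h
  induction k', hkk using Nat.le_induction with
  | base => exact le_rfl
  | succ n hn ih =>
    have h1 := @rho_mono s k n hn
    have h2 := @rho_succ s n
    have h3 := ih (by omega) (by omega)
    have h4 : ¬ s n = true := by intro hh; rw [if_pos hh] at h2; omega
    have := (not_congr (h5 n (by omega))).2 h4
    omega

/-- the segment of positions before the value `v` ends in row `i` -/
lemma Bal_seg {N : ℕ} {s : ℕ → Bool} {cont y : ℕ → ℕ} (h : y ∈ Bal N s cont) (i v : ℕ) :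
    ∀ k < N, ((rho s k < i ∨ (rho s k = i ∧ v ≤ y k)) ↔ k < count (fun k => rho s k < i ∨ (rho s k = i ∧ v ≤ y k)) N) := by
  apply cnt_seg
  intro k k' h1 h2 h3
  have := @rho_mono s k k' h1.le
  by_cases h4 : rho s k = rho s k'
  · have := Bal_desc h h1.le h2 h4
    omega
  · omega

lemma Bal_bd {N : ℕ} {s : ℕ → Bool} {cont y : ℕ → ℕ} (h : y ∈ Bal N s cont) : ∀ k < N, y k ≤ N + 1 := by
  intro k hk
  have := ballot_bd h.2.2.1 k hk
  omega

lemma Bal_to_W {N : ℕ} {s : ℕ → Bool} {cont : ℕ → ℕ} :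
    Inj (Bal N s cont) (W N (nrow N s) (Q0 N (nrow N s) (fun t => cont (N - t))) (rowlen N s)) := by
  refine Inj.of_rel (Rel N N s) ?_ ?_
  · intro y hy
    have hR : Rel N N s y (fun i t => if t ≤ N then count (fun k => rho s k = i ∧ y k = N + 1 - t) N else 0) :=
      ⟨fun i t ht => if_neg (by omega), fun i t ht => if_pos ht⟩
    set a : Mx := fun i t => if t ≤ N then count (fun k => rho s k = i ∧ y k = N + 1 - t) N else 0
    refine ⟨a, ⟨⟨?_, ?_, ?_⟩, ?_, ?_⟩, hR⟩
    · intro i t hit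
      by_cases ht : t ≤ N
      · rw [hR.2 i t ht]
        apply cnt_zero
        intro k hk hh
        have := row_lt (s := s) hk
        omega
      · exact hR.1 i t (by omega)
    · intro t ht
      show _ = cont (N - t)
      rw [Rel_ColS hR ht, ← hy.2.2.2.1]
      apply cnt_congr
      intro k hk
      have := row_lt (s := s) hk
      omega
    · intro i t ht
      rw [Rel_ColS hR (by omega), Rel_ColS hR ht]
      have hseg := Bal_seg hy i (N + 1 - t)
      set n := count (fun k => rho s k < i ∨ (rho s k = i ∧ N + 1 - t ≤ y k)) N
      have hn : n ≤ N := Nat.count_le _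
      have key := hy.2.2.1 n hn (N - 1 - t)
      have cut : ∀ (v : ℕ), count (fun k => y k = v) n = count (fun k => k < n ∧ y k = v) N := by
        intro v
        rw [Nat.count_eq_card_filter_range, Nat.count_eq_card_filter_range]
        congr 1
        ext k; simp; omega
      rw [cut, cut] at key
      refine le_trans (le_of_eq (cnt_congr ?_)) (key.trans (le_of_eq (cnt_congr ?_)))
      · intro k hk
        have := hseg k hk
        rw [← this]; omega
      · intro k hk
        have := hseg k hk
        rw [← this]; omega
    · intro i _; exact Rel_S hR (Bal_bd hy) hy.2.1 i
    · intro i hi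
      obtain ⟨k, hk, hk1, hk2, hk3⟩ := boundary hi
      have hlt := (hy.2.2.2.2 k hk).2 hk2
      have b1 := Bal_bd hy k (by omega)
      have b2 := Bal_bd hy (k+1) (by omega)
      have b3 := hy.2.1 k (by omega)
      unfold m
      rw [one_le_mm_iff]
      refine ⟨N + 1 - y (k+1), N + 1 - y k, by omega, by omega, ?_, ?_⟩
      · rw [hR.2 _ _ (by omega)]
        exact cnt_pos.2 ⟨k+1, hk, hk3, by omega⟩
      · rw [hR.2 _ _ (by omega)]
        exact cnt_pos.2 ⟨k, by omega, hk1, by omega⟩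
  · intro y hy y' hy' a h h'
    funext k
    by_cases hk : k < N
    swap
    · rw [hy.1 k (by omega), hy'.1 k (by omega)]
    have key : ∀ v, 1 ≤ v → v ≤ N + 1 → (v ≤ y k ↔ v ≤ y' k) := by
      intro v hv1 hv2
      have e : ∀ y, y ∈ Bal N s cont → Rel N N s y a →
          (v ≤ y k ↔ k < start N s (rho s k) + ∑ x ∈ Finset.range (N + 2 - v), a (rho s k) x) := by
        intro y hy h
        have h1 := Bal_seg hy (rho s k) v k hk
        rw [Rel_cum h (Bal_bd hy) _ (by omega)]
        have h2 : count (fun k_1 => rho s k_1 < rho s k ∨ (rho s k_1 = rho s k ∧ v ≤ y k_1)) N =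
            start N s (rho s k) + count (fun j => rho s j = rho s k ∧ N + 2 ≤ y j + (N + 2 - v)) N := by
          unfold start
          apply cnt_or <;> intro j _ <;> omega
        rw [h2] at h1
        rw [← h1]; simp
      rw [e y hy h, e y' hy' h']
    have b1 := Bal_bd hy k hk
    have b2 := Bal_bd hy' k hk
    have b3 := hy.2.1 k hk
    have b4 := hy'.2.1 k hk
    have k1 := key (y k) b3 b1
    have k2 := key (y' k) b4 b2
    omega

end RB

namespace RB

open Nat (count)

lemma cut_cnt {N n : ℕ} {P : ℕ → Prop} [DecidablePred P] (hn : n ≤ N) : count P n = count (fun k => k < n ∧ P k) N := by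
  rw [Nat.count_eq_card_filter_range, Nat.count_eq_card_filter_range]
  congr 1
  ext k; simp; omega

lemma W_to_Bal {N : ℕ} {s : ℕ → Bool} {cont : ℕ → ℕ} (hN : 1 ≤ N) (hc : ∀ v, N < v → cont v = 0) :
    Inj (W N (nrow N s) (Q0 N (nrow N s) (fun t => cont (N - t))) (rowlen N s)) (Bal N s cont) := by
  refine Inj.of_rel (fun a y => Rel N N s y a) ?_ ?_
  swap
  · intro a _ a' _ y h h'
    funext i t
    by_cases ht : t ≤ N
    · rw [h.2 i t ht, h'.2 i t ht]
    · rw [h.1 i t (by omega), h'.1 i t (by omega)]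
  intro a ha
  obtain ⟨⟨hspt, hcol, hball⟩, hS, hm⟩ := ha
  set r := nrow N s with hr
  set T : ℕ → ℕ → ℕ := fun i t => start N s i + ∑ x ∈ Finset.range t, a i x with hT
  have Tmono : ∀ i t t', t ≤ t' → T i t ≤ T i t' := by
    intro i t t' h
    have : ∑ x ∈ Finset.range t, a i x ≤ ∑ x ∈ Finset.range t', a i x :=
      Finset.sum_le_sum_of_subset (by simpa using h)
    simp only [hT]; omega
  have Tend : ∀ i < r, T i (N+1) = start N s (i+1) := by
    intro i hi
    rw [start_succ, ← hS i hi]; rfl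
  set tau : ℕ → ℕ := fun k => count (fun t => T (rho s k) (t+1) ≤ k) N with htau
  have tauN : ∀ k, tau k ≤ N := fun k => Nat.count_le _
  have fact : ∀ k < N, ∀ t ≤ N + 1, (T (rho s k) t ≤ k ↔ t ≤ tau k) := by
    intro k hk t ht
    have hrk := row_lt (s := s) hk
    have hs1 := @start_iff N s (rho s k) k hk
    have hs2 := @start_iff N s (rho s k + 1) k hk
    rcases t with _ | t
    · simp only [hT, Finset.range_zero, Finset.sum_empty]; omega
    · rcases Nat.lt_or_ge t N with h | h
      · have := cnt_seg (P := fun t => T (rho s k) (t+1) ≤ k) (N := N) (fun t t' h1 _ h2 =>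
          (Tmono _ _ _ (by omega)).trans h2) t h
        rw [this]; exact Iff.rfl
      · have : t = N := by omega
        subst this
        have h2 := tauN k
        rw [Tend _ hrk]; omega
  set y : ℕ → ℕ := fun k => if k < N then N + 1 - tau k else 0 with hy
  have ydef : ∀ k < N, y k = N + 1 - tau k := fun k hk => if_pos hk
  have y1 : ∀ k < N, 1 ≤ y k := fun k hk => by rw [ydef k hk]; have := tauN k; omega
  have y2 : ∀ k < N, y k ≤ N + 1 := fun k hk => by rw [ydef k hk]; omega
  have yT : ∀ k < N, ∀ t ≤ N + 1, (k < T (rho s k) t ↔ N + 2 ≤ y k + t) := by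
    intro k hk t ht
    have h1 := fact k hk t ht
    have h2 := ydef k hk
    have h3 := tauN k
    omega
  have cum : ∀ i, ∀ t ≤ N + 1, ∑ x ∈ Finset.range t, a i x = count (fun k => rho s k = i ∧ N + 2 ≤ y k + t) N := by
    intro i t ht
    rcases Nat.lt_or_ge i r with hi | hi
    · have e1 : T i t ≤ start N s (i+1) := by rw [← Tend i hi]; exact Tmono _ _ _ ht
      have e0 := @start_le N s (i+1)
      have e2 : count (fun k => k < T i t) N = count (fun k => k < start N s i) N +
          count (fun k => rho s k = i ∧ N + 2 ≤ y k + t) N := by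
        have e4 : start N s i ≤ T i t := by simp only [hT]; omega
        apply cnt_or
        · intro k hk
          have h1 := @start_iff N s i k hk
          have h2 := @start_iff N s (i+1) k hk
          have h3 := yT k hk t ht
          by_cases hh : rho s k = i
          · rw [hh] at h3; omega
          · omega
        · intro k hk
          have h1 := @start_iff N s i k hk
          omega
      rw [cnt_lt (by omega), cnt_lt start_le] at e2
      simp only [hT] at e2
      omega
    · rw [cnt_zero]
      · apply Finset.sum_eq_zero
        intro x _
        exact hspt i x (by omega)
      · intro k hk h
        have := row_lt (s := s) hk
        omega
  have hR : Rel N N s y a := by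
    refine ⟨fun i t ht => hspt i t (by omega), fun i t ht => ?_⟩
    have h1 := cum i t (by omega)
    have h2 := cum i (t+1) (by omega)
    rw [Finset.sum_range_succ] at h2
    have h3 : count (fun k => rho s k = i ∧ N + 2 ≤ y k + (t+1)) N = count (fun k => rho s k = i ∧ N + 2 ≤ y k + t) N
      + count (fun k => rho s k = i ∧ y k = N + 1 - t) N := by
      apply cnt_or <;> intro k _ <;> omega
    omega
  have desc : ∀ k k', k ≤ k' → k' < N → rho s k = rho s k' → y k' ≤ y k := by
    intro k k' h1 h2 h3
    have h4 := (fact k (by omega) (tau k) (by have := tauN k; omega)).2 le_rfl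
    rw [h3] at h4
    have h5 := (fact k' h2 (tau k) (by have := tauN k; omega)).1 (by omega)
    rw [ydef k (by omega), ydef k' h2]
    omega
  refine ⟨y, ⟨fun k hk => if_neg (by omega), y1, ?_, ?_, ?_⟩, hR⟩
  · intro n hn v
    rcases Nat.eq_zero_or_pos n with h0 | h0
    · subst h0; simp
    rcases Nat.lt_or_ge v N with hv | hv
    swap
    · rw [cnt_zero]
      · omega
      · intro k hk h
        have := y2 k (by omega)
        omega
    have h1 := hball (rho s (n-1)) (N - 1 - v) (by omega)
    rw [Rel_ColS hR (by omega), Rel_ColS hR (by omega)] at h1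
    rw [cut_cnt hn, cut_cnt hn]
    refine le_trans (cnt_le ?_) (h1.trans (cnt_le ?_))
    · intro k hk hh
      have := @rho_mono s k (n-1) (by omega)
      omega
    · intro k hk hh
      have : ¬ n - 1 ≤ k := by
        intro h
        have := @rho_mono s (n-1) k h
        omega
      omega
  · intro v
    rcases Nat.lt_or_ge N v with hv | hv
    · rw [hc v hv, cnt_zero]
      intro k hk h
      have := y2 k hk
      omega
    · have h1 := hcol (N - v) (by omega)
      rw [Rel_ColS hR (by omega)] at h1
      simp only [show N - (N - v) = v by omega] at h1
      rw [← h1]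
      apply cnt_congr
      intro k hk
      have := row_lt (s := s) hk
      omega
  · intro k hk
    have h2 := @rho_succ s k
    constructor
    · intro h
      by_contra hs
      rw [if_neg hs] at h2
      have := desc k (k+1) (by omega) hk (by omega)
      omega
    · intro hs
      rw [if_pos hs] at h2
      have hrk := row_lt (s := s) hk
      have h3 := hm (rho s k) (by omega)
      unfold m at h3
      rw [one_le_mm_iff] at h3
      obtain ⟨u, t, h4, h5, h6, h7⟩ := h3
      rw [hR.2 _ _ (by omega)] at h6 h7
      obtain ⟨q, q1, q2, q3⟩ := cnt_pos.1 h6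
      obtain ⟨p, p1, p2, p3⟩ := cnt_pos.1 h7
      have a1 : p ≤ k := by
        by_contra h
        have := @rho_mono s (k+1) p (by omega)
        omega
      have a2 : k + 1 ≤ q := by
        by_contra h
        have := @rho_mono s q k (by omega)
        omega
      have := desc p k a1 (by omega) p2
      have := desc (k+1) q a2 q1 (by omega)
      omega

lemma Bal_inj {N : ℕ} {s s' : ℕ → Bool} {cont : ℕ → ℕ} (hN : 1 ≤ N) (hr : nrow N s = nrow N s')
    (h : InjAll (nrow N s) (rowlen N s) (rowlen N s')) : Inj (Bal N s cont) (Bal N s' cont) := by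
  by_cases hc : ∀ v, N < v → cont v = 0
  · have h1 := h N (Q0 N (nrow N s) (fun t => cont (N - t))) (Clo_Q0 _ _ _) (fun a ha => ha.1)
    refine Bal_to_W.trans (h1.trans ?_)
    rw [hr]
    exact W_to_Bal hN hc
  · push Not at hc
    obtain ⟨v, hv, hv2⟩ := hc
    refine ⟨id, ?_, fun _ _ _ _ h => h⟩
    intro y hy
    exfalso
    have h1 := hy.2.2.2.1 v
    obtain ⟨k, hk, hk2⟩ := cnt_pos.1 (show 0 < count (fun k => y k = v + 1) N by omega)
    have := Bal_bd hy k hk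
    omega

/-- every positive composition comes from a pattern -/
lemma exists_pattern {N r : ℕ} {β : ℕ → ℕ} (hr : 1 ≤ r) (hp : ∀ j < r, 1 ≤ β j)
    (hs : ∑ i ∈ Finset.range r, β i = N) :
    ∃ s : ℕ → Bool, nrow N s = r ∧ ∀ i < r, rowlen N s i = β i := by
  set b : ℕ → ℕ := fun j => ∑ i ∈ Finset.range j, β i with hb
  have bm : ∀ j j', j ≤ j' → b j ≤ b j' := fun j j' h =>
    Finset.sum_le_sum_of_subset (by simpa using h)
  have bs : ∀ j, b (j+1) = b j + β j := fun j => Finset.sum_range_succ _ _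
  have bstrict : ∀ j < r, b j < b (j+1) := fun j hj => by have := hp j hj; have := bs j; omega
  have bN : b r = N := hs
  have b0 : b 0 = 0 := rfl
  set s : ℕ → Bool := fun k => decide (∃ j < r - 1, b (j+1) = k + 1) with hsd
  have inj : ∀ j j', j < r → j' < r → b (j+1) = b (j'+1) → j = j' := by
    intro j j' hj hj' h
    rcases lt_trichotomy j j' with h1 | h1 | h1
    · have := bm (j+1) j' h1
      have := bstrict j' hj'; omega
    · exact h1
    · have := bm (j'+1) j h1
      have := bstrict j hj; omega
  have hrho : ∀ k, rho s k = count (fun j => b (j+1) ≤ k) (r-1) := by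
    intro k
    induction k with
    | zero =>
      rw [rho_zero, cnt_zero]
      intro j hj h
      have := bstrict j (by omega); omega
    | succ k ih =>
      rw [rho_succ, ih]
      have e : count (fun j => b (j+1) ≤ k+1) (r-1) = count (fun j => b (j+1) ≤ k) (r-1) +
          count (fun j => b (j+1) = k+1) (r-1) := by
        apply cnt_or <;> intro j _ <;> omega
      rw [e]
      congr 1
      split_ifs with h
      · simp only [hsd, decide_eq_true_eq] at h
        obtain ⟨j, hj, hj2⟩ := h
        have : count (fun j' => b (j'+1) = k+1) (r-1) = count (fun j' => j' = j) (r-1) := by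
          apply cnt_congr
          intro j' hj'
          constructor
          · intro h; exact inj _ _ (by omega) (by omega) (by omega)
          · intro h; rw [h]; exact hj2
        rw [this, Nat.count_eq_card_filter_range]
        have e2 : (Finset.range (r-1)).filter (fun j' => j' = j) = {j} := by
          ext x; simp only [Finset.mem_filter, Finset.mem_range, Finset.mem_singleton]; omega
        rw [e2]; simp
      · symm; apply cnt_zero
        intro j hj hh
        apply h
        simp only [hsd, decide_eq_true_eq]
        exact ⟨j, hj, hh⟩
  have hN : 1 ≤ N := by
    have := bstrict 0 (by omega)
    have := bm (0+1) r hr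
    omega
  -- rho k = i iff b i ≤ k < b (i+1)
  have key : ∀ k < N, ∀ i < r, (i ≤ rho s k ↔ b i ≤ k) := by
    intro k hk i hi
    rcases i with _ | i
    · simp [b0]
    · rw [hrho]
      have := cnt_seg (P := fun j => b (j+1) ≤ k) (N := r-1) (fun j j' h1 _ h2 => (bm _ _ (by omega)).trans h2) i (by omega)
      rw [this]; exact Iff.rfl
  have rlt : ∀ k, rho s k < r := by
    intro k
    rw [hrho]
    have : count (fun j => b (j+1) ≤ k) (r-1) ≤ r - 1 := Nat.count_le _
    omega
  refine ⟨s, ?_, ?_⟩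
  · have h1 := (key (N-1) (by omega) (r-1) (by omega)).2 (by
      have := bstrict (r-1) (by omega)
      rw [show r - 1 + 1 = r by omega] at this
      omega)
    have := rlt (N-1)
    unfold nrow; omega
  · intro i hi
    unfold rowlen
    have h1 : count (fun k => k < b (i+1)) N = count (fun k => k < b i) N + count (fun k => rho s k = i) N := by
      have := bstrict i hi
      apply cnt_or
      · intro k hk
        have k1 := key k hk i hi
        rcases Nat.lt_or_ge (i+1) r with h | h
        · have k2 := key k hk (i+1) h
          omega
        · have : i + 1 = r := by omega
          have := rlt k
          rw [‹i + 1 = r›, bN]; omega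
      · intro k hk
        have k1 := key k hk i hi
        omega
    rw [cnt_lt (bN ▸ bm _ _ hi), cnt_lt (bN ▸ bm _ _ hi.le), bs] at h1
    omega

end RB

namespace RB

open Nat (count)

def tr (N : ℕ) (y : ℕ → ℕ) (k : ℕ) : ℕ := if k < N then count (fun j => y j = y k) (k+1) else 0

def cmp (s : ℕ → Bool) (k : ℕ) : Bool := !(s k)

lemma cmp_cmp (s : ℕ → Bool) : cmp (cmp s) = s := by funext k; simp [cmp]

def contT (N : ℕ) (cont : ℕ → ℕ) (v : ℕ) : ℕ := count (fun u => v + 1 ≤ cont u) N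

lemma cnt_single {N w : ℕ} (h : w < N) : count (fun k => k = w) N = 1 := by
  rw [Nat.count_eq_card_filter_range]
  have e2 : (Finset.range N).filter (fun j' => j' = w) = {w} := by
    ext x; simp only [Finset.mem_filter, Finset.mem_range, Finset.mem_singleton]; omega
  rw [e2]; simp

lemma tr_count {N : ℕ} {y : ℕ → ℕ} (h1 : ∀ k < N, 1 ≤ y k) (h2 : ∀ k < N, y k ≤ N) (v : ℕ) :
    ∀ n ≤ N, count (fun k => tr N y k = v + 1) n = count (fun u => v + 1 ≤ count (fun k => y k = u + 1) n) N := by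
  intro n
  induction n with
  | zero => intro _; simp
  | succ n ih =>
    intro hn
    rw [Nat.count_succ, ih (by omega)]
    have a1 := h1 n (by omega)
    have a2 := h2 n (by omega)
    have htr : tr N y n = count (fun k => y k = y n) n + 1 := by
      unfold tr; rw [if_pos (by omega), Nat.count_succ, if_pos rfl]
    have step : ∀ u, count (fun k => y k = u + 1) (n+1) = count (fun k => y k = u + 1) n + if u = y n - 1 then 1 else 0 := by
      intro u
      rw [Nat.count_succ]
      congr 1
      split_ifs <;> omega
    have hw : count (fun k => y k = y n - 1 + 1) n = count (fun k => y k = y n) n := by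
      rw [show y n - 1 + 1 = y n by omega]
    by_cases hv : tr N y n = v + 1
    · rw [if_pos hv]
      have e1 := cnt_single (show y n - 1 < N by omega)
      have e2 : count (fun u => v + 1 ≤ count (fun k => y k = u + 1) (n+1)) N =
          count (fun u => v + 1 ≤ count (fun k => y k = u + 1) n) N + count (fun k => k = y n - 1) N := by
       apply cnt_or
       · intro u hu
         rw [step]
         by_cases hu2 : u = y n - 1
         · rw [hu2, hw]; simp; omega
         · simp [hu2]
       · rintro u hu ⟨p, rfl⟩
         rw [hw] at p
         omega
      rw [e2, e1]
    · rw [if_neg hv, add_zero]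
      apply cnt_congr
      intro u hu
      rw [step]
      by_cases hu2 : u = y n - 1
      · rw [hu2, hw]; simp; omega
      · simp [hu2]

lemma Bal_bd2 {N : ℕ} {s : ℕ → Bool} {cont y : ℕ → ℕ} (h : y ∈ Bal N s cont) : ∀ k < N, y k ≤ N := by
  intro k hk
  have := ballot_bd h.2.2.1 k hk
  omega

lemma Bal_anti {N : ℕ} {s : ℕ → Bool} {cont y : ℕ → ℕ} (h : y ∈ Bal N s cont) {n : ℕ} (hn : n ≤ N) {u v : ℕ}
    (hu : 1 ≤ u) (huv : u ≤ v) : count (fun k => y k = v) n ≤ count (fun k => y k = u) n := by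
  induction v, huv using Nat.le_induction with
  | base => exact le_rfl
  | succ v hv ih =>
    have := h.2.2.1 n hn (v - 1)
    rw [show v - 1 + 2 = v + 1 by omega, show v - 1 + 1 = v by omega] at this
    omega

lemma Bal_tr {N : ℕ} {s : ℕ → Bool} {cont y : ℕ → ℕ} (h : y ∈ Bal N s cont) :
    tr N y ∈ Bal N (cmp s) (contT N cont) := by
  have hc := tr_count h.2.1 (Bal_bd2 h)
  refine ⟨fun k hk => if_neg (by omega), ?_, ?_, ?_, ?_⟩
  · intro k hk
    unfold tr; rw [if_pos hk, Nat.count_succ, if_pos rfl]; omega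
  · intro n hn v
    rw [hc _ n hn, hc _ n hn]
    apply cnt_le
    intro u _; omega
  · intro v
    rw [hc _ N le_rfl]
    unfold contT
    apply cnt_congr
    intro u _
    rw [h.2.2.2.1]
  · intro k hk
    have h5 := h.2.2.2.2 k hk
    have t1 : tr N y k = count (fun j => y j = y k) (k+1) := if_pos (by omega)
    have t2 : tr N y (k+1) = count (fun j => y j = y (k+1)) (k+1) + 1 := by
      unfold tr; rw [if_pos hk, Nat.count_succ, if_pos rfl]
    have a1 := h.2.1 k (by omega)
    have a2 := h.2.1 (k+1) (by omega)
    rw [t1, t2]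
    by_cases hs : s k = true
    · have hlt := h5.2 hs
      have h6 := Bal_anti h (n := k+2) (by omega) a1 hlt.le
      rw [Nat.count_succ, if_pos rfl, Nat.count_succ (fun j => y j = y k) (k+1), if_neg (by omega)] at h6
      simp [cmp, hs]; omega
    · have hle : y (k+1) ≤ y k := by
        by_contra hh; exact hs (h5.1 (by omega))
      have h6 := Bal_anti h (n := k+1) (by omega) a2 hle
      simp [cmp, hs]; omega

lemma tr_tr {N : ℕ} {s : ℕ → Bool} {cont y : ℕ → ℕ} (h : y ∈ Bal N s cont) : tr N (tr N y) = y := by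
  funext k
  by_cases hk : k < N
  swap
  · rw [h.1 k (by omega)]; exact if_neg hk
  have hc := tr_count h.2.1 (Bal_bd2 h)
  have a1 := h.2.1 k hk
  have a2 := Bal_bd2 h k hk
  have t1 : tr N y k = count (fun j => y j = y k) k + 1 := by
    unfold tr; rw [if_pos hk, Nat.count_succ, if_pos rfl]
  have t3 : count (fun j => y j = y k) (k+1) = count (fun j => y j = y k) k + 1 := by
    rw [Nat.count_succ, if_pos rfl]
  have t2 : tr N (tr N y) k = count (fun j => tr N y j = tr N y k) (k+1) := if_pos hk
  rw [t2, t1, hc _ (k+1) hk]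
  have : count (fun u => count (fun j => y j = y k) k + 1 ≤ count (fun k => y k = u + 1) (k+1)) N = count (fun u => u < y k) N := by
    apply cnt_congr
    intro u hu
    constructor
    · intro h1
      by_contra h2
      have h3 := Bal_anti h (n := k) hk.le (u := y k) (v := u + 1) a1 (by omega)
      rw [Nat.count_succ, if_neg (by omega)] at h1
      omega
    · intro h1
      have h3 := Bal_anti h (n := k+1) hk (u := u + 1) (v := y k) (by omega) (by omega)
      omega
  rw [this, cnt_lt a2]

lemma contTT {N : ℕ} {s : ℕ → Bool} {cont y : ℕ → ℕ} (h : y ∈ Bal N s cont) : contT N (contT N cont) = cont := by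
  have h1 := Bal_tr (Bal_tr h)
  rw [tr_tr h] at h1
  funext v
  rw [← h1.2.2.2.1, h.2.2.2.1]

lemma tr_Inj {N : ℕ} {s : ℕ → Bool} {cont : ℕ → ℕ} : Inj (Bal N s cont) (Bal N (cmp s) (contT N cont)) := by
  refine ⟨tr N, fun y hy => Bal_tr hy, ?_⟩
  intro y hy y' hy' h
  rw [← tr_tr hy, ← tr_tr hy', h]

lemma Bal_cmp {N : ℕ} {s s' : ℕ → Bool} (h : ∀ cont, Inj (Bal N (cmp s) cont) (Bal N (cmp s') cont)) (cont : ℕ → ℕ) :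
    Inj (Bal N s cont) (Bal N s' cont) := by
  by_cases hne : (Bal N s cont).Nonempty
  · obtain ⟨y, hy⟩ := hne
    refine tr_Inj.trans ((h _).trans ?_)
    have := @tr_Inj N (cmp s') (contT N cont)
    rw [cmp_cmp, contTT hy] at this
    exact this
  · refine ⟨id, ?_, fun _ _ _ _ h => h⟩
    intro y hy
    exact absurd ⟨y, hy⟩ hne

end RB

namespace RB

open Nat (count)

lemma rho_cmp (s : ℕ → Bool) (k : ℕ) : rho s k + rho (cmp s) k = k := by
  induction k with
  | zero => simp [rho_zero]
  | succ k ih =>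
    rw [rho_succ, rho_succ]
    by_cases h : s k = true <;> simp [cmp, h] <;> omega

lemma start_sum {N : ℕ} {s : ℕ → Bool} (n : ℕ) : start N s n = ∑ i ∈ Finset.range n, rowlen N s i := by
  induction n with
  | zero => simp [start]
  | succ n ih => rw [start_succ, ih, Finset.sum_range_succ]

lemma start_nrow {N : ℕ} {s : ℕ → Bool} : start N s (nrow N s) = N := by
  unfold start
  apply Nat.count_iff_forall.2
  intro k hk; exact row_lt hk

lemma exists_row {N : ℕ} {s : ℕ → Bool} {i : ℕ} (hN : 1 ≤ N) (hi : i < nrow N s) : ∃ k < N, rho s k = i := by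
  rcases i with _ | i
  · exact ⟨0, hN, rho_zero⟩
  · obtain ⟨k, h1, _, _, h2⟩ := boundary hi
    exact ⟨k+1, h1, h2⟩

lemma rowlen_pos {N : ℕ} {s : ℕ → Bool} {i : ℕ} (hN : 1 ≤ N) (hi : i < nrow N s) : 1 ≤ rowlen N s i :=
  cnt_pos.2 (exists_row hN hi)

lemma row_mem {N : ℕ} {s : ℕ → Bool} {i k : ℕ} (hk : k < N) :
    rho s k = i ↔ start N s i ≤ k ∧ k < start N s i + rowlen N s i := by
  rw [← start_succ]
  have h1 := @start_iff N s i k hk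
  have h2 := @start_iff N s (i+1) k hk
  omega

lemma nrow_cmp {N : ℕ} {s : ℕ → Bool} (hN : 1 ≤ N) : nrow N s + nrow N (cmp s) = N + 1 := by
  unfold nrow
  have := rho_cmp s (N-1)
  omega

def REq (N : ℕ) (s : ℕ → Bool) : Prop := ∀ i < nrow N s, ∀ j < nrow N s, rowlen N s i ≤ rowlen N s j + 1

/-- interior rows of length at least two force columns of length at most two -/
lemma cols_le_two {N : ℕ} {s : ℕ → Bool} (hN : 1 ≤ N)
    (h : ∀ i, 0 < i → i + 1 < nrow N s → 2 ≤ rowlen N s i) : REq N (cmp s) := by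
  intro i hi j hj
  have h1 := rowlen_pos hN hj
  suffices rowlen N (cmp s) i ≤ 2 by omega
  by_contra hh
  set k := start N (cmp s) i with hk
  have hle : k + 3 ≤ N := by
    have := @start_le N (cmp s) (i+1)
    rw [start_succ] at this; omega
  have m0 := (@row_mem N (cmp s) i k (by omega)).2 (by omega)
  have m1 := (@row_mem N (cmp s) i (k+1) (by omega)).2 (by omega)
  have m2 := (@row_mem N (cmp s) i (k+2) (by omega)).2 (by omega)
  have c0 := rho_cmp s k
  have c1 := rho_cmp s (k+1)
  have c2 := rho_cmp s (k+2)
  have r2 := @row_lt N s (k+2) (by omega)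
  have h3 := h (rho s (k+1)) (by omega) (by omega)
  have h4 : rowlen N s (rho s (k+1)) = count (fun j => j = k + 1) N := by
    unfold rowlen
    apply cnt_congr
    intro j hj
    constructor
    · intro e
      by_contra hne
      rcases Nat.lt_or_ge j (k+1) with h5 | h5
      · have := @rho_mono s j k (by omega); omega
      · have := @rho_mono s (k+2) j (by omega); omega
    · rintro rfl; rfl
  rw [cnt_single (by omega)] at h4
  omega

lemma InjAll_congr {r : ℕ} {α β β' : ℕ → ℕ} (h : InjAll r α β) (hb : ∀ i < r, β' i = β i) : InjAll r α β' := by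
  intro B Q hQ hs
  have := h B Q hQ hs
  refine this.trans ⟨id, ?_, fun _ _ _ _ h => h⟩
  rintro a ⟨h1, h2, h3⟩
  exact ⟨h1, fun i hi => by rw [hb i hi]; exact h2 i hi, h3⟩

lemma row_balance {N : ℕ} (hN : 1 ≤ N) (s : ℕ → Bool) :
    ∃ s', nrow N s' = nrow N s ∧ REq N s' ∧ ∀ cont, Inj (Bal N s cont) (Bal N s' cont) := by
  obtain ⟨β, h1, h2, h3, h4⟩ := balance (nrow N s) (rowlen N s) (fun j hj => rowlen_pos hN hj)
  rw [← start_sum, start_nrow] at h3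
  obtain ⟨s', e1, e2⟩ := exists_pattern (by unfold nrow; omega) h2 h3
  refine ⟨s', e1, ?_, fun cont => Bal_inj hN e1.symm (InjAll_congr h4 e2)⟩
  intro i hi j hj
  rw [e1] at hi hj
  rw [e2 i hi, e2 j hj]
  exact h1 i hi j hj

lemma REq_ge_two {N : ℕ} {s : ℕ → Bool} (h : REq N s) (h2 : 2 * nrow N s ≤ N) : ∀ i < nrow N s, 2 ≤ rowlen N s i := by
  intro i hi
  by_contra hh
  have h3 : ∑ j ∈ Finset.range (nrow N s), rowlen N s j < ∑ j ∈ Finset.range (nrow N s), 2 := by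
    apply Finset.sum_lt_sum
    · intro j hj
      have := h j (by simpa using hj) i hi
      omega
    · exact ⟨i, by simpa using hi, by omega⟩
  rw [← start_sum, start_nrow] at h3
  simp at h3
  omega

def Good (N : ℕ) (s s' : ℕ → Bool) : Prop :=
  nrow N s' = nrow N s ∧ REq N s' ∧ REq N (cmp s') ∧ ∀ cont, Inj (Bal N s cont) (Bal N s' cont)

lemma T1_wide {N : ℕ} (hN : 1 ≤ N) (s : ℕ → Bool) (h : 2 * nrow N s ≤ N) : ∃ s', Good N s s' := by
  obtain ⟨s', h1, h2, h3⟩ := row_balance hN s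
  refine ⟨s', h1, h2, ?_, h3⟩
  have := REq_ge_two h2 (by omega)
  exact cols_le_two hN (fun i _ hi => this i (by omega))

lemma Good_cmp {N : ℕ} (hN : 1 ≤ N) {s s' : ℕ → Bool} (h : Good N (cmp s) s') : Good N s (cmp s') := by
  obtain ⟨h1, h2, h3, h4⟩ := h
  have a1 := @nrow_cmp N s hN
  have a2 := @nrow_cmp N s' hN
  refine ⟨by omega, h3, by rw [cmp_cmp]; exact h2, Bal_cmp (by rw [cmp_cmp]; exact h4)⟩

lemma Good_trans {N : ℕ} {s s' s'' : ℕ → Bool} (h0 : nrow N s' = nrow N s) (h : ∀ cont, Inj (Bal N s cont) (Bal N s' cont))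
    (h' : Good N s' s'') : Good N s s'' := by
  obtain ⟨h1, h2, h3, h4⟩ := h'
  exact ⟨by omega, h2, h3, fun cont => (h cont).trans (h4 cont)⟩

/-- the critical case: one row of length one in the middle -/
lemma T1_mid {N r x : ℕ} (s : ℕ → Bool) (hN : N + 1 = 2 * r) (hr : nrow N s = r) (hx0 : 0 < x) (hx : x + 1 < r)
    (h1 : rowlen N s x = 1) (h2 : ∀ i < r, i ≠ x → rowlen N s i = 2) : ∃ s', Good N s s' := by
  have hst : ∀ i ≤ r, start N s i = if i ≤ x then 2 * i else 2 * i - 1 := by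
    intro i
    induction i with
    | zero => intro _; simp [start]
    | succ i ih =>
      intro hi
      rw [start_succ, ih (by omega)]
      by_cases he : i = x
      · subst he; rw [h1]; simp; omega
      · rw [h2 i (by omega) he]; split_ifs <;> omega
  have hcr : nrow N (cmp s) = r := by have := @nrow_cmp N s (by omega); omega
  set F : ℕ → ℕ := fun j => if j = 0 then 0 else if j ≤ x then 2 * j - 1 else if j < r then 2 * j else N with hF
  have hstc : ∀ j, start N (cmp s) j = F j := by
    intro j
    have hFN : F j ≤ N := by simp only [hF]; split_ifs <;> omega
    rw [← cnt_lt hFN]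
    unfold start
    apply cnt_congr
    intro k hk
    have e0 := rho_cmp s k
    have e1 := row_lt (s := s) hk
    have e2 := (@row_mem N s (rho s k) k hk).1 rfl
    rw [← start_succ, hst _ (by omega), hst _ (by omega)] at e2
    simp only [hF]
    split_ifs at e2 ⊢ <;> omega
  have hcl : ∀ j, rowlen N (cmp s) j + F j = F (j+1) := by
    intro j
    rw [← hstc, ← hstc, start_succ]; omega
  have hcl0 : rowlen N (cmp s) 0 = 1 := by
    have h3 := hcl 0
    have h4 : F 0 = 0 := if_pos rfl
    have h5 : F (0 + 1) = 1 := by simp only [hF]; split_ifs <;> omega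
    omega
  set α' : ℕ → ℕ := fun i => if i < r - 1 then 2 else 1 with hα
  have hsum : ∑ i ∈ Finset.range r, α' i = N := by
    have e : r = (r - 1) + 1 := by omega
    rw [e, Finset.sum_range_succ, Finset.sum_congr rfl (g := fun _ => 2) (fun i hi => if_pos (by simpa using hi))]
    simp [hα]; omega
  obtain ⟨s', e1, e2⟩ := exists_pattern (by omega) (fun j hj => by simp only [hα]; split_ifs <;> omega) hsum
  have hI : InjAll r (rowlen N (cmp s)) α' := by
    intro B Q hQ hs
    refine Mv_inj_rev hQ hs ⟨r - 1 - x, x, by omega, by omega, ?_, ?_, ?_, ?_, ?_⟩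
    all_goals simp only [show r - 1 - (r - 1 - x) = x by omega, show r - 1 - (r - 1 - x + x) = 0 by omega]
    · have a1 := hcl x
      simp only [hF] at a1
      split_ifs at a1 <;> omega
    · right
      refine ⟨2, ?_, ?_, ?_⟩
      · have a1 := hcl x
        simp only [hF] at a1
        split_ifs at a1 <;> omega
      · omega
      · intro i hi1 hi2
        have a1 := hcl (r - 1 - i)
        simp only [hF] at a1
        split_ifs at a1 <;> omega
    · have a1 := hcl x
      simp only [hF, hα] at a1 ⊢
      split_ifs at a1 ⊢ <;> omega
    · rw [hcl0]
      simp only [hα]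
      split_ifs <;> omega
    · intro i hi h3 h4
      have a1 := hcl (r - 1 - i)
      simp only [hF, hα] at a1 ⊢
      split_ifs at a1 ⊢ <;> omega
  refine ⟨cmp s', Good_cmp (by omega) ⟨by rw [e1, hcr], ?_, ?_, ?_⟩⟩
  · intro i hi j hj
    rw [e1] at hi hj
    rw [e2 i hi, e2 j hj]
    simp only [hα]; split_ifs <;> omega
  · apply cols_le_two (by omega)
    intro i _ hi
    rw [e1] at hi
    rw [e2 i (by omega)]
    simp only [hα]; split_ifs <;> omega
  · intro cont
    apply Bal_inj (by omega) (by rw [hcr, e1])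
    rw [hcr]
    exact InjAll_congr hI e2

lemma T1 {N : ℕ} (hN : 1 ≤ N) (s : ℕ → Bool) : ∃ s', Good N s s' := by
  have hc := @nrow_cmp N s hN
  by_cases c1 : 2 * nrow N s ≤ N
  · exact T1_wide hN s c1
  by_cases c2 : 2 * nrow N (cmp s) ≤ N
  · obtain ⟨s', h⟩ := T1_wide hN (cmp s) c2
    exact ⟨cmp s', Good_cmp hN h⟩
  obtain ⟨s1, h1, h2, h3⟩ := row_balance hN s
  set r := nrow N s1 with hr
  have hNr : N + 1 = 2 * r := by omega
  have hsum : ∑ i ∈ Finset.range r, rowlen N s1 i = N := by rw [← start_sum, start_nrow]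
  have hex : ∃ x < r, rowlen N s1 x = 1 := by
    by_contra hh
    push Not at hh
    have : ∑ i ∈ Finset.range r, 2 ≤ ∑ i ∈ Finset.range r, rowlen N s1 i := by
      apply Finset.sum_le_sum
      intro i hi
      have hi' : i < r := by simpa using hi
      have := rowlen_pos hN hi'
      have := hh i hi'
      omega
    simp at this
    omega
  obtain ⟨x, hx, hx1⟩ := hex
  have hoth : ∀ i < r, i ≠ x → rowlen N s1 i = 2 := by
    intro i hi hne
    by_contra hh
    have b1 := h2 i hi x hx
    have hx' : x ∈ Finset.range r := by simpa using hx
    have e1 := Finset.add_sum_erase (Finset.range r) (rowlen N s1) hx'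
    have : ∑ j ∈ (Finset.range r).erase x, rowlen N s1 j < ∑ j ∈ (Finset.range r).erase x, 2 := by
      apply Finset.sum_lt_sum
      · intro j hj
        have := h2 j (by simp at hj; exact hj.2) x hx
        omega
      · exact ⟨i, by simp; omega, by omega⟩
    simp [Finset.card_erase_of_mem hx'] at this
    omega
  by_cases hmid : 0 < x ∧ x + 1 < r
  · obtain ⟨s', h⟩ := T1_mid s1 hNr hr.symm hmid.1 hmid.2 hx1 hoth
    exact ⟨s', Good_trans h1 h3 h⟩
  · refine ⟨s1, h1, h2, ?_, h3⟩
    apply cols_le_two hN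
    intro i hi0 hi1
    rw [hoth i (by omega) (by omega)]

end RB

namespace RB

open Nat (count)

lemma exists_occ {P : ℕ → Prop} [DecidablePred P] {n j : ℕ} (h1 : 1 ≤ j) (h2 : j ≤ count P n) :
    ∃ k < n, P k ∧ count P (k+1) = j := by
  induction n with
  | zero => simp at h2; omega
  | succ n ih =>
    by_cases h : j ≤ count P n
    · obtain ⟨k, hk, h3⟩ := ih h
      exact ⟨k, by omega, h3⟩
    · refine ⟨n, by omega, ?_, ?_⟩
      · by_contra hp
        rw [Nat.count_succ, if_neg hp] at h2; omega
      · rw [Nat.count_succ] at h2 ⊢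
        split_ifs at h2 ⊢ <;> omega

/-- predecessor of a letter -/
lemma Bal_pred {N : ℕ} {s : ℕ → Bool} {cont y : ℕ → ℕ} (h : y ∈ Bal N s cont) {k : ℕ} (hk : k < N) (h2 : 2 ≤ y k) :
    ∃ k' < k, y k' + 1 = y k ∧ rho s k' < rho s k ∧
      count (fun j => y j = y k') (k'+1) = count (fun j => y j = y k) (k+1) := by
  have h3 := h.2.2.1 (k+1) hk (y k - 2)
  rw [show y k - 2 + 2 = y k by omega, show y k - 2 + 1 = y k - 1 by omega] at h3
  have h4 : 1 ≤ count (fun j => y j = y k) (k+1) := by rw [Nat.count_succ, if_pos rfl]; omega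
  obtain ⟨k', e1, e2, e3⟩ := exists_occ h4 h3
  have hne : k' ≠ k := by rintro rfl; omega
  refine ⟨k', by omega, by omega, ?_, by rw [e2, e3]⟩
  have := @rho_mono s k' k (by omega)
  by_contra hh
  have := Bal_desc h (k := k') (k' := k) (by omega) hk (by omega)
  omega

lemma rho_lower {N : ℕ} {s : ℕ → Bool} {cont y : ℕ → ℕ} (h : y ∈ Bal N s cont) : ∀ k < N, y k ≤ rho s k + 1 := by
  intro k
  induction k using Nat.strong_induction_on with
  | _ k ih =>
  intro hk
  by_cases h2 : 2 ≤ y k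
  · obtain ⟨k', e1, e2, e3, _⟩ := Bal_pred h hk h2
    have := ih k' e1 (by omega)
    omega
  · omega

lemma row_lower {N : ℕ} {s : ℕ → Bool} {cont y : ℕ → ℕ} (h : y ∈ Bal N s cont) {L : ℕ} (hL : 1 ≤ L)
    (hc : cont (nrow N s - 1) = L) : ∀ i < nrow N s, L ≤ rowlen N s i := by
  have main : ∀ d < nrow N s, ∃ k < N, y k + d = nrow N s ∧ count (fun j => y j = y k) (k+1) = L ∧
      rho s k + 1 ≤ y k := by
    intro d
    induction d with
    | zero =>
      intro _
      have h1 := h.2.2.2.1 (nrow N s - 1)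
      rw [hc] at h1
      obtain ⟨k, e1, e2, e3⟩ := exists_occ hL h1.ge
      refine ⟨k, e1, ?_, by rw [e2]; exact e3, ?_⟩
      · unfold nrow at *; omega
      · have := row_lt (s := s) e1; omega
    | succ d ih =>
      intro hd
      obtain ⟨k, e1, e2, e3, e4⟩ := ih (by omega)
      obtain ⟨k', f1, f2, f3, f4⟩ := Bal_pred h e1 (by omega)
      exact ⟨k', by omega, by omega, by omega, by omega⟩
  intro i hi
  obtain ⟨k, e1, e2, e3, e4⟩ := main (nrow N s - 1 - i) (by omega)
  rw [← e3, cut_cnt (show k + 1 ≤ N by omega)]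
  apply cnt_le
  intro j hj hh
  have := @rho_mono s j k (by omega)
  have := rho_lower h j hj
  omega

lemma row_upper {N : ℕ} {s : ℕ → Bool} {cont y : ℕ → ℕ} (h : y ∈ Bal N s cont) (i : ℕ) :
    rowlen N s i ≤ cont 0 := by
  by_contra hh
  have hz := Bal_tr h
  set z := tr N y
  have hle : start N s i + rowlen N s i ≤ N := by rw [← start_succ]; exact start_le
  have main : ∀ j < rowlen N s i, j + 1 ≤ z (start N s i + j) := by
    intro j
    induction j with
    | zero => intro _; exact hz.2.1 _ (by omega)
    | succ j ih =>
      intro hj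
      have h1 := ih (by omega)
      have m0 := (@row_mem N s i (start N s i + j) (by omega)).2 (by omega)
      have m1 := (@row_mem N s i (start N s i + (j + 1)) (by omega)).2 (by omega)
      have h2 := @rho_succ s (start N s i + j)
      have h3 : ¬ s (start N s i + j) = true := by
        intro hs
        rw [if_pos hs] at h2
        rw [← add_assoc] at m1
        omega
      have h4 := (hz.2.2.2.2 (start N s i + j) (by omega)).2 (by simp [cmp, h3])
      rw [← add_assoc]
      omega
  have h1 := main (rowlen N s i - 1) (by omega)
  set k := start N s i + (rowlen N s i - 1)
  have hk : k < N := by omega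
  have h2 : z k = count (fun j => y j = y k) (k+1) := if_pos hk
  have h3 := Bal_anti h (n := k+1) (by omega) (le_refl 1) (h.2.1 k hk)
  have h4 : count (fun j => y j = 1) (k+1) ≤ count (fun j => y j = 1) N := Nat.count_monotone _ hk
  have h5 := h.2.2.2.1 0
  simp only [zero_add] at h5
  omega

lemma T2 {N : ℕ} (hN : 1 ≤ N) {s : ℕ → Bool} (hs : REq N s) :
    ∃ cont, (Bal N s cont).Nonempty ∧ contT N cont 0 = nrow N s ∧
      ∀ s', nrow N s' = nrow N s → (Bal N s' cont).Nonempty → REq N s' := by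
  set r := nrow N s with hr
  have hr1 : 1 ≤ r := by rw [hr]; unfold nrow; omega
  have hrN : r ≤ N := by
    have := @nrow_cmp N s hN
    have : 1 ≤ nrow N (cmp s) := by unfold nrow; omega
    omega
  obtain ⟨i0, hi0, hmin⟩ := Finset.exists_min_image (Finset.range r) (rowlen N s) ⟨0, by simp; omega⟩
  simp only [Finset.mem_range] at hi0 hmin
  set β := rowlen N s with hβ
  set q := β i0 with hq
  have hq1 : 1 ≤ q := rowlen_pos hN hi0
  have hb : ∀ i < r, β i = q ∨ β i = q + 1 := by
    intro i hi
    have h1 := hmin i hi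
    have h2 := hs i hi i0 hi0
    change β i ≤ q + 1 at h2
    omega
  set X : ℕ → ℕ := fun n => count (fun i => β i = q + 1) n with hX
  have Xs : ∀ n, X (n+1) = X n + if β n = q + 1 then 1 else 0 := fun n => Nat.count_succ _ _
  have Xle : ∀ n, X n ≤ n := fun n => Nat.count_le _
  have Xr : X r < r := by
    have h1 : X (i0 + 1) ≤ i0 := by
      rw [Xs, if_neg (by omega)]; exact Xle i0
    have h2 : ∀ d, X (i0 + 1 + d) ≤ i0 + d := by
      intro d
      induction d with
      | zero => simpa using h1
      | succ d ih =>
        have := Xs (i0 + 1 + d)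
        rw [← add_assoc, this]
        split_ifs <;> omega
    have := h2 (r - (i0 + 1))
    rw [show i0 + 1 + (r - (i0 + 1)) = r by omega] at this
    omega
  set cont : ℕ → ℕ := fun v => (if v < r then q else 0) + (if v < X r then 1 else 0) with hcont
  set a : Mx := fun i t => if i < r ∧ t ≤ N then (if t = N - i then q else 0) + (if t = N - X i then (if β i = q + 1 then 1 else 0) else 0) else 0 with ha
  have hcol : ∀ n t, t ≤ N → ColS n a t = (if N - t < min n r then q else 0) + (if N - t < X (min n r) then 1 else 0) := by
    intro n t ht
    unfold ColS
    induction n with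
    | zero => simp [hX]
    | succ n ih =>
      rw [Finset.sum_range_succ, ih]
      rcases Nat.lt_or_ge n r with h | h
      · rw [min_eq_left h.le, min_eq_left (show n + 1 ≤ r from h)]
        have h1 := Xs n
        have h2 := Xle n
        have h3 : a n t = (if t = N - n then q else 0) + (if t = N - X n then (if β n = q + 1 then 1 else 0) else 0) := if_pos ⟨h, ht⟩
        rw [h3, h1]
        clear_value X q
        split_ifs <;> omega
      · rw [min_eq_right h, min_eq_right (show r ≤ n + 1 by omega)]
        have h3 : a n t = 0 := if_neg (by omega)
        rw [h3]; omega
  have hW : a ∈ W N (nrow N s) (Q0 N (nrow N s) (fun t => cont (N - t))) (rowlen N s) := by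
    refine ⟨⟨?_, ?_, ?_⟩, ?_, ?_⟩
    · intro i t hit
      exact if_neg (by omega)
    · intro t ht
      rw [hcol _ _ ht, ← hr, min_self]
    · intro k t ht
      rw [hcol _ _ (by omega), hcol _ _ ht]
      have h1 : X (min (k+1) r) ≤ X (min k r) + 1 := by
        rcases Nat.lt_or_ge k r with h | h
        · rw [min_eq_left h.le, min_eq_left (show k + 1 ≤ r from h), Xs]
          split_ifs <;> omega
        · rw [min_eq_right h, min_eq_right (show r ≤ k + 1 by omega)]; omega
      split_ifs <;> omega
    · intro i hi
      have h2 := Xle i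
      have e : ∀ t ∈ Finset.range (N+1), a i t = (if t = N - i then q else 0) + (if t = N - X i then (if β i = q + 1 then 1 else 0) else 0) := by
        intro t ht
        exact if_pos ⟨hi, by simp at ht; omega⟩
      unfold S
      rw [Finset.sum_congr rfl e, Finset.sum_add_distrib, Finset.sum_ite_eq', Finset.sum_ite_eq']
      rw [if_pos (by simp), if_pos (by simp)]
      change _ = β i
      have := hb i hi
      split_ifs <;> omega
    · intro i hi
      unfold m
      rw [one_le_mm_iff]
      refine ⟨N - (i+1), N - i, by omega, by omega, ?_, ?_⟩
      · simp only [ha]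
        rw [if_pos ⟨hi, by omega⟩, if_pos (by trivial)]; omega
      · simp only [ha]
        rw [if_pos ⟨by omega, by omega⟩, if_pos (by trivial)]; omega
  refine ⟨cont, ?_, ?_, ?_⟩
  · obtain ⟨f, hf, _⟩ := @W_to_Bal N s cont hN (fun v hv => by simp only [hcont]; rw [if_neg (by omega), if_neg (by omega)])
    exact ⟨_, hf hW⟩
  · unfold contT
    rw [← cnt_lt hrN]
    apply cnt_congr
    intro u _
    simp only [hcont]
    split_ifs <;> omega
  · rintro s' hs' ⟨y, hy⟩ i hi j hj
    have h1 := row_upper hy i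
    have h2 := row_lower hy hq1 (by rw [hs']; simp only [hcont]; rw [if_pos (by omega), if_neg (by omega)]; rfl) j hj
    simp only [hcont] at h1
    split_ifs at h1 <;> omega

/-- column version -/
lemma T2c {N : ℕ} (hN : 1 ≤ N) {s : ℕ → Bool} (hs : REq N (cmp s)) :
    ∃ cont, (Bal N s cont).Nonempty ∧ cont 0 + nrow N s = N + 1 ∧
      ∀ s', nrow N s' = nrow N s → (Bal N s' cont).Nonempty → REq N (cmp s') := by
  obtain ⟨cont, ⟨y, hy⟩, h2, h3⟩ := T2 hN hs
  have a1 := @nrow_cmp N s hN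
  refine ⟨contT N cont, ⟨tr N y, ?_⟩, by omega, ?_⟩
  · have := Bal_tr hy
    rwa [cmp_cmp] at this
  · rintro s' hs' ⟨y', hy'⟩
    have a2 := @nrow_cmp N s' hN
    apply h3 _ (by omega)
    have := Bal_tr hy'
    rw [contTT hy] at this
    exact ⟨_, this⟩

end RB

namespace RB

open Nat (count)

/-- `cell` enumerates the boxes of `A` in reading order -/
def Enum (A : SkewShape) (N : ℕ) (cell : ℕ → ℕ × ℕ) : Prop :=
  (∀ k < N, cell k ∈ A.cells) ∧ (∀ c ∈ A.cells, ∃ k < N, cell k = c) ∧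
  ∀ k k', k < k' → k' < N → (cell k).1 < (cell k').1 ∨ ((cell k).1 = (cell k').1 ∧ (cell k').2 < (cell k).2)

lemma exists_enum (A : SkewShape) : ∃ cell, Enum A A.size cell := by
  have i1 : IsTrans (ℕ × ℕ) ReadsBefore := ⟨fun a b c h h' => by unfold ReadsBefore at *; omega⟩
  have i2 : Std.Antisymm (α := ℕ × ℕ) ReadsBefore :=
    ⟨fun a b h h' => by unfold ReadsBefore at *; ext <;> omega⟩
  have i3 : Std.Total (α := ℕ × ℕ) ReadsBefore := ⟨fun a b => by unfold ReadsBefore; omega⟩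
  set l := A.cells.sort ReadsBefore with hl
  have hlen : l.length = A.size := by rw [hl]; exact Multiset.length_sort _
  have hmem : ∀ c, c ∈ l ↔ c ∈ A.cells := fun c => Multiset.mem_sort _
  have hp : l.Pairwise ReadsBefore := Finset.pairwise_sort _ _
  have hn : l.Nodup := Finset.sort_nodup _ _
  have hg : ∀ k (h : k < l.length), l.getD k (0,0) = l[k] := fun k h => by simp [h]
  refine ⟨fun k => l.getD k (0,0), ?_, ?_, ?_⟩
  · intro k hk
    rw [← hlen] at hk
    simp only [hg k hk]
    exact (hmem _).1 (List.getElem_mem hk)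
  · intro c hc
    obtain ⟨k, hk, e⟩ := List.mem_iff_getElem.1 ((hmem c).2 hc)
    exact ⟨k, by omega, by simp only [hg k hk]; exact e⟩
  · intro k k' h h'
    rw [← hlen] at h'
    simp only [hg k (by omega), hg k' h']
    have h1 := List.pairwise_iff_getElem.1 hp k k' (by omega) h' h
    have h2 : l[k] ≠ l[k'] := by
      intro e
      have := (List.Nodup.getElem_inj_iff hn).1 e
      omega
    have h3 : ¬ (l[k].1 = l[k'].1 ∧ l[k].2 = l[k'].2) := fun e => h2 (Prod.ext e.1 e.2)
    unfold ReadsBefore at h1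
    omega

section
variable {A : SkewShape} {N : ℕ} {cell : ℕ → ℕ × ℕ}

lemma Enum.inj (h : Enum A N cell) {k k' : ℕ} (hk : k < N) (hk' : k' < N) (e : cell k = cell k') : k = k' := by
  rcases lt_trichotomy k k' with h1 | h1 | h1
  · have := h.2.2 k k' h1 hk'
    rw [e] at this; omega
  · exact h1
  · have := h.2.2 k' k h1 hk
    rw [e] at this; omega

lemma Enum.card (h : Enum A N cell) (P : ℕ × ℕ → Prop) [DecidablePred P] :
    (A.cells.filter P).card = count (fun k => P (cell k)) N := by
  rw [Nat.count_eq_card_filter_range]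
  symm
  apply Finset.card_bij (fun k _ => cell k)
  · intro k hk
    simp at hk ⊢
    exact ⟨h.1 k hk.1, hk.2⟩
  · intro k hk k' hk' e
    simp at hk hk'
    exact h.inj hk.1 hk'.1 e
  · intro c hc
    simp at hc
    obtain ⟨k, hk, e⟩ := h.2.1 c hc.1
    exact ⟨k, by simp [hk, e, hc.2], e⟩

lemma Enum.reads (h : Enum A N cell) {k k' : ℕ} (hk : k < N) (hk' : k' < N) :
    ReadsBefore (cell k) (cell k') ↔ k ≤ k' := by
  unfold ReadsBefore
  constructor
  · intro h1
    by_contra h2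
    have := h.2.2 k' k (by omega) hk
    omega
  · intro h1
    rcases Nat.lt_or_ge k k' with h2 | h2
    · have := h.2.2 k k' h2 hk'
      omega
    · have : k = k' := by omega
      subst this; omega

lemma Enum.pre (h : Enum A N cell) (T : ℕ × ℕ → ℕ) (v : ℕ) {k : ℕ} (hk : k < N) :
    (A.cells.filter fun c => T c = v ∧ ReadsBefore c (cell k)).card = count (fun j => T (cell j) = v) (k+1) := by
  rw [h.card, cut_cnt (show k + 1 ≤ N by omega)]
  apply cnt_congr
  intro j hj
  rw [h.reads hj hk]
  constructor <;> rintro ⟨a, b⟩ <;> exact ⟨by omega, by omega⟩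

lemma Enum.row_le (h : Enum A N cell) {k k' : ℕ} (hk : k ≤ k') (hk' : k' < N) : (cell k).1 ≤ (cell k').1 := by
  rcases Nat.lt_or_ge k k' with h2 | h2
  · have := h.2.2 k k' h2 hk'
    omega
  · have : k = k' := by omega
    subst this; omega

/-- skew shapes are convex -/
lemma convex (A : SkewShape) {a b : ℕ × ℕ} (ha : a ∈ A.cells) (hb : b ∈ A.cells) {i j : ℕ}
    (h1 : a.1 ≤ i) (h2 : a.2 ≤ j) (h3 : i ≤ b.1) (h4 : j ≤ b.2) : (i, j) ∈ A.cells := by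
  unfold SkewShape.cells at *
  rw [Finset.mem_sdiff] at *
  refine ⟨?_, ?_⟩
  · exact A.outer.isLowerSet (show ((i, j) : ℕ × ℕ) ≤ b from ⟨h3, h4⟩) hb.1
  · intro hh
    exact ha.2 (A.inner.isLowerSet (show a ≤ ((i, j) : ℕ × ℕ) from ⟨h1, h2⟩) hh)

def pat (cell : ℕ → ℕ × ℕ) (k : ℕ) : Bool := decide ((cell k).1 ≠ (cell (k+1)).1)

/-- consecutive rows of a connected shape overlap -/
lemma overlap (hA : A.Connected) (h : Enum A N cell) {k : ℕ} (hk : k + 1 < N) (hr : (cell k).1 ≠ (cell (k+1)).1) :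
    (cell (k+1)).1 = (cell k).1 + 1 ∧ ∃ j, (cell k).2 ≤ j ∧ j ≤ (cell (k+1)).2 ∧
      ((cell k).1, j) ∈ A.cells ∧ ((cell k).1 + 1, j) ∈ A.cells := by
  have h0 := h.2.2 k (k+1) (by omega) hk
  have hex : ∃ b ∈ A.cells, ∃ c ∈ A.cells, b.1 ≤ (cell k).1 ∧ (cell k).1 < c.1 ∧ b.2 = c.2 := by
    by_contra hh
    push Not at hh
    apply hA.2
    refine ⟨A.cells.filter (fun c => c.1 ≤ (cell k).1), A.cells.filter (fun c => ¬ c.1 ≤ (cell k).1), ?_, ?_, ?_, ?_, ?_⟩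
    · exact ⟨cell k, by simp [h.1 k (by omega)]⟩
    · exact ⟨cell (k+1), by simp [h.1 (k+1) hk]; omega⟩
    · exact Finset.filter_union_filter_not_eq _ _
    · ext c; simp only [Finset.mem_inter, Finset.mem_filter, Finset.notMem_empty]; tauto
    · intro b hb c hc
      simp at hb hc
      exact ⟨by omega, hh b hb.1 c hc.1 hb.2 hc.2⟩
  obtain ⟨b, hb, c, hc, h1, h2, h3⟩ := hex
  have m1 := convex A hb hc (i := (cell k).1) (j := b.2) h1 le_rfl h2.le h3.le
  have m2 := convex A hb hc (i := (cell k).1 + 1) (j := b.2) (by omega) le_rfl h2 h3.le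
  obtain ⟨p, p1, p2⟩ := h.2.1 _ m1
  obtain ⟨q, q1, q2⟩ := h.2.1 _ m2
  have e1 : p ≤ k := by
    by_contra hh
    have := h.row_le (k := k+1) (k' := p) (by omega) p1
    rw [p2] at this; simp at this; omega
  have e2 : k + 1 ≤ q := by
    by_contra hh
    have := h.row_le (k := q) (k' := k) (by omega) (by omega)
    rw [q2] at this; simp at this
  have e3 := h.row_le e2 q1
  rw [q2] at e3
  simp at e3
  have hrow : (cell (k+1)).1 = (cell k).1 + 1 := by omega
  refine ⟨hrow, b.2, ?_, ?_, m1, m2⟩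
  · rcases Nat.lt_or_ge p k with h4 | h4
    · have := h.2.2 p k h4 (by omega)
      rw [p2] at this; simp at this; omega
    · have : p = k := by omega
      subst this; rw [p2]
  · rcases Nat.lt_or_ge (k+1) q with h4 | h4
    · have := h.2.2 (k+1) q h4 q1
      rw [q2] at this; simp at this; omega
    · have : q = k + 1 := by omega
      subst this; rw [q2]

lemma LR_mem (hA : A.Connected) (h : Enum A N cell) {lam : Multiset ℕ} {T : ℕ × ℕ → ℕ} (hT : T ∈ A.LRset lam) :
    (fun k => if k < N then T (cell k) else 0) ∈ Bal N (pat cell) (part lam) := by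
  obtain ⟨⟨⟨t1, t2, t3⟩, t4⟩, t5, t6⟩ := hT
  have cc : ∀ n ≤ N, ∀ v, count (fun k => (if k < N then T (cell k) else 0) = v) n = count (fun k => T (cell k) = v) n := by
    intro n hn v
    apply cnt_congr
    intro k hk
    rw [if_pos (by omega)]
  refine ⟨fun k hk => if_neg (by omega), ?_, ?_, ?_, ?_⟩
  · intro k hk
    simp only [if_pos hk]
    exact t1 _ (h.1 k hk)
  · intro n hn v
    rw [cc n hn, cc n hn]
    rcases n with _ | n
    · simp
    · have := t4 (cell n) (h.1 n hn) v
      rwa [h.pre _ _ hn, h.pre _ _ hn] at this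
  · intro v
    rw [cc N le_rfl, ← t6 v]
    unfold SkewShape.content
    rw [h.card]
  · intro k hk
    simp only [if_pos hk, if_pos (show k < N by omega)]
    by_cases hr : (cell k).1 = (cell (k+1)).1
    · have h1 := h.2.2 k (k+1) (by omega) hk
      have h2 := t2 (cell k).1 (cell (k+1)).2 (cell k).2 (by rw [hr]; exact h.1 _ hk) (h.1 k (by omega)) (by omega)
      rw [hr] at h2
      have h3 : T (cell (k+1)) ≤ T (cell k) := by
        refine h2.trans (le_of_eq ?_)
        rw [← hr]
      simp [pat, hr]; omega
    · obtain ⟨e1, j, e2, e3, e4, e5⟩ := overlap hA h hk hr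
      have h1 := t2 (cell k).1 (cell k).2 j (h.1 k (by omega)) e4 e2
      have h2 := t3 _ _ j e4 e5 (by omega)
      have h3 := t2 ((cell k).1 + 1) j (cell (k+1)).2 e5 (by rw [← e1]; exact h.1 _ hk) e3
      rw [← e1] at h3
      change _ ≤ T (cell (k+1)) at h3
      change T (cell k) ≤ _ at h1
      rw [← e1] at h2
      simp [pat, hr]; omega

lemma LR_to_Bal (hA : A.Connected) (h : Enum A N cell) (lam : Multiset ℕ) :
    Inj (A.LRset lam) (Bal N (pat cell) (part lam)) := by
  refine ⟨fun T k => if k < N then T (cell k) else 0, fun T hT => LR_mem hA h hT, ?_⟩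
  · rintro T ⟨_, hT, _⟩ T' ⟨_, hT', _⟩ e
    funext c
    by_cases hc : c ∈ A.cells
    · obtain ⟨k, hk, rfl⟩ := h.2.1 c hc
      have := congrFun e k
      simpa [hk] using this
    · rw [hT c hc, hT' c hc]

/-- ribbon step property -/
def Step (N : ℕ) (cell : ℕ → ℕ × ℕ) : Prop :=
  ∀ k, k + 1 < N → ((cell (k+1)).1 = (cell k).1 ∧ (cell (k+1)).2 + 1 = (cell k).2) ∨
    ((cell (k+1)).1 = (cell k).1 + 1 ∧ (cell (k+1)).2 = (cell k).2)

lemma ribbon_step (hA : A.Ribbon) (h : Enum A N cell) : Step N cell := by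
  intro k hk
  have h0 := h.2.2 k (k+1) (by omega) hk
  have m0 := h.1 k (by omega)
  have m1 := h.1 (k+1) hk
  by_cases hr : (cell k).1 = (cell (k+1)).1
  · left
    refine ⟨hr.symm, ?_⟩
    have m := convex A m1 m0 (i := (cell k).1) (j := (cell k).2 - 1) (by omega) (by omega) (by omega) (by omega)
    obtain ⟨p, p1, p2⟩ := h.2.1 _ m
    have c1 := h.2.2 k p
    have c2 := h.2.2 p (k+1)
    have c3 := h.2.2 p k
    have c4 := h.2.2 (k+1) p
    rw [p2] at c1 c2 c3 c4
    simp only at c1 c2 c3 c4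
    rcases Nat.lt_or_ge p k with d | d
    · have := c3 d (by omega); omega
    rcases Nat.lt_or_ge (k+1) p with d | d
    · have := c4 d (by omega); omega
    have hp : p = k ∨ p = k + 1 := by omega
    rcases hp with rfl | rfl
    · have := congrArg Prod.snd p2; simp at this; omega
    · have := congrArg Prod.snd p2; simp at this; omega
  · right
    obtain ⟨e1, j, e2, e3, e4, e5⟩ := overlap hA.1 h hk hr
    refine ⟨e1, ?_⟩
    by_contra hne
    have m1' : ((cell k).1 + 1, (cell (k+1)).2) ∈ A.cells := by rw [← e1]; exact m1
    apply hA.2 (cell k).1 (cell k).2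
    refine ⟨m0, ?_, ?_, ?_⟩
    · exact convex A m0 m1' (by simp) (by simp) (by simp) (by simp; omega)
    · exact convex A m0 m1' (by simp) (by simp) (by simp) (by simp; omega)
    · exact convex A m0 m1' (by simp) (by simp) (by simp) (by simp; omega)

lemma step_pos (h : Step N cell) : ∀ k < N, (cell k).1 = (cell 0).1 + rho (pat cell) k ∧
    (cell k).2 + rho (cmp (pat cell)) k = (cell 0).2 := by
  intro k
  induction k with
  | zero => intro _; simp [rho_zero]
  | succ k ih =>
    intro hk
    obtain ⟨i1, i2⟩ := ih (by omega)
    rw [rho_succ, rho_succ]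
    rcases h k hk with ⟨h1, h2⟩ | ⟨h1, h2⟩
    · have : pat cell k = false := by simp [pat, h1]
      simp [this, cmp]; omega
    · have : pat cell k = true := by simp [pat, h1]
      simp [this, cmp]; omega

lemma row_eq (h : Enum A N cell) (hs : Step N cell) (he : REq N (pat cell)) : A.RowEquitable := by
  have hp := step_pos hs
  have key : ∀ i ∈ A.rowSet, ∃ d < nrow N (pat cell), A.rowLen i = rowlen N (pat cell) d := by
    intro i hi
    unfold SkewShape.rowSet at hi
    rw [Finset.mem_image] at hi
    obtain ⟨c, hc, rfl⟩ := hi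
    obtain ⟨k, hk, rfl⟩ := h.2.1 c hc
    refine ⟨rho (pat cell) k, row_lt hk, ?_⟩
    unfold SkewShape.rowLen rowlen
    rw [h.card]
    apply cnt_congr
    intro j hj
    have := hp j hj
    have := hp k hk
    omega
  intro i hi i' hi'
  obtain ⟨d, hd, e⟩ := key i hi
  obtain ⟨d', hd', e'⟩ := key i' hi'
  rw [e, e']
  exact he d hd d' hd'

lemma col_eq (h : Enum A N cell) (hs : Step N cell) (he : REq N (cmp (pat cell))) : A.ColEquitable := by
  have hp := step_pos hs
  have key : ∀ i ∈ A.colSet, ∃ d < nrow N (cmp (pat cell)), A.colLen i = rowlen N (cmp (pat cell)) d := by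
    intro i hi
    unfold SkewShape.colSet at hi
    rw [Finset.mem_image] at hi
    obtain ⟨c, hc, rfl⟩ := hi
    obtain ⟨k, hk, rfl⟩ := h.2.1 c hc
    refine ⟨rho (cmp (pat cell)) k, row_lt hk, ?_⟩
    unfold SkewShape.colLen rowlen
    rw [h.card]
    apply cnt_congr
    intro j hj
    have := hp j hj
    have := hp k hk
    omega
  intro i hi i' hi'
  obtain ⟨d, hd, e⟩ := key i hi
  obtain ⟨d', hd', e'⟩ := key i' hi'
  rw [e, e']
  exact he d hd d' hd'

end

end RB

namespace RB

open Nat (count)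

lemma Bal_asc {N : ℕ} {s : ℕ → Bool} {cont y : ℕ → ℕ} (h : y ∈ Bal N s cont) {k : ℕ} :
    ∀ d, k + d < N → rho (cmp s) k = rho (cmp s) (k+d) → y k + d ≤ y (k+d) := by
  intro d
  induction d with
  | zero => intro _ _; simp
  | succ d ih =>
    intro hd hr
    have m1 := rho_mono (s := cmp s) (show k ≤ k + d by omega)
    have e : rho (cmp s) (k + (d+1)) = _ := rho_succ (k+d)
    have hc : s (k+d) = true := by
      by_contra hc
      have hc : s (k+d) = false := by simpa using hc
      simp [cmp, hc] at e
      omega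
    have := ih (by omega) (by simp [cmp, hc] at e; omega)
    have := (h.2.2.2.2 (k+d) (by omega)).2 hc
    change _ ≤ y (k+d+1)
    omega

section
variable {A : SkewShape} {N : ℕ} {cell : ℕ → ℕ × ℕ}

open Classical in
noncomputable def fill (N : ℕ) (cell : ℕ → ℕ × ℕ) (y : ℕ → ℕ) (c : ℕ × ℕ) : ℕ :=
  if h : ∃ k < N, cell k = c then y h.choose else 0

lemma fill_cell (h : Enum A N cell) (y : ℕ → ℕ) {k : ℕ} (hk : k < N) : fill N cell y (cell k) = y k := by
  unfold fill
  have hh : ∃ k' < N, cell k' = cell k := ⟨k, hk, rfl⟩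
  rw [dif_pos hh]
  congr 1
  exact h.inj hh.choose_spec.1 hk hh.choose_spec.2

lemma Bal_to_LR (h : Enum A N cell) (hs : Step N cell) (lam : Multiset ℕ) :
    Inj (Bal N (pat cell) (part lam)) (A.LRset lam) := by
  have hp := step_pos hs
  refine ⟨fill N cell, ?_, ?_⟩
  · intro y hy
    have cc : ∀ n ≤ N, ∀ v, count (fun k => fill N cell y (cell k) = v) n = count (fun k => y k = v) n := by
      intro n hn v
      apply cnt_congr
      intro k hk
      rw [fill_cell h y (by omega)]
    refine ⟨⟨⟨?_, ?_, ?_⟩, ?_⟩, ?_, ?_⟩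
    · intro c hc
      obtain ⟨k, hk, rfl⟩ := h.2.1 c hc
      rw [fill_cell h y hk]
      exact hy.2.1 k hk
    · intro i j j' h1 h2 hj
      obtain ⟨k, hk, e⟩ := h.2.1 _ h1
      obtain ⟨k', hk', e'⟩ := h.2.1 _ h2
      rw [← e, ← e', fill_cell h y hk, fill_cell h y hk']
      have a1 := hp k hk
      have a2 := hp k' hk'
      rw [e] at a1
      rw [e'] at a2
      apply Bal_desc hy _ hk (by simp at a1 a2; omega)
      rw [← h.reads hk' hk, e, e']
      right; exact ⟨rfl, hj⟩
    · intro i i' j h1 h2 hi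
      obtain ⟨k, hk, e⟩ := h.2.1 _ h1
      obtain ⟨k', hk', e'⟩ := h.2.1 _ h2
      rw [← e, ← e', fill_cell h y hk, fill_cell h y hk']
      have a1 := hp k hk
      have a2 := hp k' hk'
      rw [e] at a1
      rw [e'] at a2
      have hkk : k ≤ k' := by
        rw [← h.reads hk hk', e, e']
        left; exact hi
      obtain ⟨d, rfl⟩ := Nat.exists_eq_add_of_le hkk
      have := Bal_asc hy d hk' (by simp at a1 a2; omega)
      rcases d with _ | d
      · simp at e'; rw [e] at e'; simp at e'; omega
      · omega
    · intro c hc v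
      obtain ⟨k, hk, rfl⟩ := h.2.1 c hc
      rw [h.pre _ _ hk, h.pre _ _ hk, cc _ hk, cc _ hk]
      exact hy.2.2.1 _ hk v
    · intro c hc
      unfold fill
      rw [dif_neg]
      rintro ⟨k, hk, rfl⟩
      exact hc (h.1 k hk)
    · intro i
      unfold SkewShape.content
      rw [h.card, cc _ le_rfl]
      exact hy.2.2.2.1 i
  · intro y hy y' hy' e
    funext k
    by_cases hk : k < N
    · rw [← fill_cell h y hk, ← fill_cell h y' hk]
      exact congrFun e _
    · rw [hy.1 k (by omega), hy'.1 k (by omega)]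

lemma size_enum (h : Enum A N cell) : A.size = N := by
  have := h.card (fun _ => True)
  have h2 := cnt_lt (le_refl N)
  rw [Finset.filter_true_of_mem (by simp)] at this
  unfold SkewShape.size
  rw [this]
  conv_rhs => rw [← h2]
  apply cnt_congr
  intro k hk
  simp [hk]

lemma ribbon_of (hN : 1 ≤ N) (h : Enum A N cell) (hs : Step N cell) : A.Ribbon := by
  have hp := step_pos hs
  refine ⟨⟨⟨cell 0, h.1 0 hN⟩, ?_⟩, ?_⟩
  · rintro ⟨B, C, hB, hC, hU, hI, hd⟩
    have hstep : ∀ k, k + 1 < N → (cell k ∈ B ↔ cell (k+1) ∈ B) := by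
      intro k hk
      have a0 := h.1 k (by omega)
      have a1 := h.1 (k+1) hk
      rw [← hU, Finset.mem_union] at a0 a1
      have h1 := hs k hk
      constructor
      · intro hb
        by_contra hc
        have := hd _ hb _ (a1.resolve_left hc)
        omega
      · intro hb
        by_contra hc
        have := hd _ hb _ (a0.resolve_left hc)
        omega
    have hall : ∀ k < N, (cell 0 ∈ B ↔ cell k ∈ B) := by
      intro k
      induction k with
      | zero => simp
      | succ k ih => intro hk; rw [ih (by omega), hstep k hk]
    obtain ⟨b, hb⟩ := hB
    obtain ⟨c, hc⟩ := hC
    obtain ⟨p, hp, rfl⟩ := h.2.1 b (by rw [← hU]; simp [hb])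
    obtain ⟨q, hq, rfl⟩ := h.2.1 c (by rw [← hU]; simp [hc])
    have : cell q ∈ B := (hall q hq).1 ((hall p hp).2 hb)
    have : cell q ∈ B ∩ C := by simp [this, hc]
    rw [hI] at this
    simp at this
  · rintro i j ⟨h1, _, _, h4⟩
    obtain ⟨k, hk, e⟩ := h.2.1 _ h1
    obtain ⟨k', hk', e'⟩ := h.2.1 _ h4
    have a1 := hp k hk
    have a2 := hp k' hk'
    have b1 := rho_cmp (pat cell) k
    have b2 := rho_cmp (pat cell) k'
    rw [e] at a1
    rw [e'] at a2
    simp at a1 a2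
    have : k = k' := by omega
    subst this
    omega
end

lemma exists_ribbon {N : ℕ} (hN : 1 ≤ N) (s : ℕ → Bool) :
    ∃ (R : SkewShape) (cell : ℕ → ℕ × ℕ), Enum R N cell ∧ Step N cell ∧ pat cell = s := by
  classical
  set r := rho s with hr
  set t := rho (cmp s) with ht
  have hrt : ∀ k, r k + t k = k := fun k => rho_cmp s k
  have rm : ∀ {a b}, a ≤ b → r a ≤ r b := fun h => rho_mono h
  have tm : ∀ {a b}, a ≤ b → t a ≤ t b := fun h => rho_mono h
  have r0 : r 0 = 0 := rho_zero
  have st : ∀ k, (s k = true ∧ r (k+1) = r k + 1 ∧ t (k+1) = t k) ∨ (s k = false ∧ r (k+1) = r k ∧ t (k+1) = t k + 1) := by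
    intro k
    have h1 : r (k+1) = _ := rho_succ k
    have h2 := hrt k
    have h3 := hrt (k+1)
    cases hc : s k
    · right; simp [hc] at h1; refine ⟨rfl, h1, ?_⟩; rw [← hr] at h1; omega
    · left; simp [hc] at h1; refine ⟨rfl, h1, ?_⟩; rw [← hr] at h1; omega
  set M := t (N-1) with hM
  have hMN : M < N := by have := hrt (N-1); omega
  have tM : ∀ {k}, k < N → t k ≤ M := fun h => tm (by omega)
  clear_value r t M
  let O : ℕ × ℕ → Prop := fun c => ∃ k < N, c.1 ≤ r k ∧ c.2 + t k ≤ M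
  have ho : ∀ c, c ∈ ((Finset.range N ×ˢ Finset.range N).filter O) ↔ O c := by
    intro c
    simp only [Finset.mem_filter, Finset.mem_product, Finset.mem_range]
    constructor
    · exact fun h => h.2
    · intro h
      obtain ⟨k, hk, h1, h2⟩ := id h
      have := hrt k
      exact ⟨⟨by omega, by omega⟩, h⟩
  have hO : ∀ a b : ℕ × ℕ, b ≤ a → O a → O b := by
    rintro a b ⟨h1, h2⟩ ⟨k, hk, h3, h4⟩
    exact ⟨k, hk, by omega, by omega⟩
  let I : ℕ × ℕ → Prop := fun c => O (c.1+1, c.2+1)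
  have hsb : ∀ c, I c → O c := fun c h => hO _ _ (by constructor <;> simp) h
  have hi : ∀ c, c ∈ ((Finset.range N ×ˢ Finset.range N).filter I) ↔ I c := by
    intro c
    rw [Finset.mem_filter]
    constructor
    · exact fun h => h.2
    · intro h
      have := (ho c).2 (hsb c h)
      rw [Finset.mem_filter] at this
      exact ⟨this.1, h⟩
  let outer : YoungDiagram := ⟨(Finset.range N ×ˢ Finset.range N).filter O, by
    intro a b hab ha
    rw [Finset.mem_coe, ho] at *
    exact hO a b hab ha⟩
  let inner : YoungDiagram := ⟨(Finset.range N ×ˢ Finset.range N).filter I, by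
    intro a b hab ha
    rw [Finset.mem_coe, hi] at *
    exact hO _ _ (by obtain ⟨h1, h2⟩ := hab; constructor <;> simp <;> assumption) ha⟩
  have hle : inner ≤ outer := by
    intro c hc
    have hc' : c ∈ ((Finset.range N ×ˢ Finset.range N).filter I) := hc
    exact (ho c).2 (hsb c ((hi c).1 hc'))
  have hcells : ∀ c, c ∈ (SkewShape.mk outer inner hle).cells ↔ O c ∧ ¬ I c := by
    intro c
    unfold SkewShape.cells
    rw [Finset.mem_sdiff]
    change c ∈ ((Finset.range N ×ˢ Finset.range N).filter O) ∧ ¬ c ∈ ((Finset.range N ×ˢ Finset.range N).filter I) ↔ _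
    rw [ho, hi]
  refine ⟨⟨outer, inner, hle⟩, fun k => (r k, M - t k), ⟨?_, ?_, ?_⟩, ?_, ?_⟩
  · intro k hk
    rw [hcells]
    have := tM hk
    refine ⟨⟨k, hk, le_rfl, by simp; omega⟩, ?_⟩
    rintro ⟨k', hk', h1, h2⟩
    simp at h1 h2
    rcases le_total k k' with h | h
    · have := tm h; omega
    · have := rm h; omega
  · rintro ⟨i, j⟩ hc
    rw [hcells] at hc
    obtain ⟨⟨k, hk, h1, h2⟩, hn⟩ := hc
    simp only at h1 h2
    have hex : ∃ k, i ≤ r k := ⟨k, h1⟩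
    have f1 := Nat.find_spec hex
    have f2 : Nat.find hex ≤ k := Nat.find_min' hex h1
    have f3 : ∀ m < Nat.find hex, ¬ i ≤ r m := fun m hm => Nat.find_min hex hm
    generalize Nat.find hex = q at f1 f2 f3
    have hq : r q = i := by
      rcases q with _ | q
      · omega
      · have := f3 q (by omega)
        have := st q
        omega
    have key : ∀ m q, q < N → r q = i → j + t q + m = M → ∃ p < N, r p = i ∧ j + t p = M := by
      intro m
      induction m with
      | zero => intro q h1 h2 h3; exact ⟨q, h1, h2, h3⟩
      | succ m ih =>
        intro q h1 h2 h3
        have hq1 : q + 1 < N := by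
          by_contra hh
          have : q = N - 1 := by omega
          subst this; omega
        rcases st q with ⟨_, a, b⟩ | ⟨_, a, b⟩
        · exact absurd ⟨q+1, hq1, by simp; omega, by simp; omega⟩ hn
        · exact ih (q+1) hq1 (by omega) (by omega)
    have := tm f2
    obtain ⟨p, p1, p2, p3⟩ := key (M - (j + t q)) q (by omega) hq (by omega)
    exact ⟨p, p1, by rw [← p2, ← p3]; simp⟩
  · intro k k' h h'
    have h1 := rm h.le
    have h2 := tM h'
    have h3 := hrt k
    have h4 := hrt k'
    simp only
    omega
  · intro k hk
    have h2 := tM hk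
    rcases st k with ⟨_, a, b⟩ | ⟨_, a, b⟩
    · right; simp only; omega
    · left; simp only; omega
  · funext k
    unfold pat
    rcases st k with ⟨e, a, b⟩ | ⟨e, a, b⟩ <;> rw [e] <;> simp [a]

end RB

namespace RB

open Nat (count)

lemma Bal_tight {N : ℕ} (hN : 1 ≤ N) {s : ℕ → Bool} {cont y : ℕ → ℕ} (h : y ∈ Bal N s cont)
    (hc : cont 0 + nrow N s = N + 1) {k : ℕ} (hk : k + 1 < N) (hs : s k = false) : y (k+1) = 1 := by
  by_contra hy
  have key : ∀ n < N, count (fun j => y j = 1) (n+1) + rho s n ≤ n + 1 ∧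
      (k < n → count (fun j => y j = 1) (n+1) + rho s n ≤ n) := by
    intro n
    induction n with
    | zero =>
      intro _
      refine ⟨?_, fun h => absurd h (by omega)⟩
      rw [rho_zero]
      exact Nat.count_le _
    | succ n ih =>
      intro hn
      obtain ⟨i1, i2⟩ := ih (by omega)
      rw [Nat.count_succ, rho_succ]
      have h1 := h.2.1 n (by omega)
      have h2 := h.2.2.2.2 n hn
      by_cases hsn : s n = true
      · have := h2.2 hsn
        rw [if_neg (by omega), if_pos hsn]
        refine ⟨by omega, fun hkn => ?_⟩
        have hne : k ≠ n := by rintro rfl; rw [hs] at hsn; simp at hsn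
        have := i2 (by omega)
        omega
      · rw [if_neg hsn]
        refine ⟨by split_ifs <;> omega, fun hkn => ?_⟩
        rcases Nat.lt_or_ge k n with h3 | h3
        · have := i2 h3
          split_ifs <;> omega
        · have : k = n := by omega
          subst this
          rw [if_neg hy]; omega
  have h1 := (key (N-1) (by omega)).2 (by omega)
  have h2 := h.2.2.2.1 0
  rw [show N - 1 + 1 = N by omega] at h1
  unfold nrow at hc
  simp only [Nat.zero_add] at h2
  omega

lemma exists_part {N : ℕ} {s : ℕ → Bool} {cont y : ℕ → ℕ} (h : y ∈ Bal N s cont) :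
    ∃ lam : Multiset ℕ, 0 ∉ lam ∧ part lam = cont := by
  have hanti : ∀ u v, u ≤ v → cont v ≤ cont u := by
    intro u v huv
    rw [← h.2.2.2.1 u, ← h.2.2.2.1 v]
    exact Bal_anti h le_rfl (by omega) (by omega)
  have hz : ∀ v, N ≤ v → cont v = 0 := by
    intro v hv
    rw [← h.2.2.2.1 v]
    apply cnt_zero
    intro k hk e
    have := Bal_bd2 h k hk
    omega
  set n := count (fun v => 0 < cont v) N with hn
  have hnN : n ≤ N := Nat.count_le _
  have hseg : ∀ v < N, (0 < cont v ↔ v < n) :=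
    cnt_seg (P := fun v => 0 < cont v) (fun k k' hk _ hp => lt_of_lt_of_le hp (hanti _ _ hk.le))
  have hL : ((((List.range n).map cont : List ℕ) : Multiset ℕ).sort (· ≥ ·)) = (List.range n).map cont := by
    apply List.Perm.eq_of_pairwise' (r := (· ≥ ·))
    · exact Multiset.pairwise_sort _ _
    · rw [List.pairwise_map]
      exact List.Pairwise.imp (fun hab => hanti _ _ (Nat.le_of_lt hab)) List.pairwise_lt_range
    · rw [← Multiset.coe_eq_coe, Multiset.sort_eq]
  refine ⟨(((List.range n).map cont : List ℕ) : Multiset ℕ), ?_, ?_⟩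
  · simp only [Multiset.mem_coe, List.mem_map, List.mem_range]
    rintro ⟨v, hv, e⟩
    have := (hseg v (by omega)).2 hv
    omega
  · funext v
    unfold part
    rw [hL]
    by_cases hv : v < n
    · simp [hv]
    · have : cont v = 0 := by
        by_cases hvN : v < N
        · have := (hseg v hvN).not.2 hv
          omega
        · exact hz v (by omega)
      rw [this, List.getD_eq_default _ _ (by simpa using hv)]

lemma Bal_fin {N : ℕ} {s : ℕ → Bool} {cont : ℕ → ℕ} : (Bal N s cont).Finite := by
  have : Set.MapsTo (fun (y : ℕ → ℕ) (k : Fin N) => (Fin.ofNat (N+1) (y k) : Fin (N+1))) (Bal N s cont) Set.univ :=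
    fun _ _ => Set.mem_univ _
  apply Set.Finite.of_injOn this _ Set.finite_univ
  intro y hy y' hy' e
  funext k
  by_cases hk : k < N
  · have := congrArg Fin.val (congrFun e ⟨k, hk⟩)
    simp only [Fin.val_ofNat] at this
    have a := Bal_bd2 hy k hk
    have b := Bal_bd2 hy' k hk
    rwa [Nat.mod_eq_of_lt (by omega), Nat.mod_eq_of_lt (by omega)] at this
  · rw [hy.1 k (by omega), hy'.1 k (by omega)]

lemma Inj.fin {α β : Type} {S : Set α} {S' : Set β} (h : Inj S S') (h' : S'.Finite) : S.Finite := by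
  obtain ⟨f, h1, h2⟩ := h
  exact Set.Finite.of_injOn h1 h2 h'

lemma mem_supp (A : SkewShape) (lam : Multiset ℕ) : lam ∈ A.supp ↔ 0 ∉ lam ∧ (A.LRset lam).Nonempty := by
  constructor
  · rintro ⟨h0, T, hT, hc⟩
    refine ⟨h0, fun c => if c ∈ A.cells then T c else 0, ?_, ?_, ?_⟩
    · refine ⟨⟨?_, ?_, ?_⟩, ?_⟩
      · intro c h1
        simp only [if_pos h1]; exact hT.1.1 c h1
      · intro i j j' h1 h2 h3
        simp only [if_pos h1, if_pos h2]; exact hT.1.2.1 i j j' h1 h2 h3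
      · intro i j j' h1 h2 h3
        simp only [if_pos h1, if_pos h2]; exact hT.1.2.2 i j j' h1 h2 h3
      · intro d hd k
        refine le_trans (le_of_eq ?_) ((hT.2 d hd k).trans (le_of_eq ?_))
        · congr 1
          apply Finset.filter_congr
          intro c h1
          simp only [if_pos h1]
        · congr 1
          apply Finset.filter_congr
          intro c h1
          simp only [if_pos h1]
    · intro c h1; simp only [if_neg h1]
    · intro i
      rw [← hc i]
      unfold SkewShape.content
      congr 1
      apply Finset.filter_congr
      intro c h1
      simp only [if_pos h1]
  · rintro ⟨h0, T, h1, h2, h3⟩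
    exact ⟨h0, T, h1, h3⟩

lemma main1 (N : ℕ) (A : SkewShape) (hA : A.Connected) (hN : A.size = N) (hne : ¬ (A.Ribbon ∧ A.Equitable)) :
    ∃ R : SkewShape, R.Ribbon ∧ R.Equitable ∧ R.size = N ∧ (∀ lam, (R.LRset lam).Finite) ∧
        R.SchurPosDiff A ∧ A.supp ⊂ R.supp := by
  subst hN
  have hN : 1 ≤ A.size := Finset.card_pos.2 hA.1
  obtain ⟨cell, hE⟩ := exists_enum A
  generalize A.size = N at hN hE
  obtain ⟨s', g1, g2, g3, g4⟩ := T1 hN (pat cell)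
  obtain ⟨R, cell', hE', hS', rfl⟩ := exists_ribbon hN s'
  have hR := ribbon_of hN hE' hS'
  have hinj : ∀ lam, Inj (A.LRset lam) (R.LRset lam) := fun lam =>
    (LR_to_Bal hA hE lam).trans ((g4 _).trans (Bal_to_LR hE' hS' lam))
  have hfin : ∀ lam, (R.LRset lam).Finite := fun lam => (LR_to_Bal hR.1 hE' lam).fin Bal_fin
  have hsub : A.supp ⊆ R.supp := by
    intro lam hl
    rw [mem_supp] at *
    obtain ⟨h0, T, hT⟩ := hl
    obtain ⟨f, hf, _⟩ := hinj lam
    exact ⟨h0, f T, hf hT⟩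
  refine ⟨R, hR, ⟨row_eq hE' hS' g2, col_eq hE' hS' g3⟩, size_enum hE', hfin, ?_, hsub, ?_⟩
  · intro lam
    obtain ⟨f, hf, hf'⟩ := hinj lam
    exact Set.ncard_le_ncard_of_injOn f hf hf' (hfin lam)
  · intro hback
    apply hne
    have pull : ∀ cont, (Bal N (pat cell') cont).Nonempty → ∃ lam T, part lam = cont ∧ T ∈ A.LRset lam := by
      rintro cont ⟨y, hy⟩
      obtain ⟨lam, h0, rfl⟩ := exists_part hy
      obtain ⟨f, hf, _⟩ := Bal_to_LR hE' hS' lam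
      have : lam ∈ R.supp := (mem_supp R lam).2 ⟨h0, f y, hf hy⟩
      obtain ⟨_, T, hT⟩ := (mem_supp A lam).1 (hback this)
      exact ⟨lam, T, rfl, hT⟩
    obtain ⟨cont, c1, _, c3⟩ := T2 hN g2
    obtain ⟨lam, T, rfl, hT⟩ := pull cont c1
    have e1 : REq N (pat cell) := c3 _ g1.symm ⟨_, LR_mem hA hE hT⟩
    obtain ⟨cont, c1, c2, c3⟩ := T2c hN g3
    obtain ⟨lam, T, rfl, hT⟩ := pull cont c1
    have hy := LR_mem hA hE hT
    have e2 : REq N (cmp (pat cell)) := c3 _ g1.symm ⟨_, hy⟩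
    have hrib : A.Ribbon := by
      refine ⟨hA, ?_⟩
      rintro i j ⟨m1, m2, m3, m4⟩
      obtain ⟨k, hk, e⟩ := hE.2.1 _ m3
      obtain ⟨p, hp, e'⟩ := hE.2.1 _ m4
      have hpk : p < k := by
        have h1 : p ≤ k := by
          rw [← hE.reads hp hk, e, e']
          right; simp
        rcases Nat.lt_or_ge p k with h | h
        · exact h
        · have : p = k := by omega
          subst this
          rw [e] at e'
          simp at e'
      obtain ⟨q, rfl⟩ : ∃ q, k = q + 1 := ⟨k - 1, by omega⟩
      have r1 := hE.row_le (show p ≤ q by omega) (by omega)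
      have r2 := hE.row_le (show q ≤ q + 1 by omega) hk
      rw [e'] at r1
      have hs : pat cell q = false := by
        simp only [pat]
        rw [e] at r2 ⊢
        simp at r1 r2 ⊢
        omega
      have ht := Bal_tight hN hy (by rw [← g1]; exact c2) hk hs
      simp only [if_pos hk, e] at ht
      have t1 := hT.1.1.2.2 i (i+1) j m1 m3 (by omega)
      have t2 := hT.1.1.1 _ m1
      omega
    have hS := ribbon_step hrib hE
    exact ⟨hrib, row_eq hE hS e1, col_eq hE hS e2⟩

end RB

/-- If `A` is a connected skew shape with `N` boxes that is not an
equitable ribbon, then there exists an equitable ribbon `R` with `N` boxes such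
that `s_R − s_A` is Schur-positive and `supp A` is strictly contained in
`supp R`.  Consequently, every connected skew shape that is maximal among
connected skew shapes of size `N` in the Schur-positivity order, or in the
support-containment order, is an equitable ribbon. -/
theorem maximal_connected_is_equitable_ribbon (N : ℕ) :
    (∀ A : SkewShape, A.Connected → A.size = N → ¬ (A.Ribbon ∧ A.Equitable) →
      ∃ R : SkewShape, R.Ribbon ∧ R.Equitable ∧ R.size = N ∧
        R.SchurPosDiff A ∧ A.supp ⊂ R.supp) ∧
    (∀ A : SkewShape, A.Connected → A.size = N →
      ((¬ ∃ B : SkewShape, B.Connected ∧ B.size = N ∧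
          B.SchurPosDiff A ∧ ¬ A.SchurPosDiff B) ∨
       (¬ ∃ B : SkewShape, B.Connected ∧ B.size = N ∧
          A.supp ⊆ B.supp ∧ A.supp ≠ B.supp)) →
      A.Ribbon ∧ A.Equitable) := by
  refine ⟨?_, ?_⟩
  · intro A hA hN hne
    obtain ⟨R, h1, h2, h3, _, h4, h5⟩ := RB.main1 N A hA hN hne
    exact ⟨R, h1, h2, h3, h4, h5⟩
  · intro A hA hN hmax
    by_contra hne
    obtain ⟨R, h1, h2, h3, hf, h4, h5⟩ := RB.main1 N A hA hN hne
    rcases hmax with hm | hm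
    · refine hm ⟨R, h1.1, h3, h4, ?_⟩
      intro hAR
      obtain ⟨lam, l1, l2⟩ := Set.exists_of_ssubset h5
      rw [RB.mem_supp] at l1 l2
      have e : A.LRset lam = ∅ := by
        by_contra hh
        exact l2 ⟨l1.1, Set.nonempty_iff_ne_empty.2 hh⟩
      have h6 := hAR lam
      have h7 := (Set.ncard_pos (hf lam)).2 l1.2
      rw [e, Set.ncard_empty] at h6
      omega
    · exact hm ⟨R, h1.1, h3, h5.subset, h5.ne⟩
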